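/- Let t ∈ ℤ with t ≥ 1 and t ≠ 3. The solutions (x,y) ∈ ℤ × ℤ of the equation F_t^{(4)}(x,y) = ±1 are exactly: (±1,0), (0,±1) for all such t; additionally (1,2), (−1,−2), (2,−1), (−2,1) if t = 1; and additionally (2,3), (−2,−3), (3,−2), (−3,2) if t = 4. -/

import Mathlib

/-!
By the symmetries `F(y, -x) = F(x, y) = F(-x, -y)` it suffices to find the solutions with
`x, y > 0`. The two ranges `t ≥ 200` and `t < 200` are treated by different methods.

**Large parameters (`large_case`).** Let `t + 4i = R exp(4iψ)`. In the coordinates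
`p = x cos ψ + y sin ψ`, `q = y cos ψ - x sin ψ` the form is `-R p q (p - q)(p + q)`
(`form_rot`), and `F(x + y, y - x) = -4 F(x, y)`, so it is enough to treat `x > y > 0` and
`|F| ≤ 4`; then `q` is tiny compared with `p`, so that `y / x` is very close to `tan ψ`. The
homogenized denominators of the diagonal Padé approximants of `z ^ (1/4)`, evaluated at
`t + 4i` and `t - 4i`, are Gaussian integers (`hV_mem`) whose quotients of coordinates
approximate `tan ψ` up to sign. The approximation is estimated (`abs_im_rot_le`) by recognizing
the imaginary part, after rotation by `exp(iψ)`, as a divided difference of `sin (φ √x) / √x` at the squares of the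
frequencies. Two consecutive Gaussian integers are not proportional over `ℝ` (`hV_det`, from the
three-term recurrence), so one of the integers `hD` attached to them and the solution is nonzero, of
absolute value `< 1`: a contradiction.

**Small parameters (`small_case`).** Let `α` be the largest root of `F(X, 1)` and
`γ = (α + 1) / (α - 1)`; these are units of a cyclic quartic field (`exists_qfield`). A solution
gives a unit `μ` of relative norm `±1` over the quadratic subfield, with `|μ|` very close to `1`
and a large conjugate `H` (`QField.unit`). By the pigeonhole principle a power `μ ^ j` with `j`
bounded lies in `±⟨α, γ⟩` (`unit_rel`); no information on fundamental units is needed. This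
yields integers `A, b` with `|A log α - b log γ| ≤ 8 j / H` and `b` of the size of `log H`. If
`b` is huge, this contradicts a lower bound for linear forms in two logarithms (`two_logs`), proved
with an interpolation determinant in the style of Laurent: the determinant is nonzero for suitable
points by a zero estimate (`exists_minor`), small for analytic reasons
(`abs_det_ptVec_le_of_small`), and its norm is at least `1`. For the remaining `b` the linear form
is bounded below by the Farey neighbours of `log γ / log α`, which are computed in fixed-point
arithmetic for every `t < 200` (`chkAll_eq`). The solutions with small coordinates are excluded by
an elementary estimate for `t ≥ 50`, and for `t < 50` by enumeration (`bruteAll_eq`), which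
finds `(1, 2)` for `t = 1` and `(2, 3)` for `t = 4`.
-/

/-- The simplest quartic binary form `F_t^{(4)}(x,y) = x^4 - t x^3 y - 6 x^2 y^2 + t x y^3 + y^4`. -/
def F4 {R : Type*} [CommRing R] (t : ℤ) (x y : R) : R :=
  x ^ 4 - (t : R) * x ^ 3 * y - 6 * x ^ 2 * y ^ 2 + (t : R) * x * y ^ 3 + y ^ 4


namespace SQ

/-! ### Divided differences -/

/-- The `i`-th weight of the divided difference of order `j` at the nodes `w 0, …, w j`. -/
noncomputable def ddw (w : ℕ → ℝ) (j i : ℕ) : ℝ :=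
  (∏ m ∈ (Finset.range (j + 1)).erase i, (w i - w m))⁻¹

/-- The divided difference of order `j` at the nodes `w 0, …, w j` of a function taking
the value `f i` at the node `w i`. -/
noncomputable def dd (w : ℕ → ℝ) (j : ℕ) (f : ℕ → ℝ) : ℝ :=
  ∑ i ∈ Finset.range (j + 1), ddw w j i * f i

lemma dd_zero (w f : ℕ → ℝ) : dd w 0 f = f 0 := by simp [dd, ddw]

lemma ddw_succ_mul {w : ℕ → ℝ} {j i : ℕ} (hi : i ≤ j) (hne : w i ≠ w (j + 1)) :
    ddw w (j + 1) i * (w i - w (j + 1)) = ddw w j i := by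
  have h1 : (Finset.range (j + 1 + 1)).erase i
      = insert (j + 1) ((Finset.range (j + 1)).erase i) := by
    ext m; simp only [Finset.mem_erase, Finset.mem_range, Finset.mem_insert]; omega
  have h2 : w i - w (j + 1) ≠ 0 := sub_ne_zero.mpr hne
  unfold ddw
  rw [h1, Finset.prod_insert (by simp), mul_inv]
  field_simp

/-- Multiplying the data by `w i - w (j + 1)` lowers the order of a divided difference by one. -/
lemma dd_succ_mul {w : ℕ → ℝ} {j : ℕ} (hw : ∀ i ≤ j, w i ≠ w (j + 1)) (g : ℕ → ℝ) :
    dd w (j + 1) (fun i => w i * g i) = w (j + 1) * dd w (j + 1) g + dd w j g := by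
  have h : dd w j g = ∑ i ∈ Finset.range (j + 1 + 1),
      ddw w (j + 1) i * ((w i - w (j + 1)) * g i) := by
    rw [Finset.sum_range_succ _ (j + 1)]
    simp only [sub_self, zero_mul, mul_zero, add_zero]
    unfold dd
    refine Finset.sum_congr rfl fun i hi => ?_
    have hi' : i ≤ j := by simpa [Nat.lt_succ_iff] using hi
    rw [← ddw_succ_mul hi' (hw i hi')]; ring
  rw [h]; unfold dd
  rw [Finset.mul_sum, ← Finset.sum_add_distrib]
  refine Finset.sum_congr rfl fun i _ => ?_
  ring

lemma dd_one {w : ℕ → ℝ} {j : ℕ} (hw : ∀ i ≤ j + 1, ∀ m ≤ j + 1, w i = w m → i = m) :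
    dd w (j + 1) (fun _ => 1) = 0 := by
  have hinj : Set.InjOn w (Finset.range (j + 1 + 1) : Finset ℕ) := by
    intro a ha b hb hab
    simp only [Finset.coe_range, Set.mem_Iio] at ha hb
    exact hw a (by omega) b (by omega) hab
  have h := Lagrange.coeff_eq_sum (s := Finset.range (j + 1 + 1)) (v := w) hinj
    (P := (1 : Polynomial ℝ)) (by
      rw [Polynomial.degree_one, Finset.card_range]; exact_mod_cast Nat.succ_pos _)
  simp only [Finset.card_range, Nat.add_sub_cancel, Polynomial.eval_one] at h
  rw [Polynomial.coeff_one, if_neg (Nat.succ_ne_zero j)] at h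
  unfold dd ddw
  rw [h]
  exact Finset.sum_congr rfl fun i _ => by rw [mul_one, one_div]

/-- Cauchy-type bound for the divided differences of a monomial. -/
lemma abs_dd_pow_le {w : ℕ → ℝ} {W ρ : ℝ} (hρ : 0 < ρ) (n : ℕ) : ∀ j : ℕ,
    (∀ i ≤ j, ∀ m ≤ j, w i = w m → i = m) → (∀ i ≤ j, |w i| ≤ W) →
    |dd w j (fun i => w i ^ n)| ≤ (W + ρ) ^ n / ρ ^ j := by
  induction n with
  | zero =>
    intro j hw hW
    cases j with
    | zero => simp [dd_zero]
    | succ j =>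
      simp only [pow_zero]
      rw [dd_one hw, abs_zero]; positivity
  | succ n ih =>
    intro j hw hW
    have hW0 : 0 ≤ W := (abs_nonneg _).trans (hW 0 (Nat.zero_le _))
    cases j with
    | zero =>
      rw [dd_zero, abs_pow, pow_zero, div_one]
      exact pow_le_pow_left₀ (abs_nonneg _) ((hW 0 le_rfl).trans (by linarith)) _
    | succ j =>
      have h1 := ih (j + 1) hw hW
      have h2 := ih j (fun i hi m hm => hw i (by omega) m (by omega))
        (fun i hi => hW i (by omega))
      have h3 : dd w (j + 1) (fun i => w i ^ (n + 1))
          = w (j + 1) * dd w (j + 1) (fun i => w i ^ n) + dd w j (fun i => w i ^ n) := by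
        rw [← dd_succ_mul (fun i hi h => by have := hw i (by omega) (j + 1) le_rfl h; omega)]
        congr 1; funext i; rw [pow_succ']
      rw [h3]
      calc |w (j + 1) * dd w (j + 1) (fun i => w i ^ n) + dd w j (fun i => w i ^ n)|
          ≤ |w (j + 1)| * |dd w (j + 1) (fun i => w i ^ n)| + |dd w j (fun i => w i ^ n)| := by
            rw [← abs_mul]; exact abs_add_le _ _
        _ ≤ W * ((W + ρ) ^ n / ρ ^ (j + 1)) + (W + ρ) ^ n / ρ ^ j := by
            gcongr
            exact hW _ le_rfl
        _ = (W + ρ) ^ (n + 1) / ρ ^ (j + 1) := by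
            field_simp
            ring

/-- Cauchy-type bound for the divided differences of a power series. -/
lemma abs_dd_le_of_hasSum {w : ℕ → ℝ} {W ρ : ℝ} (hρ : 0 < ρ) {j : ℕ}
    (hw : ∀ i ≤ j, ∀ m ≤ j, w i = w m → i = m) (hW : ∀ i ≤ j, |w i| ≤ W)
    {f : ℕ → ℝ} {a : ℕ → ℝ} {k : ℕ} (hf : ∀ i ≤ j, HasSum (fun n => a n * w i ^ (n + k)) (f i))
    {S : ℝ} (hS : HasSum (fun n => |a n| * (W + ρ) ^ (n + k)) S) :
    |dd w j f| ≤ S / ρ ^ j := by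
  have h1 : HasSum (fun n => a n * dd w j (fun i => w i ^ (n + k))) (dd w j f) := by
    have : HasSum (fun n => ∑ i ∈ Finset.range (j + 1), ddw w j i * (a n * w i ^ (n + k)))
        (dd w j f) :=
      hasSum_sum fun i hi => (hf i (by simpa [Nat.lt_succ_iff] using hi)).mul_left _
    convert this using 1
    funext n
    unfold dd
    rw [Finset.mul_sum]
    exact Finset.sum_congr rfl fun i _ => by ring
  have h2 : HasSum (fun n => |a n| * (W + ρ) ^ (n + k) / ρ ^ j) (S / ρ ^ j) := hS.div_const _
  rw [← h1.tsum_eq, ← Real.norm_eq_abs]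
  refine tsum_of_norm_bounded h2 fun n => ?_
  rw [Real.norm_eq_abs, abs_mul, mul_div_assoc]
  exact mul_le_mul_of_nonneg_left (abs_dd_pow_le hρ _ j hw hW) (abs_nonneg _)

lemma abs_dd_pow_mul_exp_le {w : ℕ → ℝ} {W ρ c : ℝ} (hρ : 0 < ρ) (hc : 0 ≤ c) {j : ℕ} (k : ℕ)
    (hw : ∀ i ≤ j, ∀ m ≤ j, w i = w m → i = m) (hW : ∀ i ≤ j, |w i| ≤ W) :
    |dd w j (fun i => w i ^ k * Real.exp (c * w i))|
      ≤ (W + ρ) ^ k * Real.exp (c * (W + ρ)) / ρ ^ j := by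
  have key : ∀ x : ℝ, HasSum (fun n : ℕ => c ^ n / n.factorial * x ^ (n + k))
      (x ^ k * Real.exp (c * x)) := by
    intro x
    have h := NormedSpace.expSeries_div_hasSum_exp (c * x)
    rw [← Real.exp_eq_exp_ℝ] at h
    have h2 : HasSum (fun n : ℕ => x ^ k * ((c * x) ^ n / n.factorial))
      (x ^ k * Real.exp (c * x)) := h.mul_left (x ^ k)
    have h3 : (fun n : ℕ => c ^ n / n.factorial * x ^ (n + k))
        = fun n : ℕ => x ^ k * ((c * x) ^ n / n.factorial) := by
      funext n; rw [mul_pow, pow_add]; ring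
    rw [h3]; exact h2
  refine abs_dd_le_of_hasSum hρ hw hW (a := fun n => c ^ n / n.factorial) (k := k)
    (fun i _ => key _) ?_
  convert key (W + ρ) using 1
  funext n
  rw [abs_of_nonneg (by positivity)]

/-! ### Interpolation determinants -/

/-- The Leibniz formula, for a matrix whose entries are bounded by a product of a row and a
column factor. -/
lemma abs_det_le {n : Type*} [Fintype n] [DecidableEq n] (M : Matrix n n ℝ) (r s : n → ℝ)
    (h : ∀ i j, |M i j| ≤ r i * s j) :
    |M.det| ≤ (Fintype.card n).factorial * ((∏ i, r i) * ∏ j, s j) := by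
  rw [Matrix.det_apply]
  refine (Finset.abs_sum_le_sum_abs _ _).trans ?_
  have : ∀ σ ∈ (Finset.univ : Finset (Equiv.Perm n)),
      |Equiv.Perm.sign σ • ∏ i, M (σ i) i| ≤ (∏ i, r i) * ∏ j, s j := by
    intro σ _
    have h1 : |Equiv.Perm.sign σ • ∏ i, M (σ i) i| = ∏ i, |M (σ i) i| := by
      rcases Int.units_eq_one_or (Equiv.Perm.sign σ) with h | h <;>
        simp [h, Finset.abs_prod]
    rw [h1]
    calc ∏ i, |M (σ i) i| ≤ ∏ i, (r (σ i) * s i) :=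
          Finset.prod_le_prod (fun _ _ => abs_nonneg _) fun i _ => h _ _
      _ = _ := by rw [Finset.prod_mul_distrib, Equiv.prod_comp σ r]
  refine (Finset.sum_le_card_nsmul _ _ _ this).trans ?_
  rw [Finset.card_univ, Fintype.card_perm, nsmul_eq_mul]

/-- Newton interpolation: passing from values to divided differences splits off a Vandermonde factor. -/
lemma det_eq_det_dd {N : ℕ} {w : ℕ → ℝ} (hw : ∀ i < N, ∀ m < N, w i = w m → i = m)
    (f : Fin N → ℕ → ℝ) :
    (Matrix.of fun (a i : Fin N) => f a i).det
      = (Matrix.of fun (a j : Fin N) => dd w j (f a)).det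
        * ∏ j : Fin N, ∏ m ∈ Finset.range j, (w j - w m) := by
  let T : Matrix (Fin N) (Fin N) ℝ := Matrix.of fun i j => if i ≤ j then ddw w j i else 0
  have hT : T.det = ∏ j : Fin N, (∏ m ∈ Finset.range j, (w j - w m))⁻¹ := by
    rw [Matrix.det_of_isUpperTriangular]
    · refine Finset.prod_congr rfl fun j _ => ?_
      simp only [T, Matrix.of_apply, le_refl, if_true, ddw]
      congr 2
      ext m; simp only [Finset.mem_erase, Finset.mem_range]; omega
    · intro i j hij
      simp only [T, Matrix.of_apply]
      rw [if_neg (by simpa using hij)]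
  have hmul : (Matrix.of fun (a i : Fin N) => f a i) * T
      = Matrix.of fun (a j : Fin N) => dd w j (f a) := by
    ext a j
    simp only [Matrix.mul_apply, Matrix.of_apply, T, dd]
    have h1 : ∑ x : Fin N, f a ↑x * (if x ≤ j then ddw w ↑j ↑x else 0)
        = ∑ x ∈ Finset.range N, f a x * (if x ≤ (j : ℕ) then ddw w ↑j x else 0) := by
      rw [← Fin.sum_univ_eq_sum_range (fun x => f a x * (if x ≤ (j : ℕ) then ddw w ↑j x else 0))]
      rfl
    rw [h1, ← Finset.sum_subset (s₁ := Finset.range (j + 1))]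
    · refine Finset.sum_congr rfl fun i hi => ?_
      rw [if_pos (by simpa [Nat.lt_succ_iff] using hi), mul_comm]
    · intro x hx
      simp only [Finset.mem_range] at hx ⊢; omega
    · intro x _ hx2
      rw [if_neg (by simpa [Nat.lt_succ_iff] using hx2), mul_zero]
  rw [← hmul, Matrix.det_mul, hT, Finset.prod_inv_distrib, mul_assoc, inv_mul_cancel₀, mul_one]
  refine Finset.prod_ne_zero_iff.mpr fun j _ => Finset.prod_ne_zero_iff.mpr fun m hm => ?_
  rw [sub_ne_zero]
  intro h
  have hm' : m < j := by simpa using hm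
  have := hw j j.2 m (by omega) h
  omega

/-- Interpolation determinants are small: nodes in `[0, W]` and rows whose divided
differences of order `j` are `O(ρ⁻ʲ)`. -/
lemma abs_det_le_of_dd {N : ℕ} {w : ℕ → ℝ} (hw : ∀ i < N, ∀ m < N, w i = w m → i = m)
    {W ρ : ℝ} (hW : ∀ i < N, 0 ≤ w i ∧ w i ≤ W) (hρ : 0 < ρ)
    (f : Fin N → ℕ → ℝ) (r : Fin N → ℝ)
    (h : ∀ a, ∀ j < N, |dd w j (f a)| ≤ r a / ρ ^ j) :
    |(Matrix.of fun (a i : Fin N) => f a i).det|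
      ≤ N.factorial * (∏ a, r a) * (W / ρ) ^ (N * (N - 1) / 2) := by
  rw [det_eq_det_dd hw, abs_mul]
  have h1 := abs_det_le (Matrix.of fun (a j : Fin N) => dd w j (f a)) r (fun j => (ρ ^ (j : ℕ))⁻¹)
    (fun a j => by simpa [div_eq_mul_inv] using h a j j.2)
  have h2 : |∏ j : Fin N, ∏ m ∈ Finset.range j, (w j - w m)| ≤ ∏ j : Fin N, W ^ (j : ℕ) := by
    rw [Finset.abs_prod]
    refine Finset.prod_le_prod (fun _ _ => abs_nonneg _) fun j _ => ?_
    rw [Finset.abs_prod]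
    calc ∏ m ∈ Finset.range j, |w j - w m| ≤ ∏ m ∈ Finset.range (j : ℕ), W := by
          refine Finset.prod_le_prod (fun _ _ => abs_nonneg _) fun m hm => ?_
          have hm' : m < j := by simpa using hm
          have ha := hW j j.2
          have hb := hW m (by omega)
          rw [abs_le]; constructor <;> linarith
      _ = _ := by simp
  rw [Fintype.card_fin] at h1
  have h3 : (∏ j : Fin N, (ρ ^ (j : ℕ))⁻¹) * ∏ j : Fin N, W ^ (j : ℕ)
      = (W / ρ) ^ (N * (N - 1) / 2) := by
    rw [← Finset.prod_mul_distrib, Fin.prod_univ_eq_prod_range (fun j => (ρ ^ j)⁻¹ * W ^ j) N,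
      ← Finset.sum_range_id, ← Finset.prod_pow_eq_pow_sum]
    refine Finset.prod_congr rfl fun j _ => ?_
    rw [div_pow]; field_simp
  calc _ ≤ (N.factorial * ((∏ i, r i) * ∏ j : Fin N, (ρ ^ (j : ℕ))⁻¹))
        * ∏ j : Fin N, W ^ (j : ℕ) :=
        mul_le_mul h1 h2 (abs_nonneg _) ((abs_nonneg _).trans h1)
    _ = N.factorial * (∏ i, r i) * ((∏ j : Fin N, (ρ ^ (j : ℕ))⁻¹)
        * ∏ j : Fin N, W ^ (j : ℕ)) := by ring
    _ = _ := by rw [h3]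

lemma prod_fin_mul {K L : ℕ} (X E : ℝ) :
    ∏ a : Fin (K * L), X ^ ((finProdFinEquiv.symm a).1 : ℕ) * E ^ ((finProdFinEquiv.symm a).2 : ℕ)
      = X ^ (L * (K * (K - 1) / 2)) * E ^ (K * (L * (L - 1) / 2)) := by
  rw [Equiv.prod_comp finProdFinEquiv.symm
    (fun p : Fin K × Fin L => X ^ (p.1 : ℕ) * E ^ (p.2 : ℕ)), Fintype.prod_prod_type]
  have h1 : ∀ n : ℕ, ∀ Y : ℝ, ∏ j : Fin n, Y ^ (j : ℕ) = Y ^ (n * (n - 1) / 2) := by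
    intro n Y
    rw [Fin.prod_univ_eq_prod_range (fun j => Y ^ j) n, ← Finset.sum_range_id,
      ← Finset.prod_pow_eq_pow_sum]
  simp only [Finset.prod_mul_distrib, Finset.prod_const, Finset.card_univ, Fintype.card_fin]
  rw [Finset.prod_pow, h1, h1, ← pow_mul, ← pow_mul, mul_comm L (_ / 2), mul_comm K (_ / 2)]

lemma abs_ddw_le_one {N : ℕ} {z : ℕ → ℤ} (hw : ∀ i < N, ∀ m < N, z i = z m → i = m)
    {j i : ℕ} (hj : j < N) (hi : i ≤ j) : |ddw (fun n => (z n : ℝ)) j i| ≤ 1 := by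
  unfold ddw
  rw [abs_inv]
  refine inv_le_one_of_one_le₀ ?_
  have : (∏ m ∈ (Finset.range (j + 1)).erase i, ((z i : ℝ) - z m))
      = ((∏ m ∈ (Finset.range (j + 1)).erase i, (z i - z m) : ℤ) : ℝ) := by push_cast; rfl
  rw [this, ← Int.cast_abs]
  have h0 : (∏ m ∈ (Finset.range (j + 1)).erase i, (z i - z m) : ℤ) ≠ 0 := by
    refine Finset.prod_ne_zero_iff.mpr fun m hm => ?_
    simp only [Finset.mem_erase, Finset.mem_range] at hm
    rw [sub_ne_zero]
    exact fun h => hm.1 (hw i (by omega) m (by omega) h).symm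
  exact_mod_cast Int.one_le_abs h0

/-! ### The zero estimate -/

open Polynomial Matrix in
/-- An exponential polynomial `∑ pᵢ(x) uᵢ`, whose values at the shifted points `w + j b` all
vanish, has few zeros: the determinant of the shifted system is a polynomial in `w` whose leading
coefficient is a Vandermonde determinant. -/
lemma card_le_of_vanish {F : Type*} [Field F] {n d : ℕ} (p : Fin n → F[X])
    (hp : ∀ i, p i ≠ 0) (hd : ∀ i, (p i).natDegree ≤ d) (v : Fin n → F)
    (hv0 : ∀ i, v i ≠ 0) (hv : Function.Injective v) (b : F) (S : Finset F)
    (hS : ∀ w ∈ S, ∃ u : Fin n → F, u ≠ 0 ∧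
      ∀ j : Fin n, ∑ i, v i ^ (j : ℕ) * (p i).eval (w + j * b) * u i = 0) :
    S.card ≤ n * d := by
  classical
  let G : Matrix (Fin n) (Fin n) F[X] :=
    Matrix.of fun j i => C (v i ^ (j : ℕ)) * taylor (j * b) (p i)
  have hG0 : ∀ j i, G j i ≠ 0 := fun j i =>
    mul_ne_zero (C_ne_zero.mpr (pow_ne_zero _ (hv0 i)))
      (mt (taylor_eq_zero _ _).mp (hp i))
  have hGd : ∀ j i, (G j i).natDegree = (p i).natDegree := fun j i => by
    simp only [G, Matrix.of_apply]
    rw [natDegree_C_mul (pow_ne_zero _ (hv0 i)), natDegree_taylor]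
  have hGl : ∀ j i, (G j i).leadingCoeff = v i ^ (j : ℕ) * (p i).leadingCoeff := fun j i => by
    simp only [G, Matrix.of_apply]
    rw [leadingCoeff_mul, leadingCoeff_C, leadingCoeff_taylor]
  set D := ∑ i, (p i).natDegree
  have hprodd : ∀ σ : Equiv.Perm (Fin n), (∏ i, G (σ i) i).natDegree = D := fun σ => by
    rw [natDegree_prod _ _ fun i _ => hG0 _ _]
    exact Finset.sum_congr rfl fun i _ => hGd _ _
  have hdetd : G.det.natDegree ≤ D := by
    rw [Matrix.det_apply]
    refine natDegree_sum_le_of_forall_le _ _ fun σ _ => ?_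
    refine (natDegree_smul_le _ _).trans (hprodd σ).le
  have hcoeff : G.det.coeff D = (∏ i, (p i).leadingCoeff) * (Matrix.vandermonde v).det := by
    have h1 : G.det.coeff D
        = (Matrix.of fun j i : Fin n => (p i).leadingCoeff * (Matrix.vandermonde v)ᵀ j i).det := by
      rw [Matrix.det_apply, Matrix.det_apply, finsetSum_coeff]
      refine Finset.sum_congr rfl fun σ _ => ?_
      rw [coeff_smul]
      congr 1
      rw [← hprodd σ, coeff_natDegree, leadingCoeff_prod]
      refine Finset.prod_congr rfl fun i _ => ?_
      rw [hGl]; simp [Matrix.vandermonde, mul_comm]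
    rw [h1, Matrix.det_mul_row, Matrix.det_transpose]
  have hne : G.det ≠ 0 := by
    intro h
    rw [h, coeff_zero] at hcoeff
    exact mul_ne_zero (Finset.prod_ne_zero_iff.mpr fun i _ => leadingCoeff_ne_zero.mpr (hp i))
      (Matrix.det_vandermonde_ne_zero_iff.mpr hv) hcoeff.symm
  have hroots : ∀ w ∈ S, G.det.eval w = 0 := by
    intro w hw
    obtain ⟨u, hu, h⟩ := hS w hw
    rw [← coe_evalRingHom, RingHom.map_det]
    by_contra hdet
    refine hu (Matrix.eq_zero_of_mulVec_eq_zero hdet ?_)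
    ext j
    simp only [Matrix.mulVec, dotProduct, Pi.zero_apply, RingHom.mapMatrix_apply, Matrix.map_apply,
      G, Matrix.of_apply, coe_evalRingHom, eval_mul, eval_C, taylor_eval]
    exact h j
  have h1 : S ⊆ G.det.roots.toFinset := fun w hw => by
    rw [Multiset.mem_toFinset, mem_roots hne]; exact hroots w hw
  calc S.card ≤ G.det.roots.toFinset.card := Finset.card_le_card h1
    _ ≤ Multiset.card G.det.roots := Multiset.toFinset_card_le _
    _ ≤ G.det.natDegree := card_roots' _
    _ ≤ D := hdetd
    _ ≤ ∑ _i : Fin n, d := Finset.sum_le_sum fun i _ => hd i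
    _ = n * d := by simp

/-- The points `r B + s A` with `s < S ≤ B` are pairwise distinct, as `A` and `B` are coprime. -/
lemma point_inj {A B : ℕ} (hB : 0 < B) (hAB : Nat.Coprime A B) {S : ℕ} (hS : S ≤ B)
    {r s r' s' : ℕ} (hs : s < S) (hs' : s' < S) (h : r * B + s * A = r' * B + s' * A) :
    r = r' ∧ s = s' := by
  have h1 : s * A ≡ s' * A [MOD B] := by
    have h2 : r * B + s * A ≡ s * A [MOD B] := by simp [Nat.ModEq]
    have h3 : r' * B + s' * A ≡ s' * A [MOD B] := by simp [Nat.ModEq]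
    exact h2.symm.trans ((h ▸ Nat.ModEq.refl _ : r * B + s * A ≡ r' * B + s' * A [MOD B]).trans h3)
  have h2 : s ≡ s' [MOD B] := Nat.ModEq.cancel_right_of_coprime
    (by rw [Nat.gcd_comm]; exact hAB) h1
  have h3 : s = s' := by
    rw [Nat.ModEq, Nat.mod_eq_of_lt (by omega), Nat.mod_eq_of_lt (by omega)] at h2; exact h2
  subst h3
  exact ⟨Nat.eq_of_mul_eq_mul_right hB (by omega), rfl⟩

/-- The row of the interpolation determinant attached to the point `(r, s)`, i.e. the values at
`(rB + sA, αʳγˢ)` of the monomials `Xᵏ Yˡ` with `k < K`, `l < L`. -/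
noncomputable def ptVec {F : Type*} [Field F] (α γ : F) (A B K L : ℕ) (q : ℕ × ℕ)
    (a : Fin (K * L)) : F :=
  ((q.1 * B + q.2 * A : ℕ) : F) ^ ((finProdFinEquiv.symm a).1 : ℕ)
    * (α ^ q.1 * γ ^ q.2) ^ ((finProdFinEquiv.symm a).2 : ℕ)

open Polynomial in
/-- A polynomial of bidegree less than `(K, L)` which vanishes at all the points
`(rB + sA, αʳγˢ)` is zero. -/
lemma eq_zero_of_vanish {F : Type*} [Field F] [CharZero F] {α γ : F} (hα : α ≠ 0) (hγ : γ ≠ 0)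
    (hinj : ∀ i j : ℕ, α ^ i = α ^ j → i = j) {A B K L S : ℕ} (hB : 0 < B)
    (hAB : Nat.Coprime A B) (hS : S ≤ B) (hK : 0 < K) (hL : 0 < L) (hKL : K * L ≤ S * S)
    (c : Fin (K * L) → F)
    (hc : ∀ r s, r < S + L → s < S → ∑ a, c a * ptVec α γ A B K L (r, s) a = 0) : c = 0 := by
  classical
  let P : Fin L → F[X] := fun l => ∑ k : Fin K, C (c (finProdFinEquiv (k, l))) * X ^ (k : ℕ)
  have hPd : ∀ l, (P l).natDegree ≤ K - 1 := fun l =>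
    natDegree_sum_le_of_forall_le _ _ fun k _ => (natDegree_C_mul_X_pow_le _ _).trans (by omega)
  have hPc : ∀ l (k : Fin K), (P l).coeff k = c (finProdFinEquiv (k, l)) := by
    intro l k
    simp only [P, finsetSum_coeff, coeff_C_mul, coeff_X_pow]
    rw [Finset.sum_eq_single k]
    · simp
    · intro b _ hb
      rw [if_neg (fun h => hb (Fin.ext h.symm)), mul_zero]
    · simp
  have hsum : ∀ r s, r < S + L → s < S →
      ∑ l : Fin L, (P l).eval (((r * B + s * A : ℕ) : F)) * (α ^ r * γ ^ s) ^ (l : ℕ) = 0 := by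
    intro r s hr hs
    rw [← hc r s hr hs, ← Equiv.sum_comp finProdFinEquiv, Fintype.sum_prod_type_right]
    refine Finset.sum_congr rfl fun l _ => ?_
    simp only [P, eval_finsetSum, Finset.sum_mul, ptVec, Equiv.symm_apply_apply, eval_mul, eval_C,
      eval_pow, eval_X]
    exact Finset.sum_congr rfl fun k _ => by ring
  by_contra hne
  have hI : ∃ l, P l ≠ 0 := by
    by_contra hall
    push Not at hall
    refine hne (funext fun a => ?_)
    have := hPc (finProdFinEquiv.symm a).2 (finProdFinEquiv.symm a).1
    rw [hall, coeff_zero, Prod.mk.eta, Equiv.apply_symm_apply] at this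
    exact this.symm
  let I := {l : Fin L // P l ≠ 0}
  have hIcard : Fintype.card I ≤ L := by
    have := Fintype.card_le_of_injective (Subtype.val : I → Fin L) Subtype.val_injective
    rwa [Fintype.card_fin] at this
  have hIpos : 0 < Fintype.card I := Fintype.card_pos_iff.mpr ⟨⟨hI.choose, hI.choose_spec⟩⟩
  let e : Fin (Fintype.card I) ≃ I := (Fintype.equivFin I).symm
  let Wf : Finset F := (Finset.range S ×ˢ Finset.range S).image
    fun q : ℕ × ℕ => ((q.1 * B + q.2 * A : ℕ) : F)
  have hWf : Wf.card = S * S := by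
    rw [Finset.card_image_of_injOn, Finset.card_product, Finset.card_range]
    rintro ⟨r, s⟩ h1 ⟨r', s'⟩ h2 h
    simp only [Finset.coe_product, Finset.coe_range, Set.mem_prod, Set.mem_Iio] at h1 h2
    have h3 : r * B + s * A = r' * B + s' * A := by
      have : ((r * B + s * A : ℕ) : F) = ((r' * B + s' * A : ℕ) : F) := h
      exact_mod_cast this
    obtain ⟨h4, h5⟩ := point_inj hB hAB hS h1.2 h2.2 h3
    rw [h4, h5]
  have key := card_le_of_vanish (d := K - 1) (fun i => P (e i).1) (fun i => (e i).2)
    (fun i => hPd _) (fun i => α ^ ((e i).1 : ℕ)) (fun i => pow_ne_zero _ hα) (by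
      intro i j h
      exact e.injective (Subtype.ext (Fin.ext (hinj _ _ h)))) (B : F) Wf (by
      intro w hw
      simp only [Wf, Finset.mem_image, Finset.mem_product, Finset.mem_range, Prod.exists] at hw
      obtain ⟨r, s, ⟨hr, hs⟩, rfl⟩ := hw
      refine ⟨fun i => (α ^ r * γ ^ s) ^ ((e i).1 : ℕ), ?_, fun j => ?_⟩
      · intro h
        have := congrFun h ⟨0, hIpos⟩
        simp [hα, hγ] at this
      · have h1 := hsum (r + j) s (by have := j.2; omega) hs
        rw [← Finset.sum_subset (Finset.subset_univ (Finset.univ.filter fun l => P l ≠ 0)),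
          Finset.sum_subtype (p := fun l => P l ≠ 0) _ (by simp),
          ← Equiv.sum_comp e] at h1
        · rw [← h1]
          refine Finset.sum_congr rfl fun i _ => ?_
          have h2 : ((r * B + s * A : ℕ) : F) + (j : ℕ) * (B : F)
              = (((r + j) * B + s * A : ℕ) : F) := by push_cast; ring
          rw [h2]
          ring
        · intro l _ hl
          have : P l = 0 := by simpa using hl
          rw [this, eval_zero, zero_mul])
  rw [hWf] at key
  have : Fintype.card I * (K - 1) ≤ L * (K - 1) := Nat.mul_le_mul_right _ hIcard
  have h2 : K * L = L * (K - 1) + L := by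
    obtain ⟨k, rfl⟩ : ∃ k, K = k + 1 := ⟨K - 1, by omega⟩
    simp; ring
  omega

/-- A nonvanishing interpolation determinant. -/
lemma exists_minor {F : Type*} [Field F] [CharZero F] {α γ : F} (hα : α ≠ 0) (hγ : γ ≠ 0)
    (hinj : ∀ i j : ℕ, α ^ i = α ^ j → i = j) {A B K L S : ℕ} (hB : 0 < B)
    (hAB : Nat.Coprime A B) (hS : S ≤ B) (hK : 0 < K) (hL : 0 < L) (hKL : K * L ≤ S * S) :
    ∃ q : Fin (K * L) → ℕ × ℕ, (∀ i, (q i).1 < S + L ∧ (q i).2 < S) ∧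
      (∀ i j, (q i).1 * B + (q i).2 * A = (q j).1 * B + (q j).2 * A → i = j) ∧
      (Matrix.of fun a i => ptVec α γ A B K L (q i) a).det ≠ 0 := by
  classical
  let T : Set (Fin (K * L) → F) :=
    {v | ∃ r s, r < S + L ∧ s < S ∧ v = ptVec α γ A B K L (r, s)}
  have hspan : Submodule.span F T = ⊤ := by
    by_contra hlt
    obtain ⟨f, hf, hle⟩ := Submodule.exists_le_ker_of_lt_top _ (lt_top_iff_ne_top.mpr hlt)
    have hrep : ∀ v : Fin (K * L) → F, f v = ∑ a, f (fun j => if a = j then 1 else 0) * v a := by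
      intro v
      rw [LinearMap.pi_apply_eq_sum_univ]
      exact Finset.sum_congr rfl fun a _ => by rw [smul_eq_mul, mul_comm]
    have hz := eq_zero_of_vanish hα hγ hinj hB hAB hS hK hL hKL 
      (fun a => f (fun j => if a = j then 1 else 0)) (by
      intro r s hr hs
      rw [← hrep]
      exact hle (Submodule.subset_span ⟨r, s, hr, hs, rfl⟩))
    refine hf (LinearMap.ext fun v => ?_)
    rw [hrep, LinearMap.zero_apply]
    refine Finset.sum_eq_zero fun a _ => ?_
    have := congrFun hz a
    simp only [Pi.zero_apply] at this
    rw [this, zero_mul]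
  have hfin : Module.finrank F (Submodule.span F T) = K * L := by
    rw [hspan, finrank_top, Module.finrank_fin_fun]
  obtain ⟨f, hfT, hind⟩ : ∃ f : Fin (K * L) → (Fin (K * L) → F), (∀ i, f i ∈ T) ∧
      LinearIndependent F f := by
    obtain ⟨f, hfT, -, hind⟩ := Submodule.exists_fun_fin_finrank_span_eq F T
    exact ⟨f ∘ Fin.cast hfin.symm, fun i => hfT _, hind.comp _ (Fin.cast_injective _)⟩
  choose r s hr hs hrs using hfT
  refine ⟨fun i => (r i, s i), fun i => ⟨hr i, hs i⟩, ?_, ?_⟩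
  · intro i j h
    obtain ⟨h1, h2⟩ : r i = r j ∧ s i = s j := point_inj hB hAB hS (hs i) (hs j) h
    refine hind.injective ?_
    rw [hrs i, hrs j, h1, h2]
  · have h1 : (Matrix.of fun a i => ptVec α γ A B K L (r i, s i) a)
        = (Matrix.of f).transpose := by
      ext a i
      simp [hrs i]
    rw [h1, Matrix.det_transpose]
    have h2 : LinearIndependent F (Matrix.of f).row := hind
    exact ((Matrix.isUnit_iff_isUnit_det _).mp
      (Matrix.linearIndependent_rows_iff_isUnit.mp h2)).ne_zero

/-! ### The quartic field -/

section
open Polynomial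

/-- The polynomial `F_t(X, 1)`. -/
noncomputable def qp (t : ℤ) : ℤ[X] := X ^ 4 - C t * X ^ 3 - 6 * X ^ 2 + C t * X + 1

lemma qp_eq (t : ℤ) : qp t = C 1 * X ^ 4 + C (-t) * X ^ 3 + C (-6) * X ^ 2 + C t * X + C 1 := by
  simp [qp]; ring

lemma qp_eval₂ {R : Type*} [CommRing R] (i : ℤ →+* R) (t : ℤ) (x : R) :
    (qp t).eval₂ i x = x ^ 4 - t * x ^ 3 - 6 * x ^ 2 + t * x + 1 := by
  simp only [qp, eval₂_add, eval₂_sub, eval₂_mul, eval₂_pow, eval₂_X, eval₂_C, eval₂_one,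
    eval₂_ofNat]
  rw [eq_intCast i t]

lemma quartic_coeff (p q r s u : ℤ) :
    let f := C p * X ^ 4 + C q * X ^ 3 + C r * X ^ 2 + C s * X + C u
    f.coeff 0 = u ∧ f.coeff 1 = s ∧ f.coeff 2 = r ∧ f.coeff 3 = q ∧ f.coeff 4 = p := by
  simp only [coeff_add, coeff_C_mul, coeff_X_pow, coeff_X, coeff_C]
  norm_num

lemma qp_natDegree (t : ℤ) : (qp t).natDegree = 4 := by
  rw [qp_eq]; compute_degree!

lemma qp_coeff (t : ℤ) : (qp t).coeff 0 = 1 ∧ (qp t).coeff 1 = t ∧ (qp t).coeff 2 = -6 ∧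
    (qp t).coeff 3 = -t ∧ (qp t).coeff 4 = 1 := by
  rw [qp_eq]
  exact quartic_coeff _ _ _ _ _

lemma qp_monic (t : ℤ) : (qp t).Monic := by
  rw [Monic, leadingCoeff, qp_natDegree]; exact (qp_coeff t).2.2.2.2

/-- The value `t = 3` is excluded because there the polynomial is reducible. -/
lemma qp_irreducible (t : ℤ) (h1 : 1 ≤ t) (h3 : t ≠ 3) : Irreducible (qp t) := by
  rw [(qp_monic t).irreducible_iff_natDegree']
  refine ⟨fun h => ?_, ?_⟩
  · have := qp_natDegree t
    rw [h] at this; simp at this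
  intro f g hf hg hfg hmem
  rw [qp_natDegree] at hmem
  simp only [Finset.mem_Ioc] at hmem
  have hdeg : f.natDegree + g.natDegree = 4 := by
    rw [← qp_natDegree t, ← hfg, hf.natDegree_mul hg]
  obtain ⟨c0, c1, c2, c3, c4⟩ := qp_coeff t
  have hg12 : g.natDegree = 1 ∨ g.natDegree = 2 := by omega
  rcases hg12 with h | h
  · have hg' : g = X + C (g.coeff 0) := hg.eq_X_add_C h
    have hev : (qp t).eval (-(g.coeff 0)) = 0 := by
      rw [← hfg, hg', eval_mul]; simp
    set c := g.coeff 0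
    simp only [qp, eval_add, eval_sub, eval_mul, eval_pow, eval_X, eval_C, eval_one,
      eval_ofNat] at hev
    have hu : c ∣ 1 := ⟨-c ^ 3 - t * c ^ 2 + 6 * c + t, by linarith⟩
    rcases Int.isUnit_iff.mp (isUnit_of_dvd_one hu) with hc | hc <;>
      rw [hc] at hev <;> norm_num at hev <;> linarith
  · have hfd : f.natDegree = 2 := by omega
    have hg' := hg.as_sum
    have hf' := hf.as_sum
    rw [h] at hg'
    rw [hfd] at hf'
    simp only [Finset.sum_range_succ, Finset.sum_range_zero, zero_add, pow_zero, mul_one,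
      pow_one] at hg' hf'
    set b := g.coeff 0
    set a := g.coeff 1
    set d := f.coeff 0
    set c := f.coeff 1
    have hprod : qp t = C 1 * X ^ 4 + C (a + c) * X ^ 3 + C (b + d + a * c) * X ^ 2
        + C (a * d + b * c) * X + C (b * d) := by
      rw [← hfg, hf', hg']; simp only [C_add, C_mul, map_one]; ring
    obtain ⟨q0, q1, q2, q3, -⟩ := quartic_coeff 1 (a + c) (b + d + a * c) (a * d + b * c) (b * d)
    rw [← hprod] at q0 q1 q2 q3
    have e0 : b * d = 1 := q0.symm.trans c0
    have e1 : a * d + b * c = t := q1.symm.trans c1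
    have e2 : b + d + a * c = -6 := q2.symm.trans c2
    have e3 : a + c = -t := q3.symm.trans c3
    rcases Int.mul_eq_one_iff_eq_one_or_neg_one.mp e0 with ⟨hb, hd⟩ | ⟨hb, hd⟩
    · rw [hb, hd] at e1; linarith
    · rw [hb, hd] at e2
      have hac : a * c = -4 := by linarith
      have hda : a ∣ 4 := ⟨-c, by linarith⟩
      have hle : a ≤ 4 := Int.le_of_dvd (by norm_num) hda
      have hge : -4 ≤ a := by
        have := Int.le_of_dvd (by norm_num) ((neg_dvd).mpr hda); linarith
      interval_cases a <;> omega

/-- The data of the quartic field which are used: a real embedding `φ`, the generator `σ` of the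
Galois group (as a ring homomorphism), the two units `a` (the largest root of the polynomial) and
`g = (a + 1) / (a - 1)`, and the fact that the norm of a nonzero integer is at least `1`. -/
structure QField (α γ : ℝ) where
  F : Type
  [fld : Field F]
  [cz : CharZero F]
  φ : F →+* ℝ
  σ : F →+* F
  a : F
  g : F
  φa : φ a = α
  φg : φ g = γ
  σa : σ a = g⁻¹
  σg : σ g = -a
  ga : g * (a - 1) = a + 1
  int_a : IsIntegral ℤ a
  int_a' : IsIntegral ℤ a⁻¹
  int_g : IsIntegral ℤ g
  int_g' : IsIntegral ℤ g⁻¹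
  liouville : ∀ δ : F, IsIntegral ℤ δ → δ ≠ 0 →
    1 ≤ |φ δ| * |φ (σ δ)| * |φ (σ (σ δ))| * |φ (σ (σ (σ δ)))|

attribute [instance] QField.fld QField.cz

/-- The field `ℚ[X] / (qp t)`, with its universal property and the existence of representatives
of degree less than four. -/
lemma exists_field (t : ℤ) (h1 : 1 ≤ t) (h3 : t ≠ 3) :
    ∃ (F : Type) (_ : Field F) (_ : CharZero F) (a : F),
      a ^ 4 - t * a ^ 3 - 6 * a ^ 2 + t * a + 1 = 0 ∧
      (∀ (R : Type) [Field R] [CharZero R] (x : R), x ^ 4 - t * x ^ 3 - 6 * x ^ 2 + t * x + 1 = 0 →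
        ∃ ψ : F →+* R, ψ a = x) ∧
      (∀ P : F, ∃ p : ℚ[X], p.natDegree < 4 ∧ p.eval₂ (algebraMap ℚ F) a = P) := by
  set f : ℚ[X] := (qp t).map (algebraMap ℤ ℚ) with hf
  have hfm : f.Monic := (qp_monic t).map _
  have hirr : Irreducible f :=
    ((qp_monic t).irreducible_iff_irreducible_map_fraction_map (K := ℚ)).mp (qp_irreducible t h1 h3)
  have : Fact (Irreducible f) := ⟨hirr⟩
  have heval : ∀ {R : Type} [CommRing R] (i : ℚ →+* R) (x : R),
      f.eval₂ i x = x ^ 4 - t * x ^ 3 - 6 * x ^ 2 + t * x + 1 := by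
    intro R _ i x
    rw [hf, eval₂_map, qp_eval₂]
  refine ⟨AdjoinRoot f, inferInstance,
    charZero_of_injective_algebraMap (algebraMap ℚ (AdjoinRoot f)).injective,
    AdjoinRoot.root f, ?_, ?_, ?_⟩
  · rw [← heval (AdjoinRoot.of f) (AdjoinRoot.root f)]; exact AdjoinRoot.eval₂_root f
  · intro R _ _ x hx
    have h : f.eval₂ (algebraMap ℚ R) x = 0 := by rw [heval, hx]
    exact ⟨AdjoinRoot.lift _ x h, AdjoinRoot.lift_root h⟩
  · intro P
    obtain ⟨p0, hp0⟩ := AdjoinRoot.mk_surjective P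
    refine ⟨p0 %ₘ f, ?_, ?_⟩
    · have h5 : f.natDegree = 4 := by
        rw [hf, (qp_monic t).natDegree_map, qp_natDegree]
      rw [← h5]
      refine natDegree_modByMonic_lt _ hfm ?_
      intro h; rw [h] at h5; simp at h5
    · have h6 : (p0 %ₘ f).eval₂ (algebraMap ℚ (AdjoinRoot f)) (AdjoinRoot.root f)
          = AdjoinRoot.mk f (p0 %ₘ f) := by
        rw [← AdjoinRoot.aeval_eq, aeval_def]; rfl
      rw [← hp0]
      refine h6.trans ?_
      rw [AdjoinRoot.mk_eq_mk]
      refine ⟨-(p0 /ₘ f), ?_⟩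
      have := modByMonic_add_div p0 f
      linear_combination this

theorem exists_qfield (t : ℤ) (h1 : 1 ≤ t) (h3 : t ≠ 3) {α γ : ℝ} (hα : 1 < α)
    (hroot : α ^ 4 - t * α ^ 3 - 6 * α ^ 2 + t * α + 1 = 0) (hγ : γ * (α - 1) = α + 1) :
    Nonempty (QField α γ) := by
  obtain ⟨F, _, _, a, ha, hlift, hrep⟩ := exists_field t h1 h3
  have ha1 : a - 1 ≠ 0 := by
    intro h
    rw [sub_eq_zero] at h
    rw [h] at ha
    have : (-4 : F) = 0 := by linear_combination ha
    norm_num at this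
  have ha2 : a + 1 ≠ 0 := by
    intro h
    rw [add_eq_zero_iff_eq_neg] at h
    rw [h] at ha
    have : (-4 : F) = 0 := by linear_combination ha
    norm_num at this
  have ha0 : a ≠ 0 := by
    intro h; rw [h] at ha; norm_num at ha
  let g : F := (a + 1) / (a - 1)
  have hg0 : g ≠ 0 := div_ne_zero ha2 ha1
  have hginv : g⁻¹ = (a - 1) / (a + 1) := by simp [g]
  have hσ : g⁻¹ ^ 4 - t * g⁻¹ ^ 3 - 6 * g⁻¹ ^ 2 + t * g⁻¹ + 1 = 0 := by
    rw [hginv]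
    field_simp
    linear_combination (-4) * ha
  obtain ⟨σ, σa⟩ := hlift F g⁻¹ hσ
  obtain ⟨φ, φa⟩ := hlift ℝ α hroot
  have σg : σ g = -a := by
    simp only [g, map_div₀, map_add, map_sub, map_one, σa, hginv]
    field_simp
    ring
  have hα1 : α - 1 ≠ 0 := by linarith
  have φg : φ g = γ := by
    simp only [g, map_div₀, map_add, map_sub, map_one, φa]
    field_simp
    linarith
  have hga : g * (a - 1) = a + 1 := div_mul_cancel₀ _ ha1
  -- the root, its inverse and their conjugates are algebraic integers
  have inta : IsIntegral ℤ a := by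
    refine ⟨qp t, qp_monic t, ?_⟩
    rw [qp_eval₂, ha]
  have inta' : IsIntegral ℤ a⁻¹ := by
    refine ⟨qp (-t), qp_monic (-t), ?_⟩
    have : (qp (-t)).eval₂ (algebraMap ℤ F) a⁻¹
        = (a ^ 4 - t * a ^ 3 - 6 * a ^ 2 + t * a + 1) * (a⁻¹) ^ 4 := by
      rw [qp_eval₂, Int.cast_neg]
      field_simp
      ring
    rw [this, ha, zero_mul]
  have intg' : IsIntegral ℤ g⁻¹ := by
    rw [← σa]; exact inta.map (σ.toIntAlgHom)
  have intg : IsIntegral ℤ g := by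
    have := inta'.map (σ.toIntAlgHom)
    have h2 : σ.toIntAlgHom a⁻¹ = g := by
      show σ a⁻¹ = g
      rw [map_inv₀, σa, inv_inv]
    rwa [h2] at this
  refine ⟨{ F := F, φ := φ, σ := σ, a := a, g := g, φa := φa, φg := φg, σa := σa, σg := σg
            ga := hga, int_a := inta, int_a' := inta', int_g := intg, int_g' := intg'
            liouville := ?_ }⟩
  intro δ hδ hδ0
  set P : F := δ * σ δ * σ (σ δ) * σ (σ (σ δ)) with hP
  have hσ4 : ∀ x, σ (σ (σ (σ x))) = x := by
    intro x
    obtain ⟨p, -, rfl⟩ := hrep x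
    have hψ : ∀ ψ : F →+* F, ψ a = a → ψ (p.eval₂ (algebraMap ℚ F) a)
        = p.eval₂ (algebraMap ℚ F) a := by
      intro ψ hψ
      rw [hom_eval₂, hψ]
      congr 1
      exact RingHom.ext_rat _ _
    refine hψ ((σ.comp σ).comp (σ.comp σ)) ?_
    show σ (σ (σ (σ a))) = a
    rw [σa, map_inv₀, σg, inv_neg, map_neg, map_inv₀, σa, inv_inv, map_neg, σg, neg_neg]
  have hPσ : σ P = P := by
    rw [hP]; simp only [map_mul, hσ4]; ring
  -- an element fixed by `σ` is rational
  obtain ⟨q, hq⟩ : ∃ q : ℚ, P = algebraMap ℚ F q := by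
    obtain ⟨p, hpd, hpP⟩ := hrep P
    have hev : ∀ ψ : F →+* ℝ, ψ P = (p.map (algebraMap ℚ ℝ)).eval (ψ a) := by
      intro ψ
      rw [← hpP, eval_map, hom_eval₂]
      congr 1
      exact RingHom.ext_rat _ _
    set pr := p.map (algebraMap ℚ ℝ) - C (φ P) with hpr
    have hz : pr = 0 := by
      have hprd : pr.natDegree ≤ 3 := by
        rw [hpr]
        refine (natDegree_sub_le _ _).trans ?_
        rw [natDegree_C, natDegree_map]
        omega
      have hγ1 : 1 < γ := by
        by_contra h; push Not at h; nlinarith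
      have hγ0 : 0 < γ := by linarith
      refine eq_zero_of_natDegree_lt_card_of_eval_eq_zero' pr {α, γ⁻¹, -α⁻¹, -γ} ?_ ?_
      · intro x hx
        have r0 : pr.eval α = 0 := by
          rw [hpr, eval_sub, eval_C, ← φa, ← hev φ, sub_self]
        have r1 : pr.eval γ⁻¹ = 0 := by
          have := hev (φ.comp σ)
          simp only [RingHom.comp_apply, hPσ, σa, map_inv₀, φg] at this
          rw [hpr, eval_sub, eval_C, ← this, sub_self]
        have r2 : pr.eval (-α⁻¹) = 0 := by
          have := hev (φ.comp (σ.comp σ))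
          simp only [RingHom.comp_apply, hPσ, σa, map_inv₀, σg, map_neg, φa, inv_neg] at this
          rw [hpr, eval_sub, eval_C, ← this, sub_self]
        have r3 : pr.eval (-γ) = 0 := by
          have := hev (φ.comp (σ.comp (σ.comp σ)))
          simp only [RingHom.comp_apply, hPσ, σa, map_inv₀, σg, map_neg, inv_neg, inv_inv, φg] at this
          rw [hpr, eval_sub, eval_C, ← this, sub_self]
        simp only [Finset.mem_insert, Finset.mem_singleton] at hx
        rcases hx with rfl | rfl | rfl | rfl <;> assumption
      · have k1 : 0 < α⁻¹ := by positivity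
        have k2 : α⁻¹ < 1 := inv_lt_one_of_one_lt₀ hα
        have k3 : 0 < γ⁻¹ := by positivity
        have k4 : γ⁻¹ < 1 := inv_lt_one_of_one_lt₀ hγ1
        have hcard : ({α, γ⁻¹, -α⁻¹, -γ} : Finset ℝ).card = 4 := by
          rw [Finset.card_insert_of_notMem, Finset.card_insert_of_notMem,
            Finset.card_insert_of_notMem, Finset.card_singleton]
          · simp only [Finset.mem_singleton]; intro h; linarith
          · simp only [Finset.mem_insert, Finset.mem_singleton]
            rintro (h | h) <;> linarith
          · simp only [Finset.mem_insert, Finset.mem_singleton]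
            rintro (h | h | h) <;> linarith
        rw [hcard]; omega
    have hp1 : p.natDegree = 0 := by
      have h6 : p.map (algebraMap ℚ ℝ) = C (φ P) := by rw [hpr, sub_eq_zero] at hz; exact hz
      rw [← natDegree_map (algebraMap ℚ ℝ) (p := p), h6, natDegree_C]
    refine ⟨p.coeff 0, ?_⟩
    rw [← hpP]
    conv_lhs => rw [eq_C_of_natDegree_eq_zero hp1]
    rw [eval₂_C]
  have hPint : IsIntegral ℤ P := by
    have m : ∀ x : F, IsIntegral ℤ x → IsIntegral ℤ (σ x) := fun x hx => hx.map σ.toIntAlgHom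
    exact ((hδ.mul (m _ hδ)).mul (m _ (m _ hδ))).mul (m _ (m _ (m _ hδ)))
  have hqint : IsIntegral ℤ q := by
    rw [hq] at hPint
    exact (isIntegral_algebraMap_iff (algebraMap ℚ F).injective).mp hPint
  obtain ⟨z, hz⟩ := IsIntegrallyClosed.isIntegral_iff.mp hqint
  have hφP : φ P = z := by
    rw [hq, ← hz]; simp
  have hz0 : z ≠ 0 := by
    intro h
    rw [h, Int.cast_zero, map_eq_zero] at hφP
    have hσ0 : ∀ x : F, x ≠ 0 → σ x ≠ 0 := fun x hx => (map_ne_zero σ).mpr hx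
    rw [hP] at hφP
    exact mul_ne_zero (mul_ne_zero (mul_ne_zero hδ0 (hσ0 _ hδ0)) (hσ0 _ (hσ0 _ hδ0)))
      (hσ0 _ (hσ0 _ (hσ0 _ hδ0))) hφP
  have : |φ δ| * |φ (σ δ)| * |φ (σ (σ δ))| * |φ (σ (σ (σ δ)))| = |(z : ℝ)| := by
    rw [← hφP, hP]; simp only [map_mul, abs_mul]
  rw [this, ← Int.cast_abs]
  exact_mod_cast Int.one_le_abs hz0

end

/-! ### Linear forms in two logarithms -/

lemma ptVec_map {F G : Type*} [Field F] [Field G] (ψ : F →+* G) (x y : F) (A B K L : ℕ)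
    (q : ℕ × ℕ) (a : Fin (K * L)) :
    ψ (ptVec x y A B K L q a) = ptVec (ψ x) (ψ y) A B K L q a := by
  simp [ptVec]

lemma isIntegral_ptVec {F : Type*} [Field F] {x y : F} (hx : IsIntegral ℤ x)
    (hy : IsIntegral ℤ y) (A B K L : ℕ) (q : ℕ × ℕ) (a : Fin (K * L)) :
    IsIntegral ℤ (ptVec x y A B K L q a) := by
  unfold ptVec
  refine IsIntegral.mul (IsIntegral.pow ?_ _) (IsIntegral.pow ((hx.pow _).mul (hy.pow _)) _)
  have := isIntegral_algebraMap (R := ℤ) (A := F) (x := ((q.1 * B + q.2 * A : ℕ) : ℤ))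
  simpa using this

lemma abs_ptVec_le {x y : ℝ} {A B K L : ℕ} {q : ℕ × ℕ} {W E : ℝ}
    (hW : ((q.1 * B + q.2 * A : ℕ) : ℝ) ≤ W) (hE : |x ^ q.1 * y ^ q.2| ≤ E) (a : Fin (K * L)) :
    |ptVec x y A B K L q a| ≤ W ^ ((finProdFinEquiv.symm a).1 : ℕ)
      * E ^ ((finProdFinEquiv.symm a).2 : ℕ) := by
  unfold ptVec
  rw [abs_mul, abs_pow, abs_pow]
  have h0 : |((q.1 * B + q.2 * A : ℕ) : ℝ)| ≤ W := by rwa [abs_of_nonneg (by positivity)]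
  have := (abs_nonneg _).trans h0
  gcongr

/-- The trivial upper bound for the conjugates of the interpolation determinant. -/
lemma abs_det_ptVec_le {x y : ℝ} {A B K L : ℕ} {q : Fin (K * L) → ℕ × ℕ} {W E : ℝ}
    (hW : ∀ i, (((q i).1 * B + (q i).2 * A : ℕ) : ℝ) ≤ W)
    (hE : ∀ i, |x ^ (q i).1 * y ^ (q i).2| ≤ E) :
    |(Matrix.of fun a i => ptVec x y A B K L (q i) a).det|
      ≤ (K * L).factorial * (W ^ (L * (K * (K - 1) / 2)) * E ^ (K * (L * (L - 1) / 2))) := by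
  have := abs_det_le (Matrix.of fun a i => ptVec x y A B K L (q i) a)
    (fun a => W ^ ((finProdFinEquiv.symm a).1 : ℕ) * E ^ ((finProdFinEquiv.symm a).2 : ℕ))
    (fun _ => 1) (fun a i => by
      simpa using abs_ptVec_le (hW i) (hE i) a)
  rw [prod_fin_mul, Fintype.card_fin] at this
  simpa using this

/-- The analytic upper bound: when `Λ = A log α - B log γ` is tiny, the columns of the
determinant are nearly the values of `xᵏ exp(l x log α / B)` at the integers `rB + sA`. -/
lemma abs_det_ptVec_le_of_small {α γ : ℝ} (hα : 1 < α) (hγ : 1 < γ) {A B K L S : ℕ}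
    (hA : A ≤ B) (hL : 0 < L) (hLS : L ≤ S) (hB : 0 < B) {q : Fin (K * L) → ℕ × ℕ}
    (hq : ∀ i, (q i).1 < S + L ∧ (q i).2 < S)
    (hinj : ∀ i j, (q i).1 * B + (q i).2 * A = (q j).1 * B + (q j).2 * A → i = j)
    (hsmall : (K * L : ℕ) * (2 * L * S * |A * Real.log α - B * Real.log γ|)
      * (4 * (3 * S * B : ℝ)) ^ (K * L) ≤ 1) :
    |(Matrix.of fun a i => ptVec α γ A B K L (q i) a).det|
      ≤ (K * L).factorial * (2 ^ (K * L) * ((5 * (3 * S * B : ℝ)) ^ (L * (K * (K - 1) / 2))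
        * (Real.exp (15 * Real.log α * S)) ^ (K * (L * (L - 1) / 2))))
        * (1 / 4) ^ ((K * L) * (K * L - 1) / 2) := by
  set c := Real.log α with hc
  set Λ := A * c - B * Real.log γ with hΛ
  set W : ℝ := 3 * S * B with hWdef
  have hc0 : 0 < c := Real.log_pos hα
  have hS : 0 < S := by omega
  have hSr : (1 : ℝ) ≤ S := by exact_mod_cast hS
  have hBr : (1 : ℝ) ≤ B := by exact_mod_cast hB
  have hW1 : 1 ≤ W := by rw [hWdef]; nlinarith
  by_cases hN0 : (K * L) = 0
  · have hK : K = 0 := by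
      rcases Nat.mul_eq_zero.mp hN0 with h | h
      · exact h
      · omega
    subst hK
    have : IsEmpty (Fin (0 * L)) := by rw [Nat.zero_mul]; infer_instance
    rw [Matrix.det_isEmpty]
    simp
  have hNpos : 0 < (K * L) := Nat.pos_of_ne_zero hN0
  -- the nodes, extended to all of `ℕ`
  let z : ℕ → ℤ := fun i => if h : i < (K * L) then (((q ⟨i, h⟩).1 * B + (q ⟨i, h⟩).2 * A : ℕ) : ℤ) else 0
  let w : ℕ → ℝ := fun i => (z i : ℝ)
  have hz : ∀ i : Fin (K * L), z i = (((q i).1 * B + (q i).2 * A : ℕ) : ℤ) := fun i => by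
    simp only [z, i.2, dif_pos]
  have hw : ∀ i : Fin (K * L), w i = (((q i).1 * B + (q i).2 * A : ℕ) : ℝ) := fun i => by
    simp only [w, hz i]; norm_cast
  have hzinj : ∀ i < (K * L), ∀ m < (K * L), z i = z m → i = m := by
    intro i hi m hm h
    have h1 := hz ⟨i, hi⟩
    have h2 := hz ⟨m, hm⟩
    simp only at h1 h2
    rw [h1, h2] at h
    have := hinj ⟨i, hi⟩ ⟨m, hm⟩ (by exact_mod_cast h)
    simpa using this
  have hwinj : ∀ i < (K * L), ∀ m < (K * L), w i = w m → i = m := by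
    intro i hi m hm h
    exact hzinj i hi m hm (Int.cast_injective (α := ℝ) h)
  have hwW : ∀ i < (K * L), 0 ≤ w i ∧ w i ≤ W := by
    intro i hi
    have h1 := hw ⟨i, hi⟩
    simp only at h1
    rw [h1]
    refine ⟨by positivity, ?_⟩
    have h2 := hq ⟨i, hi⟩
    have h3 : (q ⟨i, hi⟩).1 * B + (q ⟨i, hi⟩).2 * A ≤ 3 * S * B := by
      have h4 : (q ⟨i, hi⟩).1 * B ≤ (2 * S) * B := Nat.mul_le_mul_right _ (by omega)
      have h5 : (q ⟨i, hi⟩).2 * A ≤ S * B := Nat.mul_le_mul (by omega) hA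
      nlinarith
    rw [hWdef]
    exact_mod_cast h3
  -- the entries, as perturbations of an exponential polynomial
  let η : Fin (K * L) → ℝ := fun i => -((q i).2 * Λ / B)
  have hpow : ∀ i : Fin (K * L), α ^ (q i).1 * γ ^ (q i).2 = Real.exp (c / B * w i) * Real.exp (η i) := by
    intro i
    have hαe : α = Real.exp c := (Real.exp_log (by linarith)).symm
    have hγe : γ = Real.exp (Real.log γ) := (Real.exp_log (by linarith)).symm
    conv_lhs => rw [hαe, hγe]
    rw [← Real.exp_nat_mul, ← Real.exp_nat_mul, ← Real.exp_add, ← Real.exp_add]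
    congr 1
    rw [hw]; simp only [η, hΛ]; push_cast
    field_simp
    ring
  let ka : Fin (K * L) → ℕ := fun a => ((finProdFinEquiv.symm a : Fin K × Fin L).1 : ℕ)
  let la : Fin (K * L) → ℕ := fun a => ((finProdFinEquiv.symm a : Fin K × Fin L).2 : ℕ)
  have hla : ∀ a, la a ≤ L := fun a => (finProdFinEquiv.symm a : Fin K × Fin L).2.2.le
  let gg : Fin (K * L) → ℕ → ℝ := fun a i => w i ^ ka a * Real.exp ((la a * (c / B)) * w i)
  let ff : Fin (K * L) → ℕ → ℝ := fun a i => if h : i < (K * L) then ptVec α γ A B K L (q ⟨i, h⟩) a else 0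
  have hffi : ∀ a (i : Fin (K * L)), ff a i = ptVec α γ A B K L (q i) a := fun a i => by
    simp only [ff, i.2, dif_pos]
  have hff : ∀ a (i : Fin (K * L)), ff a i = gg a i * Real.exp (la a * η i) := by
    intro a i
    rw [hffi]
    unfold ptVec
    rw [hpow, ← hw, mul_pow, ← Real.exp_nat_mul, ← Real.exp_nat_mul]
    simp only [gg]
    rw [mul_assoc]
    congr 3
    ring
  set E := Real.exp (15 * c * S) with hE
  let r : Fin (K * L) → ℝ := fun a => 2 * ((5 * W) ^ ka a * E ^ la a)
  have hEW : ∀ a, Real.exp (la a * (c / B) * (W + 4 * W)) = E ^ la a := by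
    intro a
    rw [hE, ← Real.exp_nat_mul]
    congr 1
    rw [hWdef]; field_simp; ring
  have hggb : ∀ a, ∀ i < (K * L), |gg a i| ≤ (5 * W) ^ ka a * E ^ la a := by
    intro a i hi
    obtain ⟨h1, h2⟩ := hwW i hi
    simp only [gg]
    rw [abs_of_nonneg (by positivity), ← hEW]
    gcongr <;> linarith
  have hΛs : 2 * L * S * |Λ| * (4 * W) ^ (K * L) ≤ 1 / ((K * L : ℕ) : ℝ) := by
    rw [le_div_iff₀ (by exact_mod_cast hNpos)]
    calc _ = ((K * L : ℕ) : ℝ) * (2 * L * S * |Λ|) * (4 * W) ^ (K * L) := by ring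
      _ ≤ 1 := hsmall
  have h4W : (1 : ℝ) ≤ 4 * W := by linarith
  have hpert : ∀ a, ∀ i < (K * L), |ff a i - gg a i|
      ≤ (5 * W) ^ ka a * E ^ la a * (2 * L * S * |Λ|) := by
    intro a i hi
    have h1 := hff a ⟨i, hi⟩
    simp only at h1
    rw [h1, show gg a i * Real.exp (la a * η ⟨i, hi⟩) - gg a i
      = gg a i * (Real.exp (la a * η ⟨i, hi⟩) - 1) by ring, abs_mul]
    have h2 : |(la a : ℝ) * η ⟨i, hi⟩| ≤ L * S * |Λ| := by
      rw [abs_mul, Nat.abs_cast]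
      simp only [η]
      rw [abs_neg, abs_div, abs_mul, Nat.abs_cast, Nat.abs_cast, mul_assoc]
      have h3 : ((q ⟨i, hi⟩).2 : ℝ) ≤ S := by exact_mod_cast (hq ⟨i, hi⟩).2.le
      have h4 : (la a : ℝ) ≤ L := by exact_mod_cast hla a
      have h5 : ((q ⟨i, hi⟩).2 : ℝ) * |Λ| / B ≤ S * |Λ| := by
        rw [div_le_iff₀ (by linarith)]
        have : 0 ≤ (S : ℝ) * |Λ| := by positivity
        nlinarith [abs_nonneg Λ]
      exact mul_le_mul h4 h5 (by positivity) (by positivity)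
    have h3 : L * S * |Λ| ≤ 1 := by
      have h5 : 2 * L * S * |Λ| ≤ 2 * L * S * |Λ| * (4 * W) ^ (K * L) :=
        le_mul_of_one_le_right (by positivity) (one_le_pow₀ h4W)
      have h6 : (1 : ℝ) / ((K * L : ℕ) : ℝ) ≤ 1 := by
        rw [div_le_one (by exact_mod_cast hNpos)]; exact_mod_cast hNpos
      linarith
    have h4 := Real.abs_exp_sub_one_le (h2.trans h3)
    calc _ ≤ (5 * W) ^ ka a * E ^ la a * (2 * (L * S * |Λ|)) :=
          mul_le_mul (hggb a i hi) (h4.trans (by linarith)) (abs_nonneg _) (by positivity)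
      _ = _ := by ring
  have hdd : ∀ a, ∀ j < (K * L), |dd w j (ff a)| ≤ r a / (4 * W) ^ j := by
    intro a j hj
    have h1 : dd w j (ff a) = dd w j (gg a) + dd w j (fun i => ff a i - gg a i) := by
      unfold dd; rw [← Finset.sum_add_distrib]
      exact Finset.sum_congr rfl fun i _ => by ring
    have h2 := abs_dd_pow_mul_exp_le (w := w) (W := W) (ρ := 4 * W) (c := la a * (c / B))
      (by linarith) (by positivity) (j := j) (ka a)
      (fun i hi m hm => hwinj i (by omega) m (by omega))
      (fun i hi => by rw [abs_of_nonneg (hwW i (by omega)).1]; exact (hwW i (by omega)).2)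
    rw [hEW, show W + 4 * W = 5 * W by ring] at h2
    have h3 : |dd w j (fun i => ff a i - gg a i)| ≤ (5 * W) ^ ka a * E ^ la a / (4 * W) ^ j := by
      unfold dd
      refine (Finset.abs_sum_le_sum_abs _ _).trans ?_
      have h4 : ∀ i ∈ Finset.range (j + 1), |ddw w j i * (ff a i - gg a i)|
          ≤ (5 * W) ^ ka a * E ^ la a * (2 * L * S * |Λ|) := by
        intro i hi
        have hi' : i ≤ j := by simpa [Nat.lt_succ_iff] using hi
        rw [abs_mul]
        have h5 : |ddw w j i| ≤ 1 := abs_ddw_le_one hzinj hj hi'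
        calc _ ≤ 1 * |ff a i - gg a i| := by gcongr
          _ ≤ _ := by rw [one_mul]; exact hpert a i (by omega)
      refine (Finset.sum_le_card_nsmul _ _ _ h4).trans ?_
      rw [Finset.card_range, nsmul_eq_mul, div_eq_mul_inv]
      have h6 : ((j + 1 : ℕ) : ℝ) * (2 * L * S * |Λ|) ≤ ((4 * W) ^ j)⁻¹ := by
        rw [← one_div, le_div_iff₀ (by positivity)]
        calc ((j + 1 : ℕ) : ℝ) * (2 * L * S * |Λ|) * (4 * W) ^ j
            ≤ ((K * L : ℕ) : ℝ) * (2 * L * S * |Λ|) * (4 * W) ^ (K * L) := by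
              have h7 : ((j + 1 : ℕ) : ℝ) ≤ ((K * L : ℕ) : ℝ) := by exact_mod_cast hj
              have h8 : (4 * W) ^ j ≤ (4 * W) ^ (K * L) := pow_le_pow_right₀ h4W hj.le
              gcongr
          _ ≤ 1 := hsmall
      calc _ = (5 * W) ^ ka a * E ^ la a * (((j + 1 : ℕ) : ℝ) * (2 * L * S * |Λ|)) := by ring
        _ ≤ _ := by gcongr
    rw [h1]
    refine (abs_add_le _ _).trans ?_
    calc _ ≤ (5 * W) ^ ka a * E ^ la a / (4 * W) ^ j + (5 * W) ^ ka a * E ^ la a / (4 * W) ^ j :=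
          add_le_add h2 h3
      _ = _ := by simp only [r]; ring
  have := abs_det_le_of_dd (N := K * L) hwinj hwW (show 0 < 4 * W by linarith) ff r hdd
  have hmat : (Matrix.of fun (a i : Fin (K * L)) => ff a i)
      = Matrix.of fun a i => ptVec α γ A B K L (q i) a := by
    ext a i; simp only [Matrix.of_apply]; exact hffi a i
  rw [hmat] at this
  have hr : ∏ a, r a = 2 ^ (K * L) * ((5 * W) ^ (L * (K * (K - 1) / 2)) * E ^ (K * (L * (L - 1) / 2))) := by
    simp only [r]
    rw [Finset.prod_mul_distrib]
    have := prod_fin_mul (K := K) (L := L) (5 * W) E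
    rw [← this]
    simp [ka, la]
  rw [hr, show W / (4 * W) = 1 / 4 by field_simp] at this
  exact this

lemma QField.a_ne {α γ : ℝ} (Q : QField α γ) (hα : 1 < α) : Q.a ≠ 0 := by
  intro h
  have := Q.φa
  rw [h, map_zero] at this
  linarith

lemma QField.g_ne {α γ : ℝ} (Q : QField α γ) (hγ : 1 < γ) : Q.g ≠ 0 := by
  intro h
  have := Q.φg
  rw [h, map_zero] at this
  linarith

/-- Taking logarithms in Liouville's inequality. -/
lemma log_of_liouville {K L : ℕ} (hK : 0 < K) (hL : 0 < L) {W c S : ℝ} (hW1 : 1 ≤ W)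
    (hc0 : 0 < c) (hSr : 0 < S)
    (hfin : 1 ≤ ((K * L).factorial * (2 ^ (K * L) * ((5 * W) ^ (L * (K * (K - 1) / 2))
        * Real.exp (15 * c * S) ^ (K * (L * (L - 1) / 2))))
        * (1 / 4) ^ ((K * L) * (K * L - 1) / 2))
      * ((K * L).factorial * (W ^ (L * (K * (K - 1) / 2))
        * Real.exp (2 * c * S) ^ (K * (L * (L - 1) / 2)))) ^ 3) :
    ((K * L : ℕ) - 1 : ℝ) / 2 * Real.log 4 ≤ 4 * Real.log (K * L : ℕ) + Real.log 2
      + K / 2 * (4 * Real.log W + Real.log 5) + L / 2 * (21 * c * S) := by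
  have hWpos : 0 < W := by linarith
  have hlog := Real.log_le_log one_pos hfin
  clear hfin
  obtain ⟨N, hN⟩ : ∃ N, N = K * L := ⟨_, rfl⟩
  rw [← hN] at hlog ⊢
  have hNpos : 0 < N := hN ▸ Nat.mul_pos hK hL
  have hNr : (0 : ℝ) < N := by exact_mod_cast hNpos
  have hfac : (0 : ℝ) < (N.factorial : ℝ) := by exact_mod_cast N.factorial_pos
  obtain ⟨P, hP⟩ : ∃ P, P = L * (K * (K - 1) / 2) := ⟨_, rfl⟩
  obtain ⟨R, hR⟩ : ∃ R, R = K * (L * (L - 1) / 2) := ⟨_, rfl⟩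
  rw [← hP, ← hR] at hlog
  have hE := Real.exp_pos (2 * c * S)
  have hE' := Real.exp_pos (15 * c * S)
  have l1 : Real.log (N.factorial * (W ^ P * Real.exp (2 * c * S) ^ R))
      = Real.log N.factorial + (P * Real.log W + R * (2 * c * S)) := by
    rw [Real.log_mul hfac.ne' (by positivity), Real.log_mul (by positivity) (by positivity),
      Real.log_pow, Real.log_pow, Real.log_exp]
  have l0 : Real.log (N.factorial * (2 ^ N * ((5 * W) ^ P * Real.exp (15 * c * S) ^ R))
        * (1 / 4) ^ (N * (N - 1) / 2))
      = Real.log N.factorial + (N * Real.log 2 + (P * (Real.log 5 + Real.log W)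
        + R * (15 * c * S))) - (N * (N - 1) / 2 : ℕ) * Real.log 4 := by
    rw [Real.log_mul (by positivity) (by positivity), Real.log_mul hfac.ne' (by positivity),
      Real.log_mul (by positivity) (by positivity), Real.log_mul (by positivity) (by positivity),
      Real.log_pow, Real.log_pow, Real.log_pow, Real.log_pow, Real.log_exp,
      Real.log_mul (by norm_num) hWpos.ne', Real.log_div (by norm_num) (by norm_num), Real.log_one]
    ring
  have hE3 : 0 < (1 / 4 : ℝ) ^ (N * (N - 1) / 2) := by positivity
  have hX1 : 0 < N.factorial * (W ^ P * Real.exp (2 * c * S) ^ R) := by positivity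
  have hX0 : 0 < N.factorial * (2 ^ N * ((5 * W) ^ P * Real.exp (15 * c * S) ^ R))
        * (1 / 4) ^ (N * (N - 1) / 2) := by positivity
  rw [Real.log_one, Real.log_mul hX0.ne' (pow_pos hX1 3).ne', Real.log_pow, l1, l0] at hlog
  have hchoose : ∀ m : ℕ, 0 < m → ((m * (m - 1) / 2 : ℕ) : ℝ) = m * (m - 1) / 2 := by
    intro m hm
    rw [Nat.cast_div (Nat.even_mul_pred_self m).two_dvd (by norm_num), Nat.cast_mul,
      Nat.cast_pred hm]
    norm_num
  have hPr : (P : ℝ) ≤ N * (K / 2) := by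
    rw [hP, hN, Nat.cast_mul, hchoose K hK]; push_cast
    have : (0 : ℝ) ≤ L * K := by positivity
    nlinarith
  have hRr : (R : ℝ) ≤ N * (L / 2) := by
    rw [hR, hN, Nat.cast_mul, hchoose L hL]; push_cast
    have : (0 : ℝ) ≤ L * K := by positivity
    nlinarith
  have hfl : Real.log N.factorial ≤ N * Real.log N := by
    rw [← Real.log_pow]
    exact Real.log_le_log hfac (by exact_mod_cast Nat.factorial_le_pow N)
  rw [hchoose N hNpos] at hlog
  have hlW := Real.log_nonneg hW1
  have hl5 : 0 ≤ Real.log 5 := Real.log_nonneg (by norm_num)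
  have m1 := mul_le_mul_of_nonneg_right hPr (show 0 ≤ 4 * Real.log W + Real.log 5 by linarith)
  have m2 := mul_le_mul_of_nonneg_right hRr (show 0 ≤ 21 * c * S by positivity)
  refine le_of_mul_le_mul_left ?_ hNr
  push_cast at hlog
  linarith

/-- Liouville's inequality for a nonzero interpolation determinant, in logarithmic form. -/
lemma two_logs_core {α γ : ℝ} (Q : QField α γ) (hα : 1 < α) (hγ : 1 < γ) (hγα : γ ≤ α)
    {A B K L S : ℕ} (hA : A ≤ B) (hAB : A.Coprime B) (hB : 0 < B) (hSB : S ≤ B)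
    (hK : 0 < K) (hL : 0 < L) (hLS : L ≤ S) (hKL : K * L ≤ S * S)
    (hsmall : (K * L : ℕ) * (2 * L * S * |A * Real.log α - B * Real.log γ|)
      * (4 * (3 * S * B : ℝ)) ^ (K * L) ≤ 1) :
    ((K * L : ℕ) - 1 : ℝ) / 2 * Real.log 4 ≤ 4 * Real.log (K * L : ℕ) + Real.log 2
      + K / 2 * (4 * Real.log (3 * S * B) + Real.log 5) + L / 2 * (21 * Real.log α * S) := by
  have hinj : ∀ i j : ℕ, Q.a ^ i = Q.a ^ j → i = j := by
    intro i j h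
    have h1 := congrArg Q.φ h
    rw [map_pow, map_pow, Q.φa] at h1
    exact (pow_right_injective₀ (by linarith) hα.ne') h1
  obtain ⟨q, hq, hqi, hdet⟩ := exists_minor (Q.a_ne hα) (Q.g_ne hγ) hinj hB hAB hSB hK hL hKL
  set M := (Matrix.of fun a i => ptVec Q.a Q.g A B K L (q i) a) with hM
  have hMint : IsIntegral ℤ M.det :=
    IsIntegral.det fun a i => isIntegral_ptVec Q.int_a Q.int_g A B K L (q i) a
  have hli := Q.liouville _ hMint hdet
  have hmap : ∀ ψ : Q.F →+* ℝ, ψ M.det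
      = (Matrix.of fun a i => ptVec (ψ Q.a) (ψ Q.g) A B K L (q i) a).det := by
    intro ψ
    rw [RingHom.map_det]
    congr 1
    ext a i
    simp [hM, ptVec_map]
  have hSr : (0 : ℝ) < S := by exact_mod_cast (lt_of_lt_of_le hL hLS)
  have hBr : (0 : ℝ) < B := by exact_mod_cast hB
  have hc0 : 0 < Real.log α := Real.log_pos hα
  set c := Real.log α with hc
  set W : ℝ := 3 * S * B with hW
  have hWpos : 0 < W := by positivity
  have hqW : ∀ i, (((q i).1 * B + (q i).2 * A : ℕ) : ℝ) ≤ W := by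
    intro i
    have h2 := hq i
    have h3 : (q i).1 * B + (q i).2 * A ≤ 3 * S * B := by
      have h4 : (q i).1 * B ≤ (2 * S) * B := Nat.mul_le_mul_right _ (by omega)
      have h5 : (q i).2 * A ≤ S * B := Nat.mul_le_mul (by omega) hA
      nlinarith
    rw [hW]
    exact_mod_cast h3
  have hExp : Real.exp (2 * c * S) = α ^ (2 * S) := by
    rw [show 2 * c * S = ((2 * S : ℕ) : ℝ) * c by push_cast; ring, Real.exp_nat_mul,
      Real.exp_log (by linarith)]
  have htriv : ∀ x y : ℝ, (∀ r s, r ≤ 2 * S → s ≤ S → |x ^ r * y ^ s| ≤ α ^ (2 * S)) →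
      |(Matrix.of fun a i => ptVec x y A B K L (q i) a).det|
      ≤ (K * L).factorial * (W ^ (L * (K * (K - 1) / 2))
        * Real.exp (2 * c * S) ^ (K * (L * (L - 1) / 2))) := by
    intro x y h
    refine abs_det_ptVec_le hqW fun i => ?_
    rw [hExp]
    have := hq i
    exact h _ _ (by omega) (by omega)
  have hα0 : 0 < α := by linarith
  have hγ0 : 0 < γ := by linarith
  have hgi : γ⁻¹ ≤ 1 := inv_le_one_of_one_le₀ hγ.le
  have hai : α⁻¹ ≤ 1 := inv_le_one_of_one_le₀ hα.le
  have h0 := abs_det_ptVec_le_of_small hα hγ hA hL hLS hB hq hqi hsmall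
  have h1 := htriv γ⁻¹ (-α) (by
    intro r s hr hs
    rw [abs_mul, abs_pow, abs_pow, abs_neg, abs_of_pos hα0, abs_of_pos (inv_pos.2 hγ0)]
    calc γ⁻¹ ^ r * α ^ s ≤ 1 * α ^ (2 * S) :=
          mul_le_mul (pow_le_one₀ (by positivity) hgi)
            (pow_le_pow_right₀ hα.le (by omega)) (by positivity) (by norm_num)
      _ = _ := one_mul _)
  have h2 := htriv (-α⁻¹) (-γ⁻¹) (by
    intro r s hr hs
    rw [abs_mul, abs_pow, abs_pow, abs_neg, abs_neg, abs_of_pos (inv_pos.2 hα0),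
      abs_of_pos (inv_pos.2 hγ0)]
    calc α⁻¹ ^ r * γ⁻¹ ^ s ≤ 1 * 1 :=
          mul_le_mul (pow_le_one₀ (by positivity) hai)
            (pow_le_one₀ (by positivity) hgi) (by positivity) (by norm_num)
      _ ≤ _ := by rw [one_mul]; exact one_le_pow₀ hα.le)
  have h3 := htriv (-γ) (α⁻¹) (by
    intro r s hr hs
    rw [abs_mul, abs_pow, abs_pow, abs_neg, abs_of_pos (inv_pos.2 hα0), abs_of_pos hγ0]
    calc γ ^ r * α⁻¹ ^ s ≤ α ^ (2 * S) * 1 :=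
          mul_le_mul ((pow_le_pow_left₀ hγ0.le hγα r).trans (pow_le_pow_right₀ hα.le hr))
            (pow_le_one₀ (by positivity) hai) (by positivity) (by positivity)
      _ = _ := mul_one _)
  have e0 := hmap Q.φ
  have e1 := hmap (Q.φ.comp Q.σ)
  have e2 := hmap (Q.φ.comp (Q.σ.comp Q.σ))
  have e3 := hmap (Q.φ.comp (Q.σ.comp (Q.σ.comp Q.σ)))
  simp only [RingHom.comp_apply, Q.σa, Q.σg, map_inv₀, map_neg, Q.φa, Q.φg, inv_neg, neg_neg, inv_inv]
    at e0 e1 e2 e3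
  rw [← e0] at h0
  rw [← e1] at h1
  rw [← e2] at h2
  rw [← e3] at h3
  have hW1 : 1 ≤ W := by
    have h1 : (1 : ℝ) ≤ S := by exact_mod_cast (lt_of_lt_of_le hL hLS)
    have h2 : (1 : ℝ) ≤ B := by exact_mod_cast hB
    rw [hW]; nlinarith
  refine log_of_liouville hK hL hW1 hc0 hSr ?_
  rw [← hW, ← hc] at h0
  refine (hli.trans (mul_le_mul (mul_le_mul (mul_le_mul h0 h1 (abs_nonneg _) (by positivity))
    h2 (abs_nonneg _) (by positivity)) h3 (abs_nonneg _) (by positivity))).trans (le_of_eq ?_)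
  rw [pow_three]
  simp only [mul_assoc]


/-- A lower bound for `|A log α - B log γ|` when `B > e³⁰`. The parameters of the
interpolation determinant are `K = 320000n`, `L = 8n`, `S = 1600n` with `n = ⌈log B⌉`. -/
theorem two_logs {α γ : ℝ} (Q : QField α γ) (hα : 1 < α) (hγ : 1 < γ) (hγα : γ ≤ α)
    (hlα : Real.log α ≤ 5.3) {A B : ℕ} (hA : A ≤ B) (hAB : A.Coprime B)
    (hB : Real.exp 30 < B)
    (hΛ : |A * Real.log α - B * Real.log γ| ≤ 2000 * Real.exp (-(0.036 * B))) : False := by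
  have hBpos : (0 : ℝ) < B := (Real.exp_pos _).trans hB
  have hB0 : 0 < B := by exact_mod_cast hBpos
  obtain ⟨n, hn⟩ : ∃ n : ℕ, n = ⌈Real.log B⌉₊ := ⟨_, rfl⟩
  have hlB : Real.log B ≤ n := by rw [hn]; exact Nat.le_ceil _
  have hl30 : 30 < Real.log B := by rwa [Real.lt_log_iff_exp_lt hBpos]
  have hn31 : 31 ≤ n := by
    have : (30 : ℝ) < n := hl30.trans_le hlB
    exact_mod_cast this
  have hnr : (31 : ℝ) ≤ n := by exact_mod_cast hn31
  have hnB : (n : ℝ) - 1 < Real.log B := by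
    have := Nat.ceil_lt_add_one (show 0 ≤ Real.log B by linarith)
    rw [← hn] at this
    linarith
  -- `exp (n - 1) ≥ e³⁰ (n / 31)³`
  have hBn : 291000000 * (n : ℝ) ^ 3 ≤ B := by
    have h1 : Real.exp (n - 1) ≤ B := by
      rw [← Real.le_log_iff_exp_le hBpos]; exact hnB.le
    have h2 : Real.exp (n - 1) = Real.exp 1 ^ 30 * Real.exp ((n - 31) / 3) ^ 3 := by
      rw [← Real.exp_nat_mul, ← Real.exp_nat_mul, ← Real.exp_add]
      congr 1; push_cast; ring
    have h3 : (n : ℝ) / 31 ≤ Real.exp ((n - 31) / 3) := by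
      have := Real.add_one_le_exp (((n : ℝ) - 31) / 3)
      linarith
    have h4 : (2.7 : ℝ) ≤ Real.exp 1 := by have := Real.exp_one_gt_d9; linarith
    rw [h2] at h1
    calc 291000000 * (n : ℝ) ^ 3 ≤ 2.7 ^ 30 * (n / 31) ^ 3 := by
          rw [div_pow]
          have : (0 : ℝ) ≤ n ^ 3 := by positivity
          norm_num
          linarith
      _ ≤ Real.exp 1 ^ 30 * Real.exp ((n - 31) / 3) ^ 3 := by gcongr
      _ ≤ B := h1
  have hln : Real.log n ≤ n / 9 + 1.22 := by
    have h1 : Real.log (n / 9) ≤ n / 9 - 1 := Real.log_le_sub_one_of_pos (by positivity)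
    rw [Real.log_div (by positivity) (by norm_num)] at h1
    have h2 : 5 * Real.log 3 ≤ 8 * Real.log 2 := by
      have : Real.log (3 ^ 5) ≤ Real.log (2 ^ 8) := Real.log_le_log (by norm_num) (by norm_num)
      rw [Real.log_pow, Real.log_pow] at this
      exact_mod_cast this
    have h3 : Real.log 9 = 2 * Real.log 3 := by
      rw [show (9 : ℝ) = 3 ^ 2 by norm_num, Real.log_pow]; norm_num
    have := Real.log_two_lt_d9
    linarith
  have hln0 : 0 ≤ Real.log n := Real.log_nonneg (by linarith)
  have hl2 := Real.log_two_lt_d9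
  have hl2' := Real.log_two_gt_d9
  have hpow2 : ∀ (x : ℝ) (k : ℕ), 0 < x → x ≤ 2 ^ k → Real.log x ≤ k * 0.6931471808 := by
    intro x k hx h
    have h1 := Real.log_le_log hx h
    rw [Real.log_pow] at h1
    exact h1.trans (by gcongr)
  have hn0 : (0 : ℝ) < n := by linarith
  refine absurd (two_logs_core Q hα hγ hγα (A := A) (B := B) (K := 320000 * n) (L := 8 * n)
    (S := 1600 * n) hA hAB hB0 ?_ (by omega) (by omega) (by omega) ?_ ?_) (not_le.mpr ?_)
  · have : (1600 * n : ℝ) ≤ B := by nlinarith [sq_nonneg (n : ℝ), mul_pos hn0 hn0]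
    exact_mod_cast this
  · exact le_of_eq (by ring)
  · have h1 : ((320000 * n * (8 * n) : ℕ) : ℝ) * (2 * ((8 * n : ℕ) : ℝ) * ((1600 * n : ℕ) : ℝ)
        * |A * Real.log α - B * Real.log γ|)
        * (4 * (3 * ((1600 * n : ℕ) : ℝ) * B)) ^ (320000 * n * (8 * n))
        ≤ ((320000 * n * (8 * n) : ℕ) : ℝ) * (2 * ((8 * n : ℕ) : ℝ) * ((1600 * n : ℕ) : ℝ)
        * (2000 * Real.exp (-(0.036 * B))))
        * (4 * (3 * ((1600 * n : ℕ) : ℝ) * B)) ^ (320000 * n * (8 * n)) := by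
      gcongr
    refine h1.trans ?_
    push_cast
    rw [show (320000 * n * (8 * n) : ℝ) * (2 * (8 * n) * (1600 * n)
        * (2000 * Real.exp (-(0.036 * B)))) * (4 * (3 * (1600 * n) * B)) ^ (320000 * n * (8 * n))
        = (131072000000000 * n ^ 4 * (19200 * n * B) ^ (2560000 * n ^ 2))
          / Real.exp (0.036 * B) by
      rw [Real.exp_neg, div_eq_mul_inv, show 320000 * n * (8 * n) = 2560000 * n ^ 2 by ring]
      ring]
    rw [div_le_one (Real.exp_pos _), ← Real.log_le_iff_le_exp (by positivity),
      Real.log_mul (by positivity) (by positivity), Real.log_mul (by positivity) (by positivity),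
      Real.log_pow, Real.log_pow, Real.log_mul (by positivity) (by positivity),
      Real.log_mul (by positivity) (by positivity)]
    have e1 := hpow2 131072000000000 47 (by norm_num) (by norm_num)
    have e2 := hpow2 19200 15 (by norm_num) (by norm_num)
    push_cast at e1 e2 ⊢
    have e3 : Real.log 19200 + Real.log n + Real.log B ≤ 1.52 * n := by linarith
    have e4 : 2560000 * (n : ℝ) ^ 2 * (Real.log 19200 + Real.log n + Real.log B)
        ≤ 2560000 * (n : ℝ) ^ 2 * (1.52 * n) := by gcongr
    have e5 : (31 : ℝ) * 31 * n ≤ n ^ 3 := by nlinarith [mul_pos hn0 hn0]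
    nlinarith
  · have e1 := hpow2 5 3 (by norm_num) (by norm_num)
    have e2 := hpow2 4800 13 (by norm_num) (by norm_num)
    have e3 := hpow2 2560000 22 (by norm_num) (by norm_num)
    have e4 : Real.log 4 = 2 * Real.log 2 := by
      rw [show (4 : ℝ) = 2 ^ 2 by norm_num, Real.log_pow]; norm_num
    push_cast at e1 e2 e3 ⊢
    rw [show (3 * (1600 * n) * B : ℝ) = 4800 * n * B by ring,
      show (320000 * n * (8 * n) : ℝ) = 2560000 * n ^ 2 by ring,
      Real.log_mul (by positivity) hBpos.ne', Real.log_mul (by norm_num) hn0.ne',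
      Real.log_mul (by norm_num) (by positivity), Real.log_pow, e4]
    have f1 : 4 * (Real.log 4800 + Real.log n + Real.log B) + Real.log 5
        ≤ 40 / 9 * n + 43.1 := by linarith
    have f2 : 320000 * (n : ℝ) / 2 * (4 * (Real.log 4800 + Real.log n + Real.log B) + Real.log 5)
        ≤ 320000 * (n : ℝ) / 2 * (40 / 9 * n + 43.1) := by gcongr
    have f3 : 8 * (n : ℝ) / 2 * (21 * Real.log α * (1600 * n))
        ≤ 8 * (n : ℝ) / 2 * (21 * 5.3 * (1600 * n)) := by gcongr
    have f4 : (31 : ℝ) * n ≤ n ^ 2 := by nlinarith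
    have f5 : (2560000 * (n : ℝ) ^ 2 - 1) / 2 * (2 * 0.6931471803)
        ≤ (2560000 * (n : ℝ) ^ 2 - 1) / 2 * (2 * Real.log 2) := by
      have : 0 ≤ (2560000 * (n : ℝ) ^ 2 - 1) / 2 := by nlinarith
      gcongr
    push_cast
    nlinarith

/-! ### Units modulo `⟨α, γ⟩` -/

lemma exp_sub_exp_neg_lt {p : ℝ} (h : |p| < 0.48) : (Real.exp p - Real.exp (-p)) ^ 2 < 1 := by
  have key : Real.exp 0.48 < 1.6175 := by
    have h1 : Real.exp 0.48 ^ 25 = Real.exp 1 ^ 12 := by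
      rw [← Real.exp_nat_mul, ← Real.exp_nat_mul]; norm_num
    have h2 := Real.exp_one_lt_d9
    have h3 : Real.exp 1 ^ 12 < 2.7182818286 ^ 12 := by gcongr
    have h4 : Real.exp 0.48 ^ 25 < 1.6175 ^ 25 := by
      rw [h1]; exact h3.trans (by norm_num)
    exact lt_of_pow_lt_pow_left₀ 25 (by norm_num) h4
  have aux : ∀ r : ℝ, |r| < 0.48 → Real.exp r - Real.exp (-r) < 1 := by
    intro r hr
    have h1 : Real.exp r < 1.6175 := (Real.exp_lt_exp.2 (abs_lt.1 hr).2).trans key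
    have h2 : Real.exp r * Real.exp (-r) = 1 := by rw [← Real.exp_add]; simp
    have h3 := Real.exp_pos r
    have h4 := Real.exp_pos (-r)
    nlinarith
  have h1 := aux p h
  have h2 := aux (-p) (by rwa [abs_neg])
  rw [neg_neg] at h2
  rw [sq_lt_one_iff_abs_lt_one, abs_lt]
  constructor <;> linarith

lemma abs_mul_pow_zpow {x y z : ℝ} (hx : x ≠ 0) (hy : y ≠ 0) (hz : z ≠ 0) (j : ℕ) (a b : ℤ) :
    |x ^ j * y ^ a * z ^ b|
      = Real.exp (j * Real.log |x| + a * Real.log |y| + b * Real.log |z|) := by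
  rw [abs_mul, abs_mul, abs_pow, abs_zpow, abs_zpow, Real.exp_add, Real.exp_add, Real.exp_nat_mul,
    Real.exp_log (abs_pos.2 hx), ← Real.rpow_intCast, ← Real.rpow_intCast,
    Real.rpow_def_of_pos (abs_pos.2 hy), Real.rpow_def_of_pos (abs_pos.2 hz)]
  simp only [mul_comm]

set_option maxHeartbeats 1000000 in
/-- A unit of relative norm `±1` over the quadratic subfield has a power of small exponent in
`±⟨α, γ⟩`: by the pigeonhole principle some power lies so close to the lattice spanned by
`α` and `γ` that the norm of `ν² - 1` is less than one. -/
theorem unit_rel {α γ : ℝ} (Q : QField α γ) (hα : 1 < α) (hγ : 1 < γ) {μ : Q.F}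
    (hμ0 : μ ≠ 0) (hμ : IsIntegral ℤ μ)
    (h02 : |Q.φ μ| * |Q.φ (Q.σ (Q.σ μ))| = 1)
    (h13 : |Q.φ (Q.σ μ)| * |Q.φ (Q.σ (Q.σ (Q.σ μ)))| = 1)
    {G : ℕ} (hG : 0 < G) (hcl : Real.log α + Real.log γ ≤ 0.48 * G) :
    ∃ j : ℕ, 1 ≤ j ∧ j ≤ G ^ 2 ∧ ∃ a b : ℤ,
      j * Real.log |Q.φ μ| = a * Real.log α + b * Real.log γ ∧
      j * Real.log |Q.φ (Q.σ μ)| = -a * Real.log γ + b * Real.log α := by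
  have hc0 : 0 < Real.log α := Real.log_pos hα
  have hl0 : 0 < Real.log γ := Real.log_pos hγ
  set c := Real.log α with hc
  set l := Real.log γ with hl
  set P := Real.log |Q.φ μ| with hP
  set R := Real.log |Q.φ (Q.σ μ)| with hR
  set x := (P * c - R * l) / (c ^ 2 + l ^ 2) with hx
  set y := (P * l + R * c) / (c ^ 2 + l ^ 2) with hy
  have hd : 0 < c ^ 2 + l ^ 2 := by positivity
  have hPx : P = x * c + y * l := by rw [hx, hy]; field_simp; ring
  have hRy : R = -x * l + y * c := by rw [hx, hy]; field_simp; ring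
  have hGr : (0 : ℝ) < G := by exact_mod_cast hG
  have hbox : ∀ r : ℝ, ⌊Int.fract r * G⌋₊ < G := by
    intro r
    rw [Nat.floor_lt (mul_nonneg (Int.fract_nonneg r) hGr.le)]
    have := Int.fract_lt_one r
    nlinarith
  let f : Fin (G ^ 2 + 1) → Fin G × Fin G := fun k =>
    (⟨⌊Int.fract ((k : ℕ) * x) * G⌋₊, hbox _⟩, ⟨⌊Int.fract ((k : ℕ) * y) * G⌋₊, hbox _⟩)
  have hcard : Fintype.card (Fin G × Fin G) < Fintype.card (Fin (G ^ 2 + 1)) := by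
    simp [pow_two]
  obtain ⟨k, k', hne, hfk⟩ := Fintype.exists_ne_map_eq_of_card_lt f hcard
  wlog hlt : k < k' generalizing k k'
  · exact this k' k hne.symm hfk.symm (lt_of_le_of_ne (not_lt.1 hlt) hne.symm)
  have hclose : ∀ r s : ℝ, ⌊Int.fract r * G⌋₊ = ⌊Int.fract s * G⌋₊ →
      |(s - r) - ((⌊s⌋ - ⌊r⌋ : ℤ) : ℝ)| < 1 / G := by
    intro r s h
    have h1 := Nat.floor_le (mul_nonneg (Int.fract_nonneg r) hGr.le)
    have h2 := Nat.lt_floor_add_one (Int.fract r * G)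
    have h3 := Nat.floor_le (mul_nonneg (Int.fract_nonneg s) hGr.le)
    have h4 := Nat.lt_floor_add_one (Int.fract s * G)
    rw [← h] at h3 h4
    have h5 : (s - r) - ((⌊s⌋ - ⌊r⌋ : ℤ) : ℝ) = Int.fract s - Int.fract r := by
      push_cast; unfold Int.fract; ring
    have h6 : |Int.fract s - Int.fract r| * G = |(Int.fract s - Int.fract r) * G| := by
      rw [abs_mul, abs_of_pos hGr]
    rw [h5, lt_div_iff₀ hGr, h6, abs_lt]
    constructor <;> nlinarith
  have hX := hclose ((k : ℕ) * x) ((k' : ℕ) * x) (by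
    have := congrArg (fun z => (z.1 : ℕ)) hfk; exact this)
  have hY := hclose ((k : ℕ) * y) ((k' : ℕ) * y) (by
    have := congrArg (fun z => (z.2 : ℕ)) hfk; exact this)
  obtain ⟨a, ha⟩ : ∃ a : ℤ, a = ⌊((k' : ℕ) : ℝ) * x⌋ - ⌊((k : ℕ) : ℝ) * x⌋ := ⟨_, rfl⟩
  obtain ⟨b, hb⟩ : ∃ b : ℤ, b = ⌊((k' : ℕ) : ℝ) * y⌋ - ⌊((k : ℕ) : ℝ) * y⌋ := ⟨_, rfl⟩
  obtain ⟨j, hj⟩ : ∃ j : ℕ, j = (k' : ℕ) - (k : ℕ) := ⟨_, rfl⟩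
  have hkk : (k : ℕ) < (k' : ℕ) := hlt
  have hk' := k'.2
  have hjr : (j : ℝ) = (k' : ℕ) - (k : ℕ) := by rw [hj, Nat.cast_sub hkk.le]
  rw [← ha, ← sub_mul, ← hjr] at hX
  rw [← hb, ← sub_mul, ← hjr] at hY
  refine ⟨j, by omega, by omega, a, b, ?_⟩
  set u := (j : ℝ) * x - a with hu
  set v := (j : ℝ) * y - b with hv
  have hbd : ∀ u v : ℝ, |u| < 1 / G → |v| < 1 / G → |u * c + v * l| < 0.48 := by
    intro u v hu hv
    calc |u * c + v * l| ≤ |u| * c + |v| * l := by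
          refine (abs_add_le _ _).trans ?_
          rw [abs_mul, abs_mul, abs_of_pos hc0, abs_of_pos hl0]
      _ < 1 / G * c + 1 / G * l := by gcongr
      _ = (c + l) / G := by ring
      _ ≤ 0.48 := by rw [div_le_iff₀ hGr]; exact hcl
  have hp := hbd u v hX hY
  have hq := hbd v (-u) hY (by rwa [abs_neg])
  set p := u * c + v * l with hpdef
  set q := v * c + -u * l with hqdef
  -- the nearly trivial unit
  let ν : Q.F := μ ^ j * Q.a ^ (-a) * Q.g ^ (-b)
  have ha0 := Q.a_ne hα
  have hg0 := Q.g_ne hγ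
  have hzint : ∀ z : Q.F, IsIntegral ℤ z → IsIntegral ℤ z⁻¹ → ∀ m : ℤ, IsIntegral ℤ (z ^ m) := by
    intro z h1 h2 m
    obtain ⟨n, rfl | rfl⟩ := m.eq_nat_or_neg
    · rw [zpow_natCast]; exact h1.pow n
    · rw [zpow_neg, zpow_natCast, ← inv_pow]; exact h2.pow n
  have hνint : IsIntegral ℤ ν :=
    ((hμ.pow j).mul (hzint _ Q.int_a Q.int_a' _)).mul (hzint _ Q.int_g Q.int_g' _)
  have hψ : ∀ ψ : Q.F →+* ℝ, |ψ ν| = Real.exp (j * Real.log |ψ μ| - a * Real.log |ψ Q.a|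
      - b * Real.log |ψ Q.g|) := by
    intro ψ
    have hne : ∀ z : Q.F, z ≠ 0 → ψ z ≠ 0 := fun z hz => (map_ne_zero ψ).2 hz
    simp only [ν, map_mul, map_pow, map_zpow₀]
    rw [abs_mul_pow_zpow (hne _ hμ0) (hne _ ha0) (hne _ hg0)]
    congr 1
    push_cast; ring
  have hμ2 : Real.log |Q.φ (Q.σ (Q.σ μ))| = -P := by
    rw [eq_inv_of_mul_eq_one_right h02, Real.log_inv]
  have hμ3 : Real.log |Q.φ (Q.σ (Q.σ (Q.σ μ)))| = -R := by
    rw [eq_inv_of_mul_eq_one_right h13, Real.log_inv]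
  have hαa : |α| = α := abs_of_pos (by linarith)
  have hγa : |γ| = γ := abs_of_pos (by linarith)
  have n0 : |Q.φ ν| = Real.exp p := by
    rw [hψ]; congr 1
    rw [Q.φa, Q.φg, hαa, hγa, ← hP, ← hc, ← hl, hPx, hpdef, hu, hv]; ring
  have n1 : |Q.φ (Q.σ ν)| = Real.exp q := by
    have := hψ (Q.φ.comp Q.σ)
    simp only [RingHom.comp_apply] at this
    rw [this]; congr 1
    rw [Q.σa, Q.σg, map_inv₀, map_neg, Q.φa, Q.φg, abs_neg, abs_inv, hαa, hγa, Real.log_inv,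
      ← hR, ← hc, ← hl, hRy, hqdef, hu, hv]; ring
  have n2 : |Q.φ (Q.σ (Q.σ ν))| = Real.exp (-p) := by
    have := hψ (Q.φ.comp (Q.σ.comp Q.σ))
    simp only [RingHom.comp_apply] at this
    rw [this]; congr 1
    simp only [Q.σa, Q.σg, map_inv₀, map_neg, Q.φa, Q.φg, abs_neg, abs_inv, hαa, hγa,
      Real.log_inv, hμ2]
    rw [← hc, ← hl, hPx, hpdef, hu, hv]; ring
  have n3 : |Q.φ (Q.σ (Q.σ (Q.σ ν)))| = Real.exp (-q) := by
    have := hψ (Q.φ.comp (Q.σ.comp (Q.σ.comp Q.σ)))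
    simp only [RingHom.comp_apply] at this
    rw [this]; congr 1
    simp only [Q.σa, Q.σg, map_inv₀, map_neg, Q.φa, Q.φg, inv_inv, abs_neg, abs_inv, hαa, hγa,
      Real.log_inv, hμ3]
    rw [← hc, ← hl, hRy, hqdef, hu, hv]; ring
  have hsq : ∀ r s : ℝ, |r| = Real.exp s → r ^ 2 - 1 = Real.exp (2 * s) - 1 := by
    intro r s h
    rw [← sq_abs, h, ← Real.exp_nat_mul]; norm_num
  have hν1 : ν ^ 2 - 1 = 0 := by
    by_contra hne
    have hli := Q.liouville _ ((hνint.pow 2).sub isIntegral_one) hne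
    simp only [map_sub, map_pow, map_one] at hli
    rw [hsq _ _ n0, hsq _ _ n1, hsq _ _ n2, hsq _ _ n3] at hli
    have hfac : ∀ s : ℝ, |Real.exp (2 * s) - 1| * |Real.exp (2 * -s) - 1|
        = (Real.exp s - Real.exp (-s)) ^ 2 := by
      intro s
      have e1 : Real.exp (2 * s) = Real.exp s ^ 2 := by rw [← Real.exp_nat_mul]; norm_num
      have e2 : Real.exp (2 * -s) = Real.exp (-s) ^ 2 := by rw [← Real.exp_nat_mul]; norm_num
      have e3 : Real.exp s * Real.exp (-s) = 1 := by rw [← Real.exp_add]; simp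
      rw [← abs_mul, e1, e2, show (Real.exp s ^ 2 - 1) * (Real.exp (-s) ^ 2 - 1)
        = (Real.exp s * Real.exp (-s)) ^ 2 + 1 - Real.exp s ^ 2 - Real.exp (-s) ^ 2 by ring,
        e3, show (1 : ℝ) ^ 2 + 1 - Real.exp s ^ 2 - Real.exp (-s) ^ 2
        = 2 * 1 - Real.exp s ^ 2 - Real.exp (-s) ^ 2 by ring, ← e3,
        show 2 * (Real.exp s * Real.exp (-s)) - Real.exp s ^ 2 - Real.exp (-s) ^ 2
        = -(Real.exp s - Real.exp (-s)) ^ 2 by ring, abs_neg, abs_of_nonneg (sq_nonneg _)]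
    have hp1 := exp_sub_exp_neg_lt hp
    have hq1 := exp_sub_exp_neg_lt hq
    have hprod : |Real.exp (2 * p) - 1| * |Real.exp (2 * q) - 1| * |Real.exp (2 * -p) - 1|
        * |Real.exp (2 * -q) - 1| = (Real.exp p - Real.exp (-p)) ^ 2
          * (Real.exp q - Real.exp (-q)) ^ 2 := by
      rw [← hfac, ← hfac]; ring
    rw [hprod] at hli
    nlinarith [sq_nonneg (Real.exp p - Real.exp (-p)), sq_nonneg (Real.exp q - Real.exp (-q))]
  have hz : ∀ ψ : Q.F →+* ℝ, ∀ s, |ψ ν| = Real.exp s → s = 0 := by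
    intro ψ s h
    have h1 := congrArg ψ hν1
    rw [map_sub, map_pow, map_one, map_zero, hsq _ _ h] at h1
    have h2 : Real.exp (2 * s) = 1 := by linarith
    have := Real.exp_eq_one_iff _ |>.1 h2
    linarith
  have hp0 := hz Q.φ p n0
  have hq0 := hz (Q.φ.comp Q.σ) q n1
  constructor
  · rw [hPx]
    have : p = j * (x * c + y * l) - (a * c + b * l) := by rw [hpdef, hu, hv]; ring
    linarith
  · rw [hRy]
    have : q = j * (-x * l + y * c) - (-a * l + b * c) := by rw [hqdef, hu, hv]; ring
    linarith

/-! ### From a solution to a unit close to `1` -/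

lemma QField.isIntegral_σ {α γ : ℝ} (Q : QField α γ) {z : Q.F} (h : IsIntegral ℤ z) :
    IsIntegral ℤ (Q.σ z) := h.map Q.σ.toIntAlgHom

/-- The relation among logarithms obtained from a unit `μ` with `|μ|` close to `1` and a large
first conjugate `H`. -/
lemma rel_of_unit {α γ : ℝ} (Q : QField α γ) (hα : 1 < α) (hγ : 1 < γ) {μ : Q.F} {r H : ℝ}
    (hμ : IsIntegral ℤ μ)
    (h02 : |Q.φ μ| * |Q.φ (Q.σ (Q.σ μ))| = 1)
    (h13 : |Q.φ (Q.σ μ)| * |Q.φ (Q.σ (Q.σ (Q.σ μ)))| = 1)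
    (hr : |Q.φ μ| = r) (hH : |Q.φ (Q.σ μ)| = H) (h8 : 8 ≤ H) (hrH : |r - 1| * H ≤ 4)
    {G : ℕ} (hG : 0 < G) (hcl : Real.log α + Real.log γ ≤ 0.48 * G) :
    ∃ j : ℕ, 1 ≤ j ∧ j ≤ G ^ 2 ∧ ∃ A b : ℤ,
      |A * Real.log α - b * Real.log γ| ≤ 8 * j / H ∧
      j * Real.log H = A * Real.log γ + b * Real.log α := by
  have hμ0 : μ ≠ 0 := by
    rintro rfl
    simp at h02
  obtain ⟨j, hj1, hj2, a, b, h1, h2⟩ := unit_rel Q hα hγ hμ0 hμ h02 h13 hG hcl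
  rw [hr] at h1
  rw [hH] at h2
  refine ⟨j, hj1, hj2, -a, b, ?_, ?_⟩
  · have hH0 : 0 < H := by linarith
    have hr1 : |r - 1| ≤ 4 / H := by rwa [le_div_iff₀ hH0]
    have h4 : 4 / H ≤ 1 / 2 := by rw [div_le_iff₀ hH0]; linarith
    have hr2 := abs_le.1 (hr1.trans h4)
    have hr0 : 0 < r := by linarith
    have hlog : |Real.log r| ≤ 8 / H := by
      have l1 := Real.log_le_sub_one_of_pos hr0
      have l2 := Real.one_sub_inv_le_log_of_pos hr0
      have l3 : -(2 * |r - 1|) ≤ 1 - r⁻¹ := by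
        have : 1 - r⁻¹ = (r - 1) / r := by field_simp
        rw [this, le_div_iff₀ hr0]
        have := neg_abs_le (r - 1)
        nlinarith [abs_nonneg (r - 1)]
      have l4 := le_abs_self (r - 1)
      have l5 : 2 * (4 / H) = 8 / H := by ring
      rw [abs_le]
      constructor
      · linarith
      · linarith [abs_nonneg (r - 1)]
    have : ((-a : ℤ) : ℝ) * Real.log α - b * Real.log γ = -(j * Real.log r) := by
      rw [h1]; push_cast; ring
    rw [this, abs_neg, abs_mul, Nat.abs_cast]
    calc (j : ℝ) * |Real.log r| ≤ j * (8 / H) := by gcongr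
      _ = 8 * j / H := by ring
  · rw [h2]; push_cast; ring

/-- The form splits into real linear factors. -/
lemma F_factor {α γ t : ℝ} (hα : 1 < α) (hroot : α ^ 4 - t * α ^ 3 - 6 * α ^ 2 + t * α + 1 = 0)
    (hγ : γ * (α - 1) = α + 1) (x y : ℝ) :
    x ^ 4 - t * x ^ 3 * y - 6 * x ^ 2 * y ^ 2 + t * x * y ^ 3 + y ^ 4
      = (x - α * y) * (x - γ⁻¹ * y) * (x + α⁻¹ * y) * (x + γ * y) := by
  have h1 : α - 1 ≠ 0 := by linarith
  have h2 : α + 1 ≠ 0 := by linarith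
  have h0 : α ≠ 0 := by linarith
  have hg : γ = (α + 1) / (α - 1) := by field_simp; linarith
  have h3 : α ^ 2 - 1 ≠ 0 := by nlinarith
  have ht : t = (α ^ 4 - 6 * α ^ 2 + 1) / (α * (α ^ 2 - 1)) := by
    rw [eq_div_iff (mul_ne_zero h0 h3)]; linarith
  rw [hg, ht]
  field_simp
  ring

/-- The unit attached to a solution: up to sign it is `γ σ(β) / σ³(β)`, where `β = x - α y`. -/
def QField.unit {α γ : ℝ} (Q : QField α γ) (x y : ℤ) : Q.F :=
  Q.g * Q.σ (x - Q.a * y) ^ 2 * (x - Q.a * y) * Q.σ (Q.σ (x - Q.a * y))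

lemma QField.isIntegral_unit {α γ : ℝ} (Q : QField α γ) (x y : ℤ) : IsIntegral ℤ (Q.unit x y) := by
  have hZ : ∀ m : ℤ, IsIntegral ℤ (m : Q.F) := fun m => by
    simpa using isIntegral_algebraMap (R := ℤ) (A := Q.F) (x := m)
  have hb : IsIntegral ℤ ((x : Q.F) - Q.a * y) := (hZ x).sub (Q.int_a.mul (hZ y))
  have hb1 := Q.isIntegral_σ hb
  exact ((Q.int_g.mul (hb1.pow 2)).mul hb).mul (Q.isIntegral_σ hb1)

lemma QField.abs_unit {α γ : ℝ} (Q : QField α γ) (hα : 1 < α) (hγ : 1 < γ) (x y : ℤ) :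
    |Q.φ (Q.unit x y)|
      = γ * |x - γ⁻¹ * y| ^ 2 * |x - α * y| * |x + α⁻¹ * y| ∧
    |Q.φ (Q.σ (Q.unit x y))|
      = α * |x + α⁻¹ * y| ^ 2 * |x - γ⁻¹ * y| * |x + γ * y| ∧
    |Q.φ (Q.σ (Q.σ (Q.unit x y)))|
      = γ⁻¹ * |x + γ * y| ^ 2 * |x + α⁻¹ * y| * |x - α * y| ∧
    |Q.φ (Q.σ (Q.σ (Q.σ (Q.unit x y))))|
      = α⁻¹ * |x - α * y| ^ 2 * |x + γ * y| * |x - γ⁻¹ * y| ∧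
    |Q.φ (Q.σ (Q.σ (Q.σ (Q.σ (Q.unit x y)))))|
      = γ * |x - γ⁻¹ * y| ^ 2 * |x - α * y| * |x + α⁻¹ * y| := by
  have hαa : |α| = α := abs_of_pos (by linarith)
  have hγa : |γ| = γ := abs_of_pos (by linarith)
  unfold QField.unit
  simp only [map_mul, map_pow, map_sub, map_intCast, Q.σa, Q.σg, map_inv₀, map_neg, Q.φa, Q.φg,
    abs_mul, abs_pow, abs_neg, abs_inv, hαa, hγa, inv_neg, inv_inv, neg_mul, sub_neg_eq_add,
    neg_neg]
  simp [Q.σa, Q.σg, Q.φa, Q.φg, ← sub_eq_add_neg]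

/-- Solutions with `x > y > 0`, i.e. `x / y` close to `α`. -/
lemma rel_case_zero {α γ t : ℝ} (Q : QField α γ) (hα : 2 ≤ α) (hγ : 1 < γ)
    (hroot : α ^ 4 - t * α ^ 3 - 6 * α ^ 2 + t * α + 1 = 0)
    (hγα : γ * (α - 1) = α + 1) {x y : ℤ} (hy : 0 < y) (hxy : y < x)
    (hF : |(x : ℝ) ^ 4 - t * x ^ 3 * y - 6 * x ^ 2 * y ^ 2 + t * x * y ^ 3 + y ^ 4| = 1)
    {H : ℝ} (hH : H = α * (x + α⁻¹ * y) ^ 2 * (x - γ⁻¹ * y) * (x + γ * y)) (h8 : 8 ≤ H)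
    {G : ℕ} (hG : 0 < G) (hcl : Real.log α + Real.log γ ≤ 0.48 * G) :
    ∃ j : ℕ, 1 ≤ j ∧ j ≤ G ^ 2 ∧ ∃ A b : ℤ,
      |A * Real.log α - b * Real.log γ| ≤ 8 * j / H ∧
      j * Real.log H = A * Real.log γ + b * Real.log α := by
  have hα1 : 1 < α := by linarith
  obtain ⟨e0, e1, e2, e3, -⟩ := Q.abs_unit hα1 hγ x y
  have hyr : (0 : ℝ) < y := by exact_mod_cast hy
  have hxr : (y : ℝ) < x := by exact_mod_cast hxy
  have hgi : γ⁻¹ ≤ 1 := inv_le_one_of_one_le₀ hγ.le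
  have hb1 : 0 < (x : ℝ) - γ⁻¹ * y := by nlinarith
  have hx0 : (0 : ℝ) < x := by linarith
  have hy0 : (0 : ℝ) < y := by linarith
  have hb2 : 0 < (x : ℝ) + α⁻¹ * y := by positivity
  have hb3 : 0 < (x : ℝ) + γ * y := by positivity
  have hb23 : (x : ℝ) + α⁻¹ * y ≤ x + γ * y := by
    have : α⁻¹ ≤ 1 := inv_le_one_of_one_le₀ hα1.le
    nlinarith
  rw [F_factor hα1 hroot hγα, abs_mul, abs_mul, abs_mul, abs_of_pos hb1, abs_of_pos hb2,
    abs_of_pos hb3] at hF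
  rw [abs_of_pos hb1, abs_of_pos hb2] at e0
  rw [abs_of_pos hb1, abs_of_pos hb2, abs_of_pos hb3] at e1
  rw [abs_of_pos hb2, abs_of_pos hb3] at e2
  rw [abs_of_pos hb1, abs_of_pos hb3] at e3
  have hlin : γ * ((x : ℝ) - γ⁻¹ * y) - (x + γ * y) = (γ - 1) * (x - α * y) := by
    have : γ * γ⁻¹ = 1 := by field_simp
    linear_combination (-(y : ℝ)) * this + (y : ℝ) * hγα
  have hg1 : α * (γ - 1) ≤ 4 := by nlinarith
  obtain ⟨b0, h0⟩ : ∃ b0, b0 = |(x : ℝ) - α * y| := ⟨_, rfl⟩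
  have habs : |γ * ((x : ℝ) - γ⁻¹ * y) - (x + γ * y)| = (γ - 1) * b0 := by
    rw [hlin, abs_mul, abs_of_pos (by linarith), h0]
  rw [← h0] at hF e0 e2 e3
  generalize (x : ℝ) - γ⁻¹ * y = b1 at *
  generalize (x : ℝ) + α⁻¹ * y = b2 at *
  generalize (x : ℝ) + γ * y = b3 at *
  have hg0 : γ ≠ 0 := by linarith
  have ha0 : α ≠ 0 := by linarith
  refine rel_of_unit Q hα1 hγ (Q.isIntegral_unit x y) (r := γ * b1 / b3) (H := H) ?_ ?_ ?_ ?_ h8 ?_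
    hG hcl
  · rw [e0, e2]
    calc _ = (b0 * b1 * b2 * b3) ^ 2 := by field_simp
      _ = 1 := by rw [hF]; norm_num
  · rw [e1, e3]
    calc _ = (b0 * b1 * b2 * b3) ^ 2 := by field_simp
      _ = 1 := by rw [hF]; norm_num
  · rw [e0, eq_div_iff hb3.ne']
    linear_combination γ * b1 * hF
  · rw [e1, hH]
  · rw [show γ * b1 / b3 - 1 = (γ * b1 - b3) / b3 by field_simp, abs_div, habs, abs_of_pos hb3, hH]
    calc (γ - 1) * b0 / b3 * (α * b2 ^ 2 * b1 * b3)
        = α * (γ - 1) * b2 / b3 * (b0 * b1 * b2 * b3) := by field_simp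
      _ = α * (γ - 1) * (b2 / b3) := by rw [hF]; ring
      _ ≤ α * (γ - 1) * 1 := by
          have : 0 ≤ α * (γ - 1) := mul_nonneg (by linarith) (by linarith)
          gcongr
          rw [div_le_one hb3]; exact hb23
      _ ≤ 4 := by linarith

/-- Solutions with `y > x > 0`, i.e. `x / y` close to `1 / γ`. -/
lemma rel_case_one {α γ t : ℝ} (Q : QField α γ) (hα : 2 ≤ α) (hγ : 1 < γ)
    (hroot : α ^ 4 - t * α ^ 3 - 6 * α ^ 2 + t * α + 1 = 0)
    (hγα : γ * (α - 1) = α + 1) {x y : ℤ} (hx : 0 < x) (hxy : x < y)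
    (hF : |(x : ℝ) ^ 4 - t * x ^ 3 * y - 6 * x ^ 2 * y ^ 2 + t * x * y ^ 3 + y ^ 4| = 1)
    {H : ℝ} (hH : H = γ⁻¹ * (x + γ * y) ^ 2 * (x + α⁻¹ * y) * (α * y - x)) (h8 : 8 ≤ H)
    {G : ℕ} (hG : 0 < G) (hcl : Real.log α + Real.log γ ≤ 0.48 * G) :
    ∃ j : ℕ, 1 ≤ j ∧ j ≤ G ^ 2 ∧ ∃ A b : ℤ,
      |A * Real.log α - b * Real.log γ| ≤ 8 * j / H ∧
      j * Real.log H = A * Real.log γ + b * Real.log α := by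
  have hα1 : 1 < α := by linarith
  obtain ⟨-, e0, e1, e2, e3⟩ := Q.abs_unit hα1 hγ x y
  have hxr : (0 : ℝ) < x := by exact_mod_cast hx
  have hyr : (x : ℝ) < y := by exact_mod_cast hxy
  have hb0 : 0 < α * y - x := by nlinarith
  have hx0 : (0 : ℝ) < x := by linarith
  have hy0 : (0 : ℝ) < y := by linarith
  have hb2 : 0 < (x : ℝ) + α⁻¹ * y := by positivity
  have hb3 : 0 < (x : ℝ) + γ * y := by positivity
  have hb30 : (α - 1) * ((x : ℝ) + γ * y) ≤ 4 * (α * y - x) := by nlinarith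
  have hneg : |(x : ℝ) - α * y| = α * y - x := by
    rw [abs_of_neg (by linarith)]; ring
  rw [F_factor hα1 hroot hγα, abs_mul, abs_mul, abs_mul, hneg, abs_of_pos hb2,
    abs_of_pos hb3] at hF
  rw [abs_of_pos hb2, abs_of_pos hb3] at e0
  rw [hneg, abs_of_pos hb2, abs_of_pos hb3] at e1
  rw [hneg, abs_of_pos hb3] at e2
  rw [hneg, abs_of_pos hb2] at e3
  have hlin : α * ((x : ℝ) + α⁻¹ * y) - (α * y - x) = (α + 1) * (x - γ⁻¹ * y) := by
    have h1 : γ * γ⁻¹ = 1 := by field_simp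
    have h2 : α * α⁻¹ = 1 := by field_simp
    linear_combination (y : ℝ) * h2 + (y : ℝ) * (α - 1) * h1 - (y : ℝ) * γ⁻¹ * hγα
  obtain ⟨b1, h1⟩ : ∃ b1, b1 = |(x : ℝ) - γ⁻¹ * y| := ⟨_, rfl⟩
  have habs : |α * ((x : ℝ) + α⁻¹ * y) - (α * y - x)| = (α + 1) * b1 := by
    rw [hlin, abs_mul, abs_of_pos (by linarith), h1]
  rw [← h1] at hF e0 e2 e3
  generalize α * (y : ℝ) - x = b0 at *
  generalize (x : ℝ) + α⁻¹ * y = b2 at *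
  generalize (x : ℝ) + γ * y = b3 at *
  have hg0 : γ ≠ 0 := by linarith
  have ha0 : α ≠ 0 := by linarith
  refine rel_of_unit Q hα1 hγ (Q.isIntegral_σ (Q.isIntegral_unit x y)) (r := α * b2 / b0)
    (H := H) ?_ ?_ ?_ ?_ h8 ?_ hG hcl
  · rw [e0, e2]
    calc _ = (b0 * b1 * b2 * b3) ^ 2 := by field_simp
      _ = 1 := by rw [hF]; norm_num
  · rw [e1, e3]
    calc _ = (b0 * b1 * b2 * b3) ^ 2 := by field_simp
      _ = 1 := by rw [hF]; norm_num
  · rw [e0, eq_div_iff hb0.ne']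
    linear_combination α * b2 * hF
  · rw [e1, hH]
  · rw [show α * b2 / b0 - 1 = (α * b2 - b0) / b0 by field_simp, abs_div, habs, abs_of_pos hb0, hH]
    have hga : γ⁻¹ * (α + 1) = α - 1 := by rw [← hγα]; field_simp
    calc (α + 1) * b1 / b0 * (γ⁻¹ * b3 ^ 2 * b2 * b0)
        = (γ⁻¹ * (α + 1)) * b3 / b0 * (b0 * b1 * b2 * b3) := by field_simp
      _ = (α - 1) * b3 / b0 := by rw [hF, hga]; ring
      _ ≤ 4 := by rw [div_le_iff₀ hb0]; exact hb30

/-! ### Certified enclosures of logarithms -/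

/-- The tail `∑ₖ z²ᵏ / (2(i+k)+1)` of the series of `artanh z / z`. -/
noncomputable def artTail (z : ℝ) (i : ℕ) : ℝ := ∑' k : ℕ, (z ^ 2) ^ k / (2 * (i + k : ℕ) + 1)

lemma artTail_summable {z : ℝ} (hz : z ^ 2 ≤ 1 / 2) (i : ℕ) :
    Summable fun k : ℕ => (z ^ 2) ^ k / (2 * (i + k : ℕ) + 1 : ℝ) := by
  refine Summable.of_nonneg_of_le (fun k => by positivity) (fun k => ?_)
    (summable_geometric_of_lt_one (sq_nonneg z) (by linarith : z ^ 2 < 1))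
  refine div_le_self (by positivity) ?_
  have : (0 : ℝ) ≤ ((i + k : ℕ) : ℝ) := by positivity
  linarith

lemma artTail_succ {z : ℝ} (hz : z ^ 2 ≤ 1 / 2) (i : ℕ) :
    artTail z i = 1 / (2 * i + 1) + z ^ 2 * artTail z (i + 1) := by
  unfold artTail
  rw [(artTail_summable hz i).tsum_eq_zero_add, ← tsum_mul_left]
  have h0 : (z ^ 2) ^ 0 / (2 * ((i + 0 : ℕ) : ℝ) + 1) = 1 / (2 * i + 1) := by simp
  rw [h0]
  refine congrArg _ (tsum_congr fun k => ?_)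
  rw [pow_succ, show i + (k + 1) = i + 1 + k by ring]
  ring

lemma artTail_nonneg (z : ℝ) (i : ℕ) : 0 ≤ artTail z i :=
  tsum_nonneg fun k => by positivity

lemma artTail_le {z : ℝ} (hz : z ^ 2 ≤ 1 / 2) (i : ℕ) : artTail z i ≤ 2 := by
  have h1 : artTail z i ≤ ∑' k : ℕ, (z ^ 2) ^ k := by
    refine (artTail_summable hz i).tsum_le_tsum (fun k => ?_)
      (summable_geometric_of_lt_one (sq_nonneg z) (by linarith : z ^ 2 < 1))
    refine div_le_self (by positivity) ?_
    have : (0 : ℝ) ≤ ((i + k : ℕ) : ℝ) := by positivity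
    linarith
  rw [tsum_geometric_of_lt_one (sq_nonneg z) (by linarith)] at h1
  refine h1.trans ?_
  rw [inv_le_comm₀ (by linarith) (by norm_num)]
  linarith

lemma log_eq_artTail {z : ℝ} (hz : z ^ 2 ≤ 1 / 2) :
    Real.log (1 + z) - Real.log (1 - z) = 2 * z * artTail z 0 := by
  have h1 : |z| < 1 := by
    rw [← sq_lt_one_iff_abs_lt_one]; linarith
  have h := (Real.hasSum_log_sub_log_of_abs_lt_one h1).tsum_eq
  rw [← h, artTail, ← tsum_mul_left]
  refine tsum_congr fun k => ?_
  rw [pow_succ, pow_mul]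
  simp only [Nat.zero_add]
  ring

/-- Fixed-point lower bound for `artTail`, with scale `M` and `z2 ≤ M z²`. -/
def artLo (M z2 : ℕ) : ℕ → ℕ → ℕ
  | 0, _ => 0
  | n + 1, i => M / (2 * i + 1) + z2 * artLo M z2 n (i + 1) / M

/-- Fixed-point upper bound for `artTail`, with scale `M` and `z2 ≥ M z²`. -/
def artHi (M z2 : ℕ) : ℕ → ℕ → ℕ
  | 0, _ => 2 * M
  | n + 1, i => M / (2 * i + 1) + 1 + (z2 * artHi M z2 n (i + 1) / M + 1)

lemma natdiv_le (a b : ℕ) : ((a / b : ℕ) : ℝ) ≤ a / b := Nat.cast_div_le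

lemma le_natdiv (a : ℕ) {b : ℕ} (hb : 0 < b) : (a : ℝ) / b ≤ ((a / b : ℕ) : ℝ) + 1 := by
  rw [div_le_iff₀ (by exact_mod_cast hb)]
  have := Nat.lt_div_mul_add (a := a) hb
  have h2 : a ≤ (a / b + 1) * b := by rw [Nat.add_mul, Nat.one_mul]; exact this.le
  exact_mod_cast h2

lemma artLo_le {M z2 : ℕ} (hM : 0 < M) {z : ℝ} (hz : z ^ 2 ≤ 1 / 2) (h2 : (z2 : ℝ) ≤ M * z ^ 2) :
    ∀ n i, (artLo M z2 n i : ℝ) ≤ M * artTail z i := by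
  have hMr : (0 : ℝ) < M := by exact_mod_cast hM
  intro n
  induction n with
  | zero => intro i; simp only [artLo, Nat.cast_zero]; exact mul_nonneg hMr.le (artTail_nonneg z i)
  | succ n ih =>
    intro i
    have ih' := ih (i + 1)
    rw [artTail_succ hz, artLo]
    push_cast
    have h3 := natdiv_le M (2 * i + 1)
    have h4 := natdiv_le (z2 * artLo M z2 n (i + 1)) M
    push_cast at h3 h4
    have h5 : (z2 : ℝ) * artLo M z2 n (i + 1) / M ≤ M * z ^ 2 * artTail z (i + 1) := by
      rw [div_le_iff₀ hMr]
      calc (z2 : ℝ) * artLo M z2 n (i + 1) ≤ (M * z ^ 2) * (M * artTail z (i + 1)) := by gcongr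
        _ = _ := by ring
    calc _ ≤ (M : ℝ) / (2 * i + 1) + M * z ^ 2 * artTail z (i + 1) :=
          add_le_add h3 (h4.trans h5)
      _ = _ := by ring

lemma le_artHi {M z2 : ℕ} (hM : 0 < M) {z : ℝ} (hz : z ^ 2 ≤ 1 / 2) (h2 : M * z ^ 2 ≤ (z2 : ℝ)) :
    ∀ n i, M * artTail z i ≤ (artHi M z2 n i : ℝ) := by
  have hMr : (0 : ℝ) < M := by exact_mod_cast hM
  intro n
  induction n with
  | zero =>
    intro i; simp only [artHi]; push_cast
    have := artTail_le hz i
    nlinarith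
  | succ n ih =>
    intro i
    have ih' := ih (i + 1)
    rw [artTail_succ hz, artHi]
    push_cast
    have h3 := le_natdiv M (b := 2 * i + 1) (by omega)
    have h4 := le_natdiv (z2 * artHi M z2 n (i + 1)) hM
    push_cast at h3 h4
    have h5 : M * z ^ 2 * artTail z (i + 1) ≤ (z2 : ℝ) * artHi M z2 n (i + 1) / M := by
      rw [le_div_iff₀ hMr]
      calc _ = (M * z ^ 2) * (M * artTail z (i + 1)) := by ring
        _ ≤ _ := mul_le_mul h2 ih' (mul_nonneg hMr.le (artTail_nonneg _ _)) (by positivity)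
    calc _ = (M : ℝ) / (2 * i + 1) + M * z ^ 2 * artTail z (i + 1) := by ring
      _ ≤ _ := add_le_add h3 (h5.trans h4)

/-- Lower bound for `M (log (1+z) - log (1-z))` from `zl ≤ M z`. -/
def logLo (M zl : ℕ) : ℕ := 2 * zl * artLo M (zl * zl / M) 45 0 / M

/-- Upper bound for `M (log (1+z) - log (1-z))` from `zh ≥ M z`. -/
def logHi (M zh : ℕ) : ℕ := 2 * zh * artHi M (zh * zh / M + 1) 45 0 / M + 1

lemma logLo_le {M zl : ℕ} (hM : 0 < M) {z : ℝ} (hz : z ^ 2 ≤ 1 / 2) (h : (zl : ℝ) ≤ M * z) :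
    (logLo M zl : ℝ) ≤ M * (Real.log (1 + z) - Real.log (1 - z)) := by
  have hMr : (0 : ℝ) < M := by exact_mod_cast hM
  have hz0 : 0 ≤ M * z := (Nat.cast_nonneg zl).trans h
  have h2 : ((zl * zl / M : ℕ) : ℝ) ≤ M * z ^ 2 := by
    refine (natdiv_le _ _).trans ?_
    rw [div_le_iff₀ hMr]; push_cast
    calc (zl : ℝ) * zl ≤ (M * z) * (M * z) := by gcongr
      _ = _ := by ring
  have h3 := artLo_le hM hz h2 45 0
  rw [log_eq_artTail hz, logLo]
  refine (natdiv_le _ _).trans ?_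
  rw [div_le_iff₀ hMr]; push_cast
  calc 2 * (zl : ℝ) * artLo M (zl * zl / M) 45 0 ≤ 2 * (M * z) * (M * artTail z 0) := by gcongr
    _ = _ := by ring

lemma le_logHi {M zh : ℕ} (hM : 0 < M) {z : ℝ} (hz0 : 0 ≤ z) (hz : z ^ 2 ≤ 1 / 2)
    (h : M * z ≤ (zh : ℝ)) :
    M * (Real.log (1 + z) - Real.log (1 - z)) ≤ (logHi M zh : ℝ) := by
  have hMr : (0 : ℝ) < M := by exact_mod_cast hM
  have h2 : M * z ^ 2 ≤ ((zh * zh / M + 1 : ℕ) : ℝ) := by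
    have := le_natdiv (zh * zh) hM
    push_cast at this ⊢
    refine le_trans ?_ this
    rw [le_div_iff₀ hMr]
    calc _ = (M * z) * (M * z) := by ring
      _ ≤ (zh : ℝ) * zh := by gcongr
  have h3 := le_artHi hM hz h2 45 0
  rw [log_eq_artTail hz, logHi]
  have := le_natdiv (2 * zh * artHi M (zh * zh / M + 1) 45 0) hM
  push_cast at this ⊢
  refine le_trans ?_ this
  rw [le_div_iff₀ hMr]
  have h4 := mul_nonneg hMr.le (artTail_nonneg z 0)
  calc _ = 2 * (M * z) * (M * artTail z 0) := by ring
    _ ≤ 2 * (zh : ℝ) * artHi M (zh * zh / M + 1) 45 0 := by gcongr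

/-! ### Small linear forms and the end of the argument for bounded parameters -/

/-- Best approximation: if `p/q < l/c < P/Q` are Farey neighbours, then no fraction with denominator
`b < q + Q` gives a smaller linear form than these two. -/
lemma farey {p q P Q : ℤ} {c l ε : ℝ} (hq : 0 ≤ q) (hQ : 0 ≤ Q) (hdet : P * q - p * Q = 1)
    (h1 : ε ≤ q * l - p * c) (h2 : ε ≤ P * c - Q * l) (hε : 0 < ε) (A b : ℤ) (hb : 0 < b)
    (hbq : b < q + Q) : ε ≤ |A * c - b * l| := by
  obtain ⟨m, hm⟩ : ∃ m, m = P * b - Q * A := ⟨_, rfl⟩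
  obtain ⟨n, hn⟩ : ∃ n, n = q * A - p * b := ⟨_, rfl⟩
  have hb' : b = q * m + Q * n := by rw [hm, hn]; linear_combination (-b) * hdet
  have hA' : A = p * m + P * n := by rw [hm, hn]; linear_combination (-A) * hdet
  have key : (A : ℝ) * c - b * l = n * (P * c - Q * l) - m * (q * l - p * c) := by
    rw [hA', hb']; push_cast; ring
  rw [key]
  have h10 : 0 < q * l - p * c := hε.trans_le h1
  have h20 : 0 < P * c - Q * l := hε.trans_le h2
  rcases lt_trichotomy m 0 with hm0 | hm0 | hm0
  · -- then `n ≥ 0`, and both summands have the same sign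
    have hn0 : 0 ≤ n := by
      by_contra hcon
      push Not at hcon
      nlinarith
    have hm1 : (m : ℝ) ≤ -1 := by exact_mod_cast (by omega : m ≤ -1)
    have hn1 : (0 : ℝ) ≤ n := by exact_mod_cast hn0
    refine le_trans ?_ (le_abs_self _)
    nlinarith [mul_nonneg hn1 h20.le]
  · rcases lt_trichotomy n 0 with hn0 | hn0 | hn0
    · have hn1 : (n : ℝ) ≤ -1 := by exact_mod_cast (by omega : n ≤ -1)
      refine le_trans ?_ (neg_le_abs _)
      rw [hm0]; push_cast; nlinarith
    · rw [hm0, hn0] at hb'; omega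
    · have hn1 : (1 : ℝ) ≤ n := by exact_mod_cast hn0
      refine le_trans ?_ (le_abs_self _)
      rw [hm0]; push_cast; nlinarith
  · have hn0 : n ≤ 0 := by
      by_contra hcon
      push Not at hcon
      nlinarith
    have hm1 : (1 : ℝ) ≤ m := by exact_mod_cast hm0
    have hn1 : (n : ℝ) ≤ 0 := by exact_mod_cast hn0
    refine le_trans ?_ (neg_le_abs _)
    nlinarith [mul_nonneg (neg_nonneg.mpr hn1) h20.le]

lemma exp_thirty_lt : Real.exp 30 < 11000000000000 := by
  have h := Real.exp_one_lt_d9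
  have h2 : Real.exp 30 = Real.exp 1 ^ 30 := by rw [← Real.exp_nat_mul]; norm_num
  rw [h2]
  calc Real.exp 1 ^ 30 < (2.7182818286 : ℝ) ^ 30 := by gcongr
    _ < 11000000000000 := by norm_num

lemma exp_neg_fifty_lt : Real.exp (-50) < 0.000000000000000000001 := by
  have h := Real.exp_one_gt_d9
  have h2 : Real.exp 50 = Real.exp 1 ^ 50 := by rw [← Real.exp_nat_mul]; norm_num
  have h3 : (1000000000000000000000 : ℝ) < Real.exp 50 := by
    rw [h2]
    calc (1000000000000000000000 : ℝ) < (2.7182818283 : ℝ) ^ 50 := by norm_num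
      _ < _ := by gcongr
  rw [Real.exp_neg, inv_lt_comm₀ (Real.exp_pos _) (by norm_num)]
  refine lt_of_eq_of_lt (by norm_num) h3

set_option maxHeartbeats 1000000 in
/-- No relation between the logarithms as produced by a solution of large height `H` exists: it
would be a linear form too small for the Farey neighbours of `log γ / log α` when `b` is small,
and too small for the lower bound for linear forms in two logarithms when `b` is large. -/
lemma no_rel {α γ : ℝ} (Q : QField α γ) (hα : 1 < α) (hγ : 1 < γ) (hγα : γ ≤ α)
    (hlα : Real.log α ≤ 5.3) {J : ℕ} (hJ0 : 1 ≤ J) (hJ : J ≤ 144) (hcJ : 0.036 * J ≤ Real.log α)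
    {B1 : ℕ} (hB1 : 50 * (J : ℝ) ≤ B1 * Real.log α) {ε1 : ℝ}
    (hF1 : ∀ A b : ℤ, 0 < b → b ≤ B1 → ε1 ≤ |A * Real.log α - b * Real.log γ|)
    (hF2 : ∀ A b : ℤ, 0 < b → b ≤ 11 * 10 ^ 12 → 0.000000000000001 ≤ |A * Real.log α - b * Real.log γ|)
    {H : ℝ} (hH : 1000 ≤ H) (hHε : 8 * J / H < ε1) {j : ℕ} (hj1 : 1 ≤ j) (hjJ : j ≤ J)
    {A b : ℤ} (hΛ : |A * Real.log α - b * Real.log γ| ≤ 8 * j / H)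
    (hlog : j * Real.log H = A * Real.log γ + b * Real.log α) : False := by
  obtain ⟨c, hc⟩ : ∃ c, c = Real.log α := ⟨_, rfl⟩
  obtain ⟨l, hl⟩ : ∃ l, l = Real.log γ := ⟨_, rfl⟩
  have hl0 : 0 < l := hl ▸ Real.log_pos hγ
  have hlc : l ≤ c := by rw [hl, hc]; exact Real.log_le_log (by linarith) hγα
  have hc0 : 0 < c := hl0.trans_le hlc
  obtain ⟨Λ, hΛd⟩ : ∃ Λ, Λ = (A : ℝ) * c - b * l := ⟨_, rfl⟩
  have hj1r : (1 : ℝ) ≤ j := by exact_mod_cast hj1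
  have hjJr : (j : ℝ) ≤ J := by exact_mod_cast hjJ
  have hJ0r : (1 : ℝ) ≤ J := by exact_mod_cast hJ0
  have hJr : (J : ℝ) ≤ 144 := by exact_mod_cast hJ
  have hH0 : 0 < H := by linarith
  rw [← hc, ← hl, ← hΛd] at hΛ
  rw [← hc, ← hl] at hlog
  have hΛ1 : |Λ| < ε1 := by
    refine (hΛ.trans ?_).trans_lt hHε
    gcongr
  have hΛ2 : |Λ| ≤ 0.008 * j := by
    refine hΛ.trans ?_
    rw [div_le_iff₀ hH0]; nlinarith
  have hlogH : 1 ≤ Real.log H := by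
    rw [Real.le_log_iff_exp_le hH0]
    have := Real.exp_one_lt_d9
    linarith
  have hbpos : 0 < b := by
    have e : (b : ℝ) * (c ^ 2 + l ^ 2) = c * (j * Real.log H) - l * Λ := by
      rw [hlog, hΛd]; ring
    have h1 : l * Λ ≤ c * (0.008 * j) := by
      calc l * Λ ≤ l * |Λ| := by gcongr; exact le_abs_self _
        _ ≤ c * (0.008 * j) := by gcongr
    have h2 : c * j ≤ c * (j * Real.log H) := by
      gcongr; nlinarith
    have h3 : 0 < (b : ℝ) * (c ^ 2 + l ^ 2) := by rw [e]; nlinarith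
    have h4 : (0 : ℝ) < b := by
      by_contra hcon
      push Not at hcon
      nlinarith [sq_nonneg c, sq_nonneg l]
    exact_mod_cast h4
  have hbB : (B1 : ℤ) < b := by
    by_contra hcon
    push Not at hcon
    have := hF1 A b hbpos hcon
    rw [← hc, ← hl, ← hΛd] at this
    linarith
  have hbr : (B1 : ℝ) < b := by exact_mod_cast hbB
  have hbr0 : (0 : ℝ) < b := by exact_mod_cast hbpos
  -- the height is exponentially large in `b`
  have hlow : b * c / J - 0.008 ≤ Real.log H := by
    have e : c * (j * Real.log H) = b * c ^ 2 + l * Λ + b * l ^ 2 := by rw [hlog, hΛd]; ring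
    have h1 : -(c * (0.008 * j)) ≤ l * Λ := by
      have : l * |Λ| ≤ c * (0.008 * j) := by gcongr
      have h2 : l * -|Λ| ≤ l * Λ := by gcongr; exact neg_abs_le _
      linarith
    have h2 : c * (b * c - 0.008 * j) ≤ c * (j * Real.log H) := by
      nlinarith [mul_nonneg hbr0.le (sq_nonneg l)]
    have h3 := le_of_mul_le_mul_left h2 hc0
    have h4 : b * c / J ≤ b * c / j := by gcongr
    have h5 : b * c / j ≤ Real.log H + 0.008 := by
      rw [div_le_iff₀ (by linarith)]; linarith
    linarith
  have hsmall : |Λ| ≤ 1200 * Real.exp (-(b * c / J)) := by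
    have h1 : Real.exp (b * c / J - 0.008) ≤ H := by
      rwa [← Real.le_log_iff_exp_le hH0]
    have h2 : 1 / H ≤ Real.exp 0.008 * Real.exp (-(b * c / J)) := by
      rw [← Real.exp_add, div_le_iff₀ hH0]
      calc (1 : ℝ) = Real.exp (0.008 + -(b * c / J)) * Real.exp (b * c / J - 0.008) := by
            rw [← Real.exp_add]; ring_nf; simp
        _ ≤ _ := by gcongr
    have h3 : Real.exp 0.008 ≤ 1.02 := by
      have := Real.exp_bound_div_one_sub_of_interval (x := 0.008) (by norm_num) (by norm_num)
      refine this.trans (by norm_num)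
    have h4 := Real.exp_pos (-(b * c / J))
    calc |Λ| ≤ 8 * j * (1 / H) := by rw [mul_one_div]; exact hΛ
      _ ≤ 8 * 144 * (1.02 * Real.exp (-(b * c / J))) := by
          gcongr
          · linarith
          · exact h2.trans (by gcongr)
      _ ≤ _ := by nlinarith
  have hbJ1 : 50 ≤ b * c / J := by
    rw [le_div_iff₀ (by linarith)]
    rw [← hc] at hB1
    linarith [mul_lt_mul_of_pos_right hbr hc0]
  have hbJ2 : 0.036 * b ≤ b * c / J := by
    rw [le_div_iff₀ (by linarith)]
    rw [← hc] at hcJ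
    linarith [mul_le_mul_of_nonneg_left hcJ hbr0.le]
  have hs1 : |Λ| < 0.000000000000001 := by
    refine hsmall.trans_lt ?_
    have : Real.exp (-(b * c / J)) ≤ Real.exp (-50) := Real.exp_le_exp.mpr (by linarith)
    have h2 := exp_neg_fifty_lt
    nlinarith
  obtain ⟨g, hg⟩ : ∃ g : ℤ, g = Int.gcd A b := ⟨_, rfl⟩
  obtain ⟨A', b', hcop, hA', hb'⟩ : ∃ A' b' : ℤ, IsCoprime A' b' ∧ A = A' * g ∧ b = b' * g := by
    have hgpos : 0 < Int.gcd A b := Int.gcd_pos_of_ne_zero_right _ (by omega)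
    obtain ⟨A', b', h1, h2, h3⟩ := Int.exists_gcd_one hgpos
    exact ⟨A', b', Int.isCoprime_iff_gcd_eq_one.mpr h1, by rw [hg]; exact h2, by rw [hg]; exact h3⟩
  have hg0 : 0 ≤ g := by rw [hg]; positivity
  have hg1 : 1 ≤ g := by
    rcases hg0.eq_or_lt with h | h
    · rw [← h] at hb'; omega
    · omega
  have hb'0 : 0 < b' := by
    by_contra hcon
    push Not at hcon
    nlinarith
  have hb'b : b' ≤ b := by nlinarith
  have hg1r : (1 : ℝ) ≤ g := by exact_mod_cast hg1
  have hΛ' : |A' * c - b' * l| ≤ |Λ| := by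
    have : Λ = (A' * c - b' * l) * g := by rw [hΛd, hA', hb']; push_cast; ring
    rw [this, abs_mul, abs_of_pos (by linarith : (0 : ℝ) < g)]
    exact le_mul_of_one_le_right (abs_nonneg _) hg1r
  have hbig : 11 * 10 ^ 12 < b' := by
    by_contra hcon
    push Not at hcon
    have := hF2 A' b' hb'0 hcon
    rw [← hc, ← hl] at this
    linarith
  have hb'r : (0 : ℝ) < b' := by exact_mod_cast hb'0
  have hc36 : 0.036 ≤ c := by rw [← hc] at hcJ; linarith
  have hlt : |A' * c - b' * l| < c := by
    refine (hΛ'.trans_lt hs1).trans (lt_of_lt_of_le (by norm_num) hc36)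
  rw [abs_lt] at hlt
  have hA'0 : 0 ≤ A' := by
    by_contra hcon
    have : (A' : ℝ) ≤ -1 := by exact_mod_cast (by omega : A' ≤ -1)
    linarith [mul_le_mul_of_nonneg_right this hc0.le, mul_pos hb'r hl0]
  have hA'b : A' ≤ b' := by
    by_contra hcon
    have : (b' : ℝ) + 1 ≤ A' := by exact_mod_cast (by omega : b' + 1 ≤ A')
    linarith [mul_le_mul_of_nonneg_right this hc0.le, mul_le_mul_of_nonneg_left hlc hb'r.le]
  lift A' to ℕ using hA'0
  lift b' to ℕ using hb'0.le
  refine two_logs Q hα hγ hγα hlα (A := A') (B := b') (by exact_mod_cast hA'b)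
    (Nat.isCoprime_iff_coprime.mp hcop) ?_ ?_
  · refine exp_thirty_lt.trans ?_
    have : (11 * 10 ^ 12 : ℝ) < b' := by exact_mod_cast hbig
    norm_num at this ⊢; linarith
  · rw [← hc, ← hl]
    push_cast at hΛ'
    refine (hΛ'.trans hsmall).trans ?_
    have h1 : (b' : ℝ) ≤ b := by exact_mod_cast hb'b
    have h2 : Real.exp (-(b * c / J)) ≤ Real.exp (-(0.036 * b')) :=
      Real.exp_le_exp.mpr (by linarith)
    have h3 := Real.exp_pos (-(b * c / J))
    nlinarith

/-! ### Verified computation for parameters below 200 -/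

/-- Evaluates `n` before passing it to `f`, so that kernel reduction works on numerals. -/
def force {β : Type} (n : ℕ) (f : ℕ → β) : β :=
  match n with
  | 0 => f 0
  | k + 1 => f (k + 1)

lemma force_eq {β : Type} (n : ℕ) (f : ℕ → β) : force n f = f n := by cases n <;> rfl

/-- Scale of the fixed-point computations. -/
def scM : ℕ := 10 ^ 40

lemma scM_pos : 0 < scM := by unfold scM; positivity

/-- Newton iteration, in fixed-point arithmetic, for the largest root of the quartic. -/
def newton (t : ℕ) : ℕ → ℕ → ℕ
  | 0, x => x
  | n + 1, x =>
    force (x - (x ^ 4 + t * x * scM ^ 3 + scM ^ 4 - (t * x ^ 3 * scM + 6 * x ^ 2 * scM ^ 2)) /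
      (4 * x ^ 3 + t * scM ^ 3 - (3 * t * x ^ 2 * scM + 12 * x * scM ^ 2))) (newton t n)

/-- Searches for the Farey neighbours of `l / c` with denominators adding up to more than `bound`,
and checks with the enclosures `[ll, lh]` of `l` and `[cl, ch]` of `c` that both linear
forms are at least `e` (everything being scaled by `scM`). -/
def fyCheck (bound e ll lh cl ch : ℕ) : ℕ → ℕ → ℕ → ℕ → ℕ → Bool
  | 0, _, _, _, _ => false
  | n + 1, p, q, P, Q =>
    if bound < q + Q then
      decide (P * q = p * Q + 1) && decide (p * ch + e ≤ q * ll) && decide (Q * lh + e ≤ P * cl)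
    else
      force (q * ll - p * cl) fun d1 => force (P * cl - Q * ll) fun d2 =>
        if d2 < d1 then
          force (max 1 (min (d1 / d2) ((bound - q) / Q))) fun k =>
            force (p + k * P) fun p' => force (q + k * Q) fun q' =>
              fyCheck bound e ll lh cl ch n p' q' P Q
        else
          force (max 1 (min (d2 / d1) ((bound - Q) / q))) fun k =>
            force (P + k * p) fun P' => force (Q + k * q) fun Q' =>
              fyCheck bound e ll lh cl ch n p q P' Q'

lemma fyCheck_sound {bound e ll lh cl ch : ℕ} {c l M : ℝ} (hM : 0 < M) (he : 0 < e)
    (hll : (ll : ℝ) ≤ M * l) (hlh : M * l ≤ lh) (hcl : (cl : ℝ) ≤ M * c) (hch : M * c ≤ ch) :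
    ∀ n p q P Q, fyCheck bound e ll lh cl ch n p q P Q = true →
      ∀ A b : ℤ, 0 < b → b ≤ bound → e / M ≤ |A * c - b * l| := by
  intro n
  induction n with
  | zero => intro p q P Q h; simp [fyCheck] at h
  | succ n ih =>
    intro p q P Q h A b hb hbb
    rw [fyCheck] at h
    simp only [force_eq] at h
    split_ifs at h with h1 h2
    · simp only [Bool.and_eq_true, decide_eq_true_eq] at h
      obtain ⟨⟨h3, h4⟩, h5⟩ := h
      have h4r : (p : ℝ) * ch + e ≤ q * ll := by exact_mod_cast h4
      have h5r : (Q : ℝ) * lh + e ≤ P * cl := by exact_mod_cast h5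
      refine farey (p := p) (q := q) (P := P) (Q := Q) (by positivity) (by positivity) ?_ ?_ ?_
        (by positivity) A b hb ?_
      · have : (P : ℤ) * q = p * Q + 1 := by exact_mod_cast h3
        linarith
      · rw [div_le_iff₀ hM]; push_cast
        have e1 : (q : ℝ) * ll ≤ q * (M * l) := by gcongr
        have e2 : (p : ℝ) * (M * c) ≤ p * ch := by gcongr
        linarith
      · rw [div_le_iff₀ hM]; push_cast
        have e1 : (P : ℝ) * cl ≤ P * (M * c) := by gcongr
        have e2 : (Q : ℝ) * (M * l) ≤ Q * lh := by gcongr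
        linarith
      · have : (bound : ℤ) < q + Q := by exact_mod_cast h1
        omega
    · exact ih _ _ _ _ h A b hb hbb
    · exact ih _ _ _ _ h A b hb hbb

/-- A lower bound for the large conjugate of the unit attached to a solution that is not covered
by the enumeration of small coordinates. -/
noncomputable def minHeight (t : ℕ) : ℝ := if t < 50 then 50000000 else t ^ 5 / 20

/-- The hypotheses of `no_rel`, checked with enclosures `[ll, lh]` of `log γ` and `[cl, ch]` of
`log α` (scaled by `scM`) for the height `minHeight t` and `J = G²`. -/
def chkLogs (t ll lh cl ch : ℕ) : Bool :=
  force ((ch + lh) * 100 / (48 * scM) + 1) fun G =>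
  force (50 * (G * G) * scM / cl + 1) fun B1 =>
  force (if t < 50 then 8 * (G * G) * scM / (5 * 10 ^ 7) + 1
    else 160 * (G * G) * scM / t ^ 5 + 1) fun e1 =>
    decide (G ≤ 12) && decide (36 * (G * G) * scM ≤ 1000 * cl) && decide (10 * ch ≤ 53 * scM) &&
    fyCheck B1 e1 ll lh cl ch 60 0 1 1 1 &&
    fyCheck (11 * 10 ^ 12) (10 ^ 25) ll lh cl ch 120 0 1 1 1

/-- An exponent `k` for which `2 ^ k` is close to `x / scM`. -/
def kOf (x : ℕ) : ℕ :=
  if x < 4 * scM then 1 else if x < 8 * scM then 2 else if x < 16 * scM then 3 else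
  if x < 32 * scM then 4 else if x < 64 * scM then 5 else if x < 128 * scM then 6 else 7

/-- All the checks for the parameter `t`; `a0` and `a1` are the bounds of `log 2`. -/
def chk (a0 a1 t : ℕ) : Bool :=
  force (newton t 12 ((t + 2) * scM)) fun x =>
  force (x - 2) fun xl => force (x + 2) fun xh => force (kOf x) fun k =>
    decide (2 * scM ≤ xl) &&
    decide (xl ^ 4 + t * xl * scM ^ 3 + scM ^ 4 ≤ t * xl ^ 3 * scM + 6 * xl ^ 2 * scM ^ 2) &&
    decide (t * xh ^ 3 * scM + 6 * xh ^ 2 * scM ^ 2 ≤ xh ^ 4 + t * xh * scM ^ 3 + scM ^ 4) &&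
    decide (2 ^ k * scM ≤ xl) && decide (xh ≤ 4 * (2 ^ k * scM)) &&
    (force (scM * scM / xh) fun z0 => force (scM * scM / xl + 1) fun z1 =>
     force ((xl - 2 ^ k * scM) * scM / (xl + 2 ^ k * scM)) fun z2 =>
     force ((xh - 2 ^ k * scM) * scM / (xh + 2 ^ k * scM) + 1) fun z3 =>
     force (logLo scM z0) fun ll => force (logHi scM z1) fun lh =>
     force (k * a0 + logLo scM z2) fun cl => force (k * a1 + logHi scM z3) fun ch =>
      chkLogs t ll lh cl ch)

/-- The checks for all parameters below 200. -/
def chkAll : Bool :=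
  force (logLo scM (scM / 3)) fun a0 => force (logHi scM (scM / 3 + 1)) fun a1 =>
    (List.range 200).all fun t => t == 0 || t == 3 || chk a0 a1 t

set_option maxRecDepth 100000 in
lemma chkAll_eq : chkAll = true := by decide +kernel

/-- A sign condition at `u` locates `u` below the largest root. -/
lemma le_root {α γ t : ℝ} (hα : 1 < α) (hγ1 : 1 < γ)
    (hroot : α ^ 4 - t * α ^ 3 - 6 * α ^ 2 + t * α + 1 = 0)
    (hγ : γ * (α - 1) = α + 1) {u : ℝ} (hu : 1 < u)
    (h : u ^ 4 - t * u ^ 3 - 6 * u ^ 2 + t * u + 1 ≤ 0) : u ≤ α := by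
  have hf := F_factor hα hroot hγ u 1
  have hg : γ⁻¹ ≤ 1 := inv_le_one_of_one_le₀ hγ1.le
  have h1 : 0 < u - γ⁻¹ * 1 := by linarith
  have h2 : 0 < u + α⁻¹ * 1 := by positivity
  have h3 : 0 < u + γ * 1 := by linarith
  by_contra hcon
  push Not at hcon
  have : 0 < (u - α * 1) * (u - γ⁻¹ * 1) * (u + α⁻¹ * 1) * (u + γ * 1) := by
    have : 0 < u - α * 1 := by linarith
    positivity
  rw [← hf] at this
  linarith

/-- A sign condition at `u` locates `u` above the largest root. -/
lemma root_le {α γ t : ℝ} (hα : 1 < α) (hγ1 : 1 < γ)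
    (hroot : α ^ 4 - t * α ^ 3 - 6 * α ^ 2 + t * α + 1 = 0)
    (hγ : γ * (α - 1) = α + 1) {u : ℝ} (hu : 1 < u)
    (h : 0 ≤ u ^ 4 - t * u ^ 3 - 6 * u ^ 2 + t * u + 1) : α ≤ u := by
  have hf := F_factor hα hroot hγ u 1
  have hg : γ⁻¹ ≤ 1 := inv_le_one_of_one_le₀ hγ1.le
  have h1 : 0 < u - γ⁻¹ * 1 := by linarith
  have h2 : 0 < u + α⁻¹ * 1 := by positivity
  have h3 : 0 < u + γ * 1 := by linarith
  by_contra hcon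
  push Not at hcon
  have : 0 < (α * 1 - u) * (u - γ⁻¹ * 1) * (u + α⁻¹ * 1) * (u + γ * 1) := by
    have : 0 < α * 1 - u := by linarith
    positivity
  have e : (α * 1 - u) * (u - γ⁻¹ * 1) * (u + α⁻¹ * 1) * (u + γ * 1)
    = -((u - α * 1) * (u - γ⁻¹ * 1) * (u + α⁻¹ * 1) * (u + γ * 1)) := by ring
  rw [e, ← hf] at this
  linarith

lemma root_enclosure {α γ t M xl xh : ℝ} (hM : 0 < M) (hα : 1 < α) (hγ1 : 1 < γ)
    (hroot : α ^ 4 - t * α ^ 3 - 6 * α ^ 2 + t * α + 1 = 0)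
    (hγ : γ * (α - 1) = α + 1) (h1 : M < xl) (hlh : xl ≤ xh)
    (h2 : xl ^ 4 + t * xl * M ^ 3 + M ^ 4 ≤ t * xl ^ 3 * M + 6 * xl ^ 2 * M ^ 2)
    (h3 : t * xh ^ 3 * M + 6 * xh ^ 2 * M ^ 2 ≤ xh ^ 4 + t * xh * M ^ 3 + M ^ 4) :
    xl ≤ M * α ∧ M * α ≤ xh := by
  have hcast : ∀ u : ℝ, (u / M) ^ 4 - t * (u / M) ^ 3 - 6 * (u / M) ^ 2 + t * (u / M) + 1
      = (u ^ 4 + t * u * M ^ 3 + M ^ 4 - (t * u ^ 3 * M + 6 * u ^ 2 * M ^ 2)) / M ^ 4 := by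
    intro u; field_simp; ring
  constructor
  · have := le_root hα hγ1 hroot hγ (u := xl / M)
      (by rw [lt_div_iff₀ hM]; linarith)
      (by rw [hcast]; exact div_nonpos_of_nonpos_of_nonneg (by linarith) (by positivity))
    rw [div_le_iff₀ hM] at this; linarith
  · have := root_le hα hγ1 hroot hγ (u := xh / M)
      (by rw [lt_div_iff₀ hM]; linarith)
      (by rw [hcast]; exact div_nonneg (by linarith) (by positivity))
    rw [le_div_iff₀ hM] at this; linarith

/-- `γ = (1 + α⁻¹) / (1 - α⁻¹)`, the form to which the series of `artanh` applies. -/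
lemma log_gamma {α γ : ℝ} (hα : 1 < α) (hγ : γ * (α - 1) = α + 1) :
    Real.log (1 + α⁻¹) - Real.log (1 - α⁻¹) = Real.log γ := by
  have h0 : α⁻¹ < 1 := inv_lt_one_of_one_lt₀ hα
  have h1 : 0 < α⁻¹ := by positivity
  rw [← Real.log_div (by positivity) (by linarith)]
  congr 1
  have : α - 1 ≠ 0 := by linarith
  have : α ≠ 0 := by linarith
  have h2 : 1 - α⁻¹ ≠ 0 := by linarith
  rw [div_eq_iff h2]
  field_simp
  linarith

lemma log_two_eq : Real.log (1 + 1 / 3) - Real.log (1 - 1 / 3) = Real.log 2 := by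
  rw [← Real.log_div (by norm_num) (by norm_num)]; norm_num

/-- Reduction of `log α` to `log 2` and a logarithm of a number close to `1`. -/
lemma log_split {α : ℝ} (hα : 0 < α) (k : ℕ) :
    Real.log (1 + (α - 2 ^ k) / (α + 2 ^ k)) - Real.log (1 - (α - 2 ^ k) / (α + 2 ^ k))
      = Real.log α - k * Real.log 2 := by
  have h2 : (0 : ℝ) < 2 ^ k := by positivity
  have h1 : 1 + (α - 2 ^ k) / (α + 2 ^ k) = 2 * α / (α + 2 ^ k) := by field_simp; ring
  have h3 : 1 - (α - 2 ^ k) / (α + 2 ^ k) = 2 * 2 ^ k / (α + 2 ^ k) := by field_simp; ring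
  rw [h1, h3, ← Real.log_div (by positivity) (by positivity), ← Real.log_pow,
    ← Real.log_div (by positivity) (by positivity)]
  congr 1
  field_simp

lemma chkLogs_sound {t ll lh cl ch : ℕ} (h : chkLogs t ll lh cl ch = true) (ht : 0 < t)
    {α γ : ℝ} (Q : QField α γ) (hα : 1 < α) (hγ : 1 < γ) (hγα : γ ≤ α)
    (hll : (ll : ℝ) ≤ scM * Real.log γ) (hlh : scM * Real.log γ ≤ lh)
    (hcl : (cl : ℝ) ≤ scM * Real.log α) (hch : scM * Real.log α ≤ ch) :
    ∃ G : ℕ, 0 < G ∧ Real.log α + Real.log γ ≤ 0.48 * G ∧ ∀ H : ℝ, minHeight t ≤ H →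
      ∀ j : ℕ, 1 ≤ j → j ≤ G ^ 2 → ∀ A b : ℤ,
      |A * Real.log α - b * Real.log γ| ≤ 8 * j / H →
      j * Real.log H = A * Real.log γ + b * Real.log α → False := by
  unfold chkLogs at h
  simp only [force_eq] at h
  have hM : (0 : ℝ) < scM := by exact_mod_cast scM_pos
  obtain ⟨G, hG⟩ : ∃ G, G = (ch + lh) * 100 / (48 * scM) + 1 := ⟨_, rfl⟩
  obtain ⟨B1, hB1⟩ : ∃ B1, B1 = 50 * (G * G) * scM / cl + 1 := ⟨_, rfl⟩
  obtain ⟨e1, he1⟩ : ∃ e1, e1 = (if t < 50 then 8 * (G * G) * scM / (5 * 10 ^ 7) + 1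
    else 160 * (G * G) * scM / t ^ 5 + 1) := ⟨_, rfl⟩
  rw [← hG, ← hB1, ← he1] at h
  simp only [Bool.and_eq_true, decide_eq_true_eq] at h
  obtain ⟨⟨⟨⟨h1, h2⟩, h3⟩, h4⟩, h5⟩ := h
  have hG1 : 1 ≤ G := by rw [hG]; exact Nat.le_add_left 1 _
  have hGr : (1 : ℝ) ≤ G := by exact_mod_cast hG1
  have hc0 := Real.log_pos hα
  have hcl0 : 0 < cl := by
    by_contra hcon
    have : cl = 0 := by omega
    rw [this, Nat.mul_zero] at h2
    have : 0 < 36 * (G * G) * scM :=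
      Nat.mul_pos (Nat.mul_pos (by norm_num) (Nat.mul_pos hG1 hG1)) scM_pos
    omega
  have hclr : (0 : ℝ) < cl := by exact_mod_cast hcl0
  have he10 : 0 < e1 := by rw [he1]; split_ifs <;> exact Nat.succ_pos _
  refine ⟨G, hG1, ?_, ?_⟩
  · have e1 := le_natdiv ((ch + lh) * 100) (b := 48 * scM) (by have := scM_pos; omega)
    have e2 : ((ch + lh : ℝ) * 100) / (48 * scM) ≤ G := by rw [hG]; push_cast at e1 ⊢; exact e1
    rw [div_le_iff₀ (by positivity)] at e2
    have e3 : scM * (Real.log α + Real.log γ) ≤ scM * (0.48 * G) := by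
      rw [mul_add]; linarith
    exact le_of_mul_le_mul_left e3 hM
  · intro H hH j hj1 hjG A b hΛ hlog
    have hminH : 1000 ≤ minHeight t := by
      unfold minHeight
      split_ifs with h
      · norm_num
      · have : (50 : ℝ) ≤ t := by exact_mod_cast (by omega : 50 ≤ t)
        have h2 : (50 : ℝ) ^ 5 ≤ t ^ 5 := by gcongr
        linarith
    have hJ : 1 ≤ G * G := Nat.mul_pos hG1 hG1
    have hF1 := fyCheck_sound hM he10 hll hlh hcl hch _ _ _ _ _ h4
    have hF2 := fyCheck_sound hM (by norm_num) hll hlh hcl hch _ _ _ _ _ h5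
    refine no_rel Q hα hγ hγα ?_ (J := G * G) hJ (by nlinarith) ?_ (B1 := B1) ?_ hF1 ?_
      (hminH.trans hH) ?_ hj1 (by rw [← sq]; exact hjG) hΛ hlog
    · have : (10 * ch : ℝ) ≤ 53 * scM := by exact_mod_cast h3
      have : scM * Real.log α ≤ scM * 5.3 := by linarith
      exact le_of_mul_le_mul_left this hM
    · have : (36 * (G * G) * scM : ℝ) ≤ 1000 * cl := by exact_mod_cast h2
      refine le_of_mul_le_mul_left ?_ hM
      push_cast; linarith
    · have e1 := le_natdiv (50 * (G * G) * scM) hcl0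
      have e2 : (50 * (G * G) * scM : ℝ) / cl ≤ B1 := by rw [hB1]; push_cast at e1 ⊢; exact e1
      rw [div_le_iff₀ hclr] at e2
      have e3 : (B1 : ℝ) * cl ≤ B1 * (scM * Real.log α) := by gcongr
      refine le_of_mul_le_mul_left ?_ hM
      push_cast; linarith
    · intro A b hb hbb
      refine le_trans ?_ (hF2 A b hb (by push_cast; exact hbb))
      rw [le_div_iff₀ hM]; unfold scM; norm_num
    · have hH0 : 0 < H := by linarith
      rw [div_lt_div_iff₀ hH0 hM]
      push_cast
      have he1' : 8 * ((G : ℝ) * G) * scM < e1 * minHeight t := by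
        rw [he1]; unfold minHeight
        split_ifs with h
        · have := Nat.lt_div_mul_add (a := 8 * (G * G) * scM) (b := 5 * 10 ^ 7) (by norm_num)
          have e : 8 * (G * G) * scM < (8 * (G * G) * scM / (5 * 10 ^ 7) + 1) * (5 * 10 ^ 7) := by
            rw [Nat.add_mul, Nat.one_mul]; exact this
          have e' : (8 * ((G : ℝ) * G) * scM) <
            ((8 * (G * G) * scM / (5 * 10 ^ 7) + 1 : ℕ) : ℝ) * (5 * 10 ^ 7) := by exact_mod_cast e
          refine e'.trans_eq ?_
          norm_num
        · have ht5 : 0 < t ^ 5 := by positivity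
          have := Nat.lt_div_mul_add (a := 160 * (G * G) * scM) ht5
          have e : 160 * (G * G) * scM < (160 * (G * G) * scM / t ^ 5 + 1) * t ^ 5 := by
            rw [Nat.add_mul, Nat.one_mul]; exact this
          have e' : (160 * ((G : ℝ) * G) * scM) <
            ((160 * (G * G) * scM / t ^ 5 + 1 : ℕ) : ℝ) * t ^ 5 := by exact_mod_cast e
          linarith
      have : (e1 : ℝ) * minHeight t ≤ e1 * H := by gcongr
      linarith

set_option maxHeartbeats 800000 in
lemma chk_sound {a0 a1 t : ℕ} (h : chk a0 a1 t = true) (ht : 0 < t)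
    (ha0 : (a0 : ℝ) ≤ scM * Real.log 2) (ha1 : scM * Real.log 2 ≤ a1)
    {α γ : ℝ} (Q : QField α γ) (hα : 2 ≤ α) (hγ : 1 < γ) (hγα : γ ≤ α)
    (hroot : α ^ 4 - t * α ^ 3 - 6 * α ^ 2 + t * α + 1 = 0)
    (hγ' : γ * (α - 1) = α + 1) :
    ∃ G : ℕ, 0 < G ∧ Real.log α + Real.log γ ≤ 0.48 * G ∧ ∀ H : ℝ, minHeight t ≤ H →
      ∀ j : ℕ, 1 ≤ j → j ≤ G ^ 2 → ∀ A b : ℤ,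
      |A * Real.log α - b * Real.log γ| ≤ 8 * j / H →
      j * Real.log H = A * Real.log γ + b * Real.log α → False := by
  unfold chk at h
  simp only [force_eq] at h
  generalize newton t 12 ((t + 2) * scM) = x at h
  have hlh : x - 2 ≤ x + 2 := by omega
  generalize x - 2 = xl at h hlh
  generalize x + 2 = xh at h hlh
  generalize kOf x = k at h
  simp only [Bool.and_eq_true, decide_eq_true_eq] at h
  obtain ⟨⟨⟨⟨⟨h1, h2⟩, h3⟩, h4⟩, h5⟩, h6⟩ := h
  have hM0 := scM_pos
  obtain ⟨M, hMd⟩ : ∃ M, M = scM := ⟨_, rfl⟩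
  rw [← hMd] at h1 h2 h3 h4 h5 h6 hM0 ha0 ha1
  have hM : (0 : ℝ) < M := by exact_mod_cast hM0
  have hα1 : 1 < α := by linarith
  have h1r : (2 : ℝ) * M ≤ xl := by exact_mod_cast h1
  have h2r : (xl : ℝ) ^ 4 + t * xl * M ^ 3 + M ^ 4 ≤ t * xl ^ 3 * M + 6 * xl ^ 2 * M ^ 2 := by
    exact_mod_cast h2
  have h3r : (t : ℝ) * xh ^ 3 * M + 6 * xh ^ 2 * M ^ 2 ≤ xh ^ 4 + t * xh * M ^ 3 + M ^ 4 := by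
    exact_mod_cast h3
  have h4r : (2 : ℝ) ^ k * M ≤ xl := by exact_mod_cast h4
  have h5r : (xh : ℝ) ≤ 4 * (2 ^ k * M) := by exact_mod_cast h5
  have hxl0 : (0 : ℝ) < xl := by linarith
  have hlhr : (xl : ℝ) ≤ xh := by exact_mod_cast hlh
  have hxh0 : (0 : ℝ) < xh := by linarith
  obtain ⟨hlo, hhi⟩ := root_enclosure hM hα1 hγ hroot hγ' (by linarith) hlhr h2r h3r
  have hα0 : 0 < α := by linarith
  rw [hMd] at h6
  have hz1 : (α⁻¹) ^ 2 ≤ 1 / 2 := by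
    rw [inv_pow, inv_le_comm₀ (by positivity) (by norm_num)]; nlinarith
  have hK : (0 : ℝ) < 2 ^ k := by positivity
  have hα4 : α ≤ 4 * 2 ^ k := by
    refine le_of_mul_le_mul_left ?_ hM
    linarith
  have hαK : 2 ^ k ≤ α := by
    refine le_of_mul_le_mul_left ?_ hM
    linarith
  have hz0 : 0 ≤ (α - 2 ^ k) / (α + 2 ^ k) := div_nonneg (by linarith) (by positivity)
  have hz2 : ((α - 2 ^ k) / (α + 2 ^ k)) ^ 2 ≤ 1 / 2 := by
    have : (α - 2 ^ k) / (α + 2 ^ k) ≤ 3 / 5 := by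
      rw [div_le_iff₀ (by positivity)]; linarith
    nlinarith
  refine chkLogs_sound h6 ht Q hα1 hγ hγα ?_ ?_ ?_ ?_ <;> rw [← hMd]
  · rw [← log_gamma hα1 hγ']
    refine logLo_le hM0 (z := α⁻¹) hz1 ((natdiv_le _ _).trans ?_)
    push_cast
    rw [div_le_iff₀ hxh0, mul_assoc]
    refine mul_le_mul_of_nonneg_left ?_ hM.le
    rw [inv_mul_eq_div, le_div_iff₀ hα0]; exact hhi
  · rw [← log_gamma hα1 hγ']
    refine le_logHi hM0 (z := α⁻¹) (by positivity) hz1 ?_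
    have := le_natdiv (M * M) (b := xl) (by exact_mod_cast hxl0)
    push_cast at this ⊢
    refine le_trans ?_ this
    rw [le_div_iff₀ hxl0, mul_assoc]
    refine mul_le_mul_of_nonneg_left ?_ hM.le
    rw [inv_mul_eq_div, div_le_iff₀ hα0]; exact hlo
  · have e := log_split hα0 k
    have e2 : ((logLo M ((xl - 2 ^ k * M) * M / (xl + 2 ^ k * M)) : ℕ) : ℝ)
        ≤ M * (Real.log α - k * Real.log 2) := by
      rw [← e]
      refine logLo_le hM0 hz2 ((natdiv_le _ _).trans ?_)
      push_cast [Nat.cast_sub h4]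
      rw [div_le_iff₀ (by positivity), mul_div_assoc', div_mul_eq_mul_div, le_div_iff₀ (by positivity)]
      linarith [mul_le_mul_of_nonneg_right hlo (by positivity : (0 : ℝ) ≤ 2 * 2 ^ k * M)]
    push_cast
    have e3 : (k : ℝ) * a0 ≤ k * (M * Real.log 2) := by gcongr
    linarith
  · have e := log_split hα0 k
    have e2 : M * (Real.log α - k * Real.log 2) ≤
        ((logHi M ((xh - 2 ^ k * M) * M / (xh + 2 ^ k * M) + 1) : ℕ) : ℝ) := by
      rw [← e]
      refine le_logHi hM0 hz0 hz2 ?_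
      have := le_natdiv ((xh - 2 ^ k * M) * M) (b := xh + 2 ^ k * M) (by omega)
      push_cast [Nat.cast_sub (h4.trans hlh)] at this ⊢
      refine le_trans ?_ this
      rw [le_div_iff₀ (by positivity), mul_div_assoc', div_mul_eq_mul_div, div_le_iff₀ (by positivity)]
      linarith [mul_le_mul_of_nonneg_right hhi (by positivity : (0 : ℝ) ≤ 2 * 2 ^ k * M)]
    push_cast
    have e3 : (k : ℝ) * (M * Real.log 2) ≤ k * a1 := by gcongr
    linarith

/-- For `t < 200`, no solution of height at least `minHeight t` yields a relation. -/
theorem no_rel_small {t : ℕ} (ht : 0 < t) (ht3 : t ≠ 3) (ht2 : t < 200)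
    {α γ : ℝ} (Q : QField α γ) (hα : 2 ≤ α) (hγ : 1 < γ) (hγα : γ ≤ α)
    (hroot : α ^ 4 - t * α ^ 3 - 6 * α ^ 2 + t * α + 1 = 0)
    (hγ' : γ * (α - 1) = α + 1) :
    ∃ G : ℕ, 0 < G ∧ Real.log α + Real.log γ ≤ 0.48 * G ∧ ∀ H : ℝ, minHeight t ≤ H →
      ∀ j : ℕ, 1 ≤ j → j ≤ G ^ 2 → ∀ A b : ℤ,
      |A * Real.log α - b * Real.log γ| ≤ 8 * j / H →
      j * Real.log H = A * Real.log γ + b * Real.log α → False := by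
  have h := chkAll_eq
  unfold chkAll at h
  simp only [force_eq, List.all_eq_true, List.mem_range] at h
  have h' := h t ht2
  have h0 : (t == 0) = false := by simp; omega
  have h3 : (t == 3) = false := by simp; omega
  rw [h0, h3, Bool.false_or, Bool.false_or] at h'
  refine chk_sound h' ht ?_ ?_ Q hα hγ hγα hroot hγ'
  · rw [← log_two_eq]
    refine logLo_le scM_pos (by norm_num) ((natdiv_le _ _).trans ?_)
    push_cast; linarith
  · rw [← log_two_eq]
    refine le_logHi scM_pos (by norm_num) (by norm_num) ?_
    have := le_natdiv scM (b := 3) (by norm_num)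
    push_cast at this ⊢
    linarith

/-! ### Solutions with small coordinates -/

/-- Checks that the value of the form at `(x, y)` is not `±1`, up to the known exceptions. -/
def notSol (t x y : ℕ) : Bool :=
  (t == 1 && x == 1 && y == 2) || (t == 4 && x == 2 && y == 3) ||
  force (x ^ 4 + t * x * y ^ 3 + y ^ 4) fun u => force (t * x ^ 3 * y + 6 * x ^ 2 * y ^ 2) fun v =>
    !(u == v + 1) && !(v == u + 1)

/-- Checks that there are no unexpected solutions close to one of the two relevant asymptotes,
for `1 ≤ y ≤ 64`. -/
def brute (t : ℕ) : Bool :=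
  force (newton t 12 ((t + 2) * scM)) fun a =>
  force (a - 2) fun xl => force (a + 2) fun xh =>
    decide (2 * scM ≤ xl) &&
    decide (xl ^ 4 + t * xl * scM ^ 3 + scM ^ 4 ≤ t * xl ^ 3 * scM + 6 * xl ^ 2 * scM ^ 2) &&
    decide (t * xh ^ 3 * scM + 6 * xh ^ 2 * scM ^ 2 ≤ xh ^ 4 + t * xh * scM ^ 3 + scM ^ 4) &&
    (List.range 64).all fun y' => force (y' + 1) fun y =>
      (force (y * xl / scM) fun x => notSol t x y && notSol t (x + 1) y) &&
      (force (y * (xl - scM) / (xl + scM)) fun x =>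
        (x == 0 || notSol t x y) && notSol t (x + 1) y)

/-- The brute-force checks for the parameters below 50. -/
def bruteAll : Bool := (List.range 50).all fun t => t == 0 || t == 3 || brute t

set_option maxRecDepth 100000 in
lemma bruteAll_eq : bruteAll = true := by decide +kernel

lemma notSol_sound {t x y : ℕ} (h : notSol t x y = true)
    (hF : |(x : ℝ) ^ 4 - t * x ^ 3 * y - 6 * x ^ 2 * y ^ 2 + t * x * y ^ 3 + y ^ 4| = 1) :
    (t = 1 ∧ x = 1 ∧ y = 2) ∨ (t = 4 ∧ x = 2 ∧ y = 3) := by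
  unfold notSol at h
  simp only [force_eq, Bool.or_eq_true, Bool.and_eq_true, beq_iff_eq, Bool.not_eq_true',
    beq_eq_false_iff_ne] at h
  rcases h with (h | h) | h
  · exact Or.inl ⟨h.1.1, h.1.2, h.2⟩
  · exact Or.inr ⟨h.1.1, h.1.2, h.2⟩
  · exfalso
    rcases eq_or_eq_neg_of_abs_eq hF with h1 | h1
    · refine h.1 ?_
      have : (x : ℝ) ^ 4 + t * x * y ^ 3 + y ^ 4 = t * x ^ 3 * y + 6 * x ^ 2 * y ^ 2 + 1 := by
        linarith
      exact_mod_cast this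
    · refine h.2 ?_
      have : (t : ℝ) * x ^ 3 * y + 6 * x ^ 2 * y ^ 2 = x ^ 4 + t * x * y ^ 3 + y ^ 4 + 1 := by
        linarith
      exact_mod_cast this

/-- The only integers at distance less than `1/2` from `β` are `⌊a/b⌋` and `⌊a/b⌋ + 1`,
for `a/b` slightly below `β`. -/
lemma near_floor {a b x : ℕ} {β : ℝ} (hb : 0 < b) (h1 : (a : ℝ) / b ≤ β) (h2 : β ≤ a / b + 1 / 4)
    (hx : |(x : ℝ) - β| < 1 / 2) : x = a / b ∨ x = a / b + 1 := by
  rw [abs_lt] at hx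
  have h3 := natdiv_le a b
  have h4 := le_natdiv a hb
  have h5 : ((a / b : ℕ) : ℝ) < x + 1 := by linarith
  have h6 : (x : ℝ) < ((a / b : ℕ) : ℝ) + 2 := by linarith
  have h5' : a / b < x + 1 := by exact_mod_cast h5
  have h6' : x < a / b + 2 := by exact_mod_cast h6
  omega

lemma brute_sound {t : ℕ} (ht : 0 < t) (ht3 : t ≠ 3) (ht50 : t < 50)
    {α γ : ℝ} (hα : 2 ≤ α) (hγ : 1 < γ)
    (hroot : α ^ 4 - t * α ^ 3 - 6 * α ^ 2 + t * α + 1 = 0)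
    (hγ' : γ * (α - 1) = α + 1) {x y : ℕ} (hx : 0 < x) (hy : 0 < y) (hy64 : y ≤ 64)
    (hF : |(x : ℝ) ^ 4 - t * x ^ 3 * y - 6 * x ^ 2 * y ^ 2 + t * x * y ^ 3 + y ^ 4| = 1)
    (hnear : |(x : ℝ) - α * y| < 1 / 2 ∨ |(x : ℝ) - γ⁻¹ * y| < 1 / 2) :
    (t = 1 ∧ x = 1 ∧ y = 2) ∨ (t = 4 ∧ x = 2 ∧ y = 3) := by
  have h := bruteAll_eq
  unfold bruteAll at h
  simp only [List.all_eq_true, List.mem_range] at h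
  have h' := h t ht50
  have h0 : (t == 0) = false := by simp; omega
  have h3 : (t == 3) = false := by simp; omega
  rw [h0, h3, Bool.false_or, Bool.false_or] at h'
  unfold brute at h'
  simp only [force_eq] at h'
  generalize newton t 12 ((t + 2) * scM) = a at h'
  have hlh : a - 2 ≤ a + 2 := by omega
  have hlh4 : a + 2 ≤ a - 2 + 4 := by omega
  generalize a - 2 = xl at h' hlh hlh4
  generalize a + 2 = xh at h' hlh hlh4
  simp only [Bool.and_eq_true, decide_eq_true_eq, List.all_eq_true, List.mem_range] at h'
  obtain ⟨⟨⟨h1, h2⟩, h3⟩, h6⟩ := h'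
  have h7 := h6 (y - 1) (by omega)
  rw [Nat.sub_add_cancel hy] at h7
  have hM0 := scM_pos
  have hM6 : (10000 : ℝ) ≤ scM := by unfold scM; norm_num
  generalize scM = M at h1 h2 h3 h7 hM0 hM6
  have hM : (0 : ℝ) < M := by exact_mod_cast hM0
  have hα1 : 1 < α := by linarith
  have h1r : (2 : ℝ) * M ≤ xl := by exact_mod_cast h1
  have h2r : (xl : ℝ) ^ 4 + t * xl * M ^ 3 + M ^ 4 ≤ t * xl ^ 3 * M + 6 * xl ^ 2 * M ^ 2 := by
    exact_mod_cast h2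
  have h3r : (t : ℝ) * xh ^ 3 * M + 6 * xh ^ 2 * M ^ 2 ≤ xh ^ 4 + t * xh * M ^ 3 + M ^ 4 := by
    exact_mod_cast h3
  have hlhr : (xl : ℝ) ≤ xh := by exact_mod_cast hlh
  have hlh4r : (xh : ℝ) ≤ xl + 4 := by exact_mod_cast hlh4
  obtain ⟨hlo, hhi⟩ := root_enclosure hM hα1 hγ hroot hγ' (by linarith) hlhr h2r h3r
  have hyr : (y : ℝ) ≤ 64 := by exact_mod_cast hy64
  have hy0 : (0 : ℝ) < y := by exact_mod_cast hy
  rcases hnear with hn | hn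
  · have e := near_floor (a := y * xl) (b := M) hM0 (β := α * y)
      (by push_cast; rw [div_le_iff₀ hM]; nlinarith)
      (by push_cast; rw [div_add' _ _ _ hM.ne', le_div_iff₀ hM]; nlinarith) hn
    rcases e with e | e
    · rw [← e] at h7; exact notSol_sound h7.1.1 hF
    · rw [← e] at h7; exact notSol_sound h7.1.2 hF
  · have hg : γ⁻¹ = (α - 1) / (α + 1) := by
      have : α + 1 ≠ 0 := by linarith
      have : γ ≠ 0 := by linarith
      field_simp; linarith
    have hMxl : M ≤ xl := by omega
    have hd : (0 : ℝ) < xl + M := by positivity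
    have hα0 : 0 < α + 1 := by linarith
    have e := near_floor (a := y * (xl - M)) (b := xl + M) (by omega) (β := γ⁻¹ * y)
      (by
        push_cast [Nat.cast_sub hMxl]
        rw [hg, div_mul_eq_mul_div, div_le_div_iff₀ hd hα0]
        have : y * ((xl : ℝ) - M) * (α + 1) = (α - 1) * y * (xl + M) - 2 * y * (M * α - xl) := by ring
        rw [this]
        have : 0 ≤ y * (M * α - xl) := mul_nonneg hy0.le (by linarith)
        linarith)
      (by
        push_cast [Nat.cast_sub hMxl]
        rw [hg, div_mul_eq_mul_div, div_add' _ _ _ hd.ne', div_le_div_iff₀ hα0 hd]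
        have : (y * ((xl : ℝ) - M) + 1 / 4 * (xl + M)) * (α + 1)
          = (α - 1) * y * (xl + M) - 2 * y * (M * α - xl) + 1 / 4 * (xl + M) * (α + 1) := by ring
        rw [this]
        have e1 : y * (M * α - xl) ≤ 64 * 4 := by
          calc y * (M * α - xl) ≤ 64 * (M * α - xl) := by
                gcongr
            _ ≤ _ := by linarith
        have e2 : (10000 : ℝ) * 1 ≤ (xl + M) * (α + 1) := by gcongr <;> linarith
        linarith) hn
    rcases e with e | e
    · rw [← e] at h7
      rcases Bool.or_eq_true _ _ |>.mp h7.2.1 with h8 | h8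
      · simp at h8; omega
      · exact notSol_sound h8 hF
    · rw [← e] at h7; exact notSol_sound h7.2.2 hF

/-- The largest root of the quartic, with the bounds used throughout. -/
lemma exists_root {t : ℝ} (ht : 1 ≤ t) : ∃ α γ : ℝ, 2.9 ≤ α ∧ t ≤ α ∧ α ≤ t + 2 ∧ 1 < γ ∧ γ ≤ α ∧
    α ^ 4 - t * α ^ 3 - 6 * α ^ 2 + t * α + 1 = 0 ∧ γ * (α - 1) = α + 1 := by
  obtain ⟨α, ⟨hα1, hα2⟩, hα⟩ : ∃ α ∈ Set.Icc (max 2.9 t) (t + 2),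
      α ^ 4 - t * α ^ 3 - 6 * α ^ 2 + t * α + 1 = 0 := by
    have hcont : ContinuousOn (fun u : ℝ => u ^ 4 - t * u ^ 3 - 6 * u ^ 2 + t * u + 1)
      (Set.Icc (max 2.9 t) (t + 2)) := by fun_prop
    have := intermediate_value_Icc (by rw [max_le_iff]; constructor <;> linarith) hcont
    refine this ⟨?_, ?_⟩
    · rcases le_total t 2.9 with h | h
      · rw [max_eq_left h]; norm_num; linarith
      · rw [max_eq_right h]; nlinarith
    · have : (t + 2) ^ 4 - t * (t + 2) ^ 3 - 6 * (t + 2) ^ 2 + t * (t + 2) + 1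
        = (t + 2) ^ 2 * (2 * (t - 1)) + (t + 1) ^ 2 := by ring
      simp only [this]
      have : 0 ≤ t - 1 := by linarith
      positivity
  rw [max_le_iff] at hα1
  have h1 : 0 < α - 1 := by linarith
  refine ⟨α, (α + 1) / (α - 1), hα1.1, hα1.2, hα2, ?_, ?_, hα, ?_⟩
  · rw [lt_div_iff₀ h1]; linarith
  · rw [div_le_iff₀ h1]; nlinarith
  · field_simp

/-! ### The theorem for parameters below 200 -/

/-- A solution with `x > y > 0` lies near the asymptote `x = α y`. -/
lemma near_zero {α γ t x y : ℝ} (hα : 2.9 ≤ α) (hγ : 1 < γ)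
    (hroot : α ^ 4 - t * α ^ 3 - 6 * α ^ 2 + t * α + 1 = 0)
    (hγα : γ * (α - 1) = α + 1) (hy : 1 ≤ y) (hxy : y + 1 ≤ x)
    (hF : |x ^ 4 - t * x ^ 3 * y - 6 * x ^ 2 * y ^ 2 + t * x * y ^ 3 + y ^ 4| = 1) :
    |x - α * y| < 1 / 2 := by
  have hgi : γ⁻¹ ≤ 1 := inv_le_one_of_one_le₀ hγ.le
  have ha0 : 0 < α⁻¹ := by positivity
  have hb1 : 1 ≤ x - γ⁻¹ * y := by nlinarith
  have hb2 : 1 ≤ x + α⁻¹ * y := by nlinarith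
  have hb3 : 3 ≤ x + γ * y := by nlinarith
  rw [F_factor (by linarith) hroot hγα, abs_mul, abs_mul, abs_mul,
    abs_of_pos (by linarith : 0 < x - γ⁻¹ * y), abs_of_pos (by linarith : 0 < x + α⁻¹ * y),
    abs_of_pos (by linarith : 0 < x + γ * y)] at hF
  have h0 := abs_nonneg (x - α * y)
  have h1 : |x - α * y| * 1 * 1 * 3 ≤ 1 := by
    refine le_trans ?_ hF.le
    gcongr
  linarith

/-- A solution with `y > x > 0` lies near the asymptote `x = y / γ`. -/
lemma near_one {α γ t x y : ℝ} (hα : 2.9 ≤ α) (hγ : 1 < γ)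
    (hroot : α ^ 4 - t * α ^ 3 - 6 * α ^ 2 + t * α + 1 = 0)
    (hγα : γ * (α - 1) = α + 1) (hx : 1 ≤ x) (hxy : x + 1 ≤ y)
    (hF : |x ^ 4 - t * x ^ 3 * y - 6 * x ^ 2 * y ^ 2 + t * x * y ^ 3 + y ^ 4| = 1) :
    |x - γ⁻¹ * y| ≤ 1 / (6 * (α - 1)) := by
  have ha0 : 0 < α⁻¹ := by positivity
  have hb0 : 2 * (α - 1) ≤ α * y - x := by nlinarith
  have hb2 : 1 ≤ x + α⁻¹ * y := by nlinarith
  have hb3 : 3 ≤ x + γ * y := by nlinarith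
  have hneg : |x - α * y| = α * y - x := by rw [abs_sub_comm, abs_of_pos (by linarith)]
  rw [F_factor (by linarith) hroot hγα, abs_mul, abs_mul, abs_mul, hneg,
    abs_of_pos (by linarith : 0 < x + α⁻¹ * y),
    abs_of_pos (by linarith : 0 < x + γ * y)] at hF
  have h0 := abs_nonneg (x - γ⁻¹ * y)
  have hp : 0 ≤ α * y - x := by linarith
  have hp2 : 0 ≤ x + α⁻¹ * y := by linarith
  have h1 : 2 * (α - 1) * |x - γ⁻¹ * y| * 1 * 3 ≤ 1 := by
    refine le_trans ?_ hF.le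
    gcongr
  rw [le_div_iff₀ (by linarith)]
  linarith

/-- Lower bound for the large conjugate of the unit attached to a solution near `x = α y`. -/
lemma height_zero {α γ x y : ℝ} (hα : 2.9 ≤ α) (hγ : 1 < γ) (hy : 1 ≤ y)
    (hx : α * y - 1 / 2 ≤ x) :
    0.8 * α * x ^ 4 ≤ α * (x + α⁻¹ * y) ^ 2 * (x - γ⁻¹ * y) * (x + γ * y) := by
  have hgi : γ⁻¹ ≤ 1 := inv_le_one_of_one_le₀ hγ.le
  have ha0 : 0 < α⁻¹ := by positivity
  have hxy : 2.4 * y ≤ x := by nlinarith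
  have hx0 : 0 < x := by linarith
  have e1 : x ^ 2 ≤ (x + α⁻¹ * y) ^ 2 := by gcongr; nlinarith
  have e2 : x - y ≤ x - γ⁻¹ * y := by nlinarith
  have e3 : x + y ≤ x + γ * y := by nlinarith
  have e4 : 0.8 * x ^ 2 ≤ (x - y) * (x + y) := by nlinarith
  calc 0.8 * α * x ^ 4 = α * x ^ 2 * (0.8 * x ^ 2) := by ring
    _ ≤ α * x ^ 2 * ((x - y) * (x + y)) := by gcongr
    _ = α * x ^ 2 * (x - y) * (x + y) := by ring
    _ ≤ _ := by
      have : 0 ≤ x - y := by linarith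
      have : 0 ≤ x - γ⁻¹ * y := by linarith
      gcongr

/-- Lower bound for the large conjugate of the unit attached to a solution near `x = y / γ`. -/
lemma height_one {α γ x y : ℝ} (hα : 2.9 ≤ α) (hγ : 1 < γ) (hγα : γ * (α - 1) = α + 1)
    (hx : 0 < x) (hxy : x < y) :
    (α + 1) * y ^ 3 * (x + α⁻¹ * y) ≤ γ⁻¹ * (x + γ * y) ^ 2 * (x + α⁻¹ * y) * (α * y - x) := by
  have hy : 0 < y := by linarith
  have hb : 0 < x + α⁻¹ * y := by positivity
  have e1 : γ * y ^ 2 ≤ γ⁻¹ * (x + γ * y) ^ 2 := by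
    calc γ * y ^ 2 = γ⁻¹ * (γ * y) ^ 2 := by field_simp
      _ ≤ _ := by gcongr; linarith
  have e2 : (α - 1) * y ≤ α * y - x := by linarith
  have e3 : 0 ≤ (α - 1) * y := mul_nonneg (by linarith) hy.le
  calc (α + 1) * y ^ 3 * (x + α⁻¹ * y) = γ * y ^ 2 * (x + α⁻¹ * y) * ((α - 1) * y) := by
        rw [← hγα]; ring
    _ ≤ _ := by gcongr

lemma small_case {t : ℕ} (ht : 0 < t) (ht3 : t ≠ 3) (ht2 : t < 200) {x y : ℕ} (hx : 0 < x)
    (hy : 0 < y)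
    (hF : |(x : ℝ) ^ 4 - t * x ^ 3 * y - 6 * x ^ 2 * y ^ 2 + t * x * y ^ 3 + y ^ 4| = 1) :
    (t = 1 ∧ x = 1 ∧ y = 2) ∨ (t = 4 ∧ x = 2 ∧ y = 3) := by
  have ht1r : (1 : ℝ) ≤ t := by exact_mod_cast ht
  obtain ⟨α, γ, hα, htα, -, hγ1, hγα, hroot, hγ⟩ := exists_root ht1r
  have hα1 : 1 < α := by linarith
  obtain ⟨Q⟩ := exists_qfield (t : ℤ) (by exact_mod_cast ht) (by exact_mod_cast ht3) hα1
    (by exact_mod_cast hroot) hγ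
  obtain ⟨G, hG, hcl, hno⟩ := no_rel_small ht ht3 ht2 Q (by linarith) hγ1 hγα hroot hγ
  have hxr : (1 : ℝ) ≤ x := by exact_mod_cast hx
  have hyr : (1 : ℝ) ≤ y := by exact_mod_cast hy
  have hmin : 8 ≤ minHeight t := by
    unfold minHeight
    split_ifs with h
    · norm_num
    · have : (50 : ℝ) ≤ t := by exact_mod_cast (by omega : 50 ≤ t)
      have h2 : (50 : ℝ) ^ 5 ≤ t ^ 5 := by gcongr
      linarith
  rcases lt_trichotomy x y with hxy | hxy | hxy
  · have hxyr : (x : ℝ) + 1 ≤ y := by exact_mod_cast hxy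
    have hn := near_one hα hγ1 hroot hγ hxr hxyr hF
    have hn1 : |(x : ℝ) - γ⁻¹ * y| ≤ 1 / (6 * 1.9) :=
      hn.trans (one_div_le_one_div_of_le (by norm_num) (by linarith))
    have hn2 : |(x : ℝ) - γ⁻¹ * y| < 1 / 2 := hn1.trans_lt (by norm_num)
    by_cases hsm : t < 50 ∧ y ≤ 64
    · exact brute_sound ht ht3 hsm.1 (by linarith) hγ1 hroot hγ hx hy hsm.2 hF (Or.inr hn2)
    · exfalso
      have hH : minHeight t ≤ γ⁻¹ * (x + γ * y) ^ 2 * (x + α⁻¹ * y) * (α * y - x) := by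
        refine le_trans ?_ (height_one hα hγ1 hγ (by linarith) (by linarith))
        have hg : γ⁻¹ = 1 - 2 / (α + 1) := by
          have : α + 1 ≠ 0 := by linarith
          have : γ ≠ 0 := by linarith
          field_simp; linarith
        unfold minHeight
        split_ifs with h50
        · have hy65 : (65 : ℝ) ≤ y := by exact_mod_cast (by omega : 65 ≤ y)
          have e1 : 0.82 ≤ γ⁻¹ + α⁻¹ := by
            have : 1 - 2 / (α + 1) + α⁻¹ - 0.82 = (0.18 * α ^ 2 - 0.82 * α + 1) / (α * (α + 1)) := by
              field_simp; ring
            rw [hg, ← sub_nonneg, this]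
            refine div_nonneg ?_ (by positivity)
            nlinarith [sq_nonneg (α - 2.28)]
          have e2 : 52.8 ≤ (x : ℝ) + α⁻¹ * y := by
            have := (abs_le.mp hn2.le).1
            nlinarith
          calc (50000000 : ℝ) ≤ (2.9 + 1) * 65 ^ 3 * 52.8 := by norm_num
            _ ≤ _ := by gcongr
        · have ht50 : (50 : ℝ) ≤ t := by exact_mod_cast (by omega : 50 ≤ t)
          have hn3 : |(x : ℝ) - γ⁻¹ * y| ≤ 0.004 := by
            refine hn.trans ?_
            rw [div_le_iff₀ (by linarith)]; linarith
          obtain ⟨n1, n2⟩ := abs_le.mp hn3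
          have e0 : (γ⁻¹ * y : ℝ) = y - 2 * (y / (α + 1)) := by rw [hg]; ring
          rw [e0] at n1 n2
          have e1 : 0.495 * (α + 1) ≤ y := by
            have : 0.495 ≤ (y : ℝ) / (α + 1) := by linarith
            rwa [le_div_iff₀ (by linarith)] at this
          have e2 : 0.94 * y ≤ (x : ℝ) := by
            have : (y : ℝ) / (α + 1) ≤ y / 50 := by gcongr; linarith
            linarith
          have e3 : 0.94 * y ≤ (x : ℝ) + α⁻¹ * y := by
            have : 0 ≤ α⁻¹ * (y : ℝ) := by positivity
            linarith
          calc (t : ℝ) ^ 5 / 20 ≤ (α + 1) ^ 5 / 20 := by gcongr; linarith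
            _ ≤ (α + 1) * (0.495 * (α + 1)) ^ 3 * (0.94 * (0.495 * (α + 1))) := by
              have : 0 ≤ (α + 1) ^ 5 := by positivity
              have e : (α + 1) * (0.495 * (α + 1)) ^ 3 * (0.94 * (0.495 * (α + 1)))
                = (0.495 ^ 4 * 0.94) * (α + 1) ^ 5 := by ring
              rw [e]
              have : (1 / 20 : ℝ) ≤ 0.495 ^ 4 * 0.94 := by norm_num
              nlinarith
            _ ≤ (α + 1) * y ^ 3 * (0.94 * y) := by gcongr
            _ ≤ _ := by gcongr
      obtain ⟨j, hj1, hj2, A, b, h1, h2⟩ := rel_case_one (x := x) (y := y) Q (by linarith) hγ1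
        hroot hγ (by exact_mod_cast hx) (by exact_mod_cast hxy) (by exact_mod_cast hF) rfl
        (by push_cast; exact hmin.trans hH) hG hcl
      push_cast at h1 h2
      exact hno _ hH j hj1 hj2 A b h1 h2
  · exfalso
    rw [hxy] at hF
    have e : (y : ℝ) ^ 4 - t * y ^ 3 * y - 6 * y ^ 2 * y ^ 2 + t * y * y ^ 3 + y ^ 4
      = -(4 * y ^ 4) := by ring
    rw [e, abs_neg, abs_of_pos (by positivity)] at hF
    have : (1 : ℝ) ^ 4 ≤ y ^ 4 := by gcongr
    linarith
  · have hxyr : (y : ℝ) + 1 ≤ x := by exact_mod_cast hxy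
    have hn := near_zero hα hγ1 hroot hγ hyr hxyr hF
    by_cases hsm : t < 50 ∧ y ≤ 64
    · exact brute_sound ht ht3 hsm.1 (by linarith) hγ1 hroot hγ hx hy hsm.2 hF (Or.inl hn)
    · exfalso
      have hn1 := (abs_lt.mp hn).1
      have hH : minHeight t ≤ α * (x + α⁻¹ * y) ^ 2 * (x - γ⁻¹ * y) * (x + γ * y) := by
        refine le_trans ?_ (height_zero hα hγ1 hyr (by linarith))
        unfold minHeight
        split_ifs with h50
        · have hy65 : (65 : ℝ) ≤ y := by exact_mod_cast (by omega : 65 ≤ y)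
          have e1 : (150 : ℝ) ≤ x := by nlinarith
          calc (50000000 : ℝ) ≤ 0.8 * 2.9 * 150 ^ 4 := by norm_num
            _ ≤ _ := by gcongr
        · have ht50 : (50 : ℝ) ≤ t := by exact_mod_cast (by omega : 50 ≤ t)
          have e1 : 0.99 * α ≤ x := by nlinarith
          calc (t : ℝ) ^ 5 / 20 ≤ α ^ 5 / 20 := by gcongr
            _ ≤ 0.8 * α * (0.99 * α) ^ 4 := by
              have : 0 ≤ α ^ 5 := by positivity
              have e : 0.8 * α * (0.99 * α) ^ 4 = (0.8 * 0.99 ^ 4) * α ^ 5 := by ring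
              rw [e]
              have : (1 / 20 : ℝ) ≤ 0.8 * 0.99 ^ 4 := by norm_num
              nlinarith
            _ ≤ _ := by gcongr
      obtain ⟨j, hj1, hj2, A, b, h1, h2⟩ := rel_case_zero (x := x) (y := y) Q (by linarith) hγ1
        hroot hγ (by exact_mod_cast hy) (by exact_mod_cast hxy) (by exact_mod_cast hF) rfl
        (by push_cast; exact hmin.trans hH) hG hcl
      push_cast at h1 h2
      exact hno _ hH j hj1 hj2 A b h1 h2

/-! ### The hypergeometric polynomials -/

lemma factorial_mul_choose {R : Type*} [CommRing R] [BinomialRing R] (r : R) (k : ℕ) :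
    (k.factorial : R) * Ring.choose r k = ∏ i ∈ Finset.range k, (r - i) := by
  have h := Ring.descPochhammer_eq_factorial_smul_choose r k
  rw [nsmul_eq_mul] at h
  rw [← h]
  clear h
  induction k with
  | zero => simp
  | succ k ih =>
    rw [Finset.prod_range_succ, ← ih, descPochhammer_succ_right, Polynomial.smeval_mul,
      Polynomial.smeval_sub, Polynomial.smeval_X, Polynomial.smeval_natCast]
    simp

lemma succ_mul_choose_succ (r : ℝ) (k : ℕ) :
    ((k : ℝ) + 1) * Ring.choose r (k + 1) = (r - k) * Ring.choose r k := by
  have h1 := factorial_mul_choose r (k + 1)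
  have h2 := factorial_mul_choose r k
  rw [Finset.prod_range_succ, ← h2, Nat.factorial_succ] at h1
  push_cast at h1
  have : (k.factorial : ℝ) ≠ 0 := by positivity
  apply mul_left_cancel₀ this
  linear_combination h1

lemma succ_mul_choose_succ' (r : ℝ) (k : ℕ) :
    ((k : ℝ) + 1) * Ring.choose (r + 1) (k + 1) = (r + 1) * Ring.choose r k := by
  have h1 := Ring.choose_succ_succ r k
  have h2 := succ_mul_choose_succ r k
  rw [h1]; linear_combination h2

/-- The coefficients of the denominator `∑ₖ hc n k xᵏ` of the diagonal Padé approximant of order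
`n` of `x ^ (1 / 4)` at `x = 1`. -/
noncomputable def hc (n k : ℕ) : ℝ :=
  Ring.choose ((n : ℝ) + 1 / 4) (n - k) * Ring.choose ((n : ℝ) - 1 / 4) k

/-- The coefficients of `∑ₖ hc n k xᵏ` with respect to the powers of `x - 1`. -/
noncomputable def hq (n j : ℕ) : ℝ :=
  Ring.choose ((n : ℝ) - 1 / 4) j * ((2 * n - j).choose (n - j) : ℕ)

/-- Re-expansion of the polynomial around `1`, by the Chu–Vandermonde identity. -/
lemma sum_hc_mul_choose {n j : ℕ} (hj : j ≤ n) :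
    ∑ k ∈ Finset.range (n + 1), hc n k * (k.choose j : ℕ) = hq n j := by
  obtain ⟨b, rfl⟩ := Nat.exists_eq_add_of_le hj
  rw [add_assoc, Finset.sum_range_add, Finset.sum_eq_zero (s := Finset.range j), zero_add]
  swap
  · intro k hk
    rw [Nat.choose_eq_zero_of_lt (Finset.mem_range.mp hk)]; simp
  have hV := Ring.add_choose_eq (R := ℝ) (r := ((j + b : ℕ) : ℝ) - 1 / 4 - j)
    (s := ((j + b : ℕ) : ℝ) + 1 / 4) b (Commute.all _ _)
  rw [Finset.Nat.sum_antidiagonal_eq_sum_range_succ (fun x y =>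
    Ring.choose (((j + b : ℕ) : ℝ) - 1 / 4 - j) x * Ring.choose (((j + b : ℕ) : ℝ) + 1 / 4) y)] at hV
  have hN : ((j + b : ℕ) : ℝ) - 1 / 4 - j + (((j + b : ℕ) : ℝ) + 1 / 4)
      = ((2 * (j + b) - j : ℕ) : ℝ) := by
    have : 2 * (j + b) - j = j + 2 * b := by omega
    rw [this]; push_cast; ring
  rw [hN, Ring.choose_natCast] at hV
  unfold hq
  rw [Nat.add_sub_cancel_left, hV, Finset.mul_sum]
  refine Finset.sum_congr rfl fun i hi => ?_
  have hs := Ring.choose_add_smul_choose (((j + b : ℕ) : ℝ) - 1 / 4 - j) i j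
  rw [nsmul_eq_mul, sub_add_cancel] at hs
  unfold hc
  have e1 : j + b - (j + i) = b - i := by omega
  rw [e1, show j + i = i + j by ring]
  linear_combination (Ring.choose (((j + b : ℕ) : ℝ) + 1 / 4) (b - i)) * hs

lemma sum_hc_eq_sum_hq (n : ℕ) (w d : ℂ) :
    ∑ k ∈ Finset.range (n + 1), (hc n k : ℂ) * ((w + d) ^ k * w ^ (n - k))
      = ∑ j ∈ Finset.range (n + 1), (hq n j : ℂ) * (d ^ j * w ^ (n - j)) := by
  have h1 : ∀ k ∈ Finset.range (n + 1), (hc n k : ℂ) * ((w + d) ^ k * w ^ (n - k))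
      = ∑ j ∈ Finset.range (n + 1), ((hc n k * (k.choose j : ℕ) : ℝ) : ℂ)
        * (d ^ j * w ^ (n - j)) := by
    intro k hk
    have hk' : k ≤ n := by simpa [Nat.lt_succ_iff] using hk
    have h2 : ∑ j ∈ Finset.range (n + 1), ((hc n k * (k.choose j : ℕ) : ℝ) : ℂ)
        * (d ^ j * w ^ (n - j)) = ∑ j ∈ Finset.range (k + 1),
        ((hc n k * (k.choose j : ℕ) : ℝ) : ℂ) * (d ^ j * w ^ (n - j)) := by
      symm
      apply Finset.sum_subset (Finset.range_mono (by omega))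
      intro j _ hj
      rw [Nat.choose_eq_zero_of_lt (by simpa using hj)]; simp
    rw [h2, add_comm w d, add_pow, Finset.sum_mul, Finset.mul_sum]
    refine Finset.sum_congr rfl fun j hj => ?_
    have hj' : j ≤ k := by simpa [Nat.lt_succ_iff] using hj
    rw [show n - j = (k - j) + (n - k) by omega, pow_add]
    push_cast; ring
  rw [Finset.sum_congr rfl h1, Finset.sum_comm]
  refine Finset.sum_congr rfl fun j hj => ?_
  rw [← Finset.sum_mul, ← sum_hc_mul_choose (by simpa [Nat.lt_succ_iff] using hj)]
  push_cast; rfl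

/-! ### Integrality -/

lemma factorial_dvd_two_pow_mul_prod (a : ℤ) (j : ℕ) :
    (j.factorial : ℤ) ∣ 2 ^ j * ∏ i ∈ Finset.range j, (a - 4 * i) := by
  obtain ⟨v, r, hr, hf⟩ := Nat.exists_eq_two_pow_mul_odd (Nat.factorial_ne_zero j)
  have hv : v ≤ j := by
    rcases Nat.eq_zero_or_pos j with h0 | h0
    · subst h0
      simp only [Nat.factorial_zero] at hf
      by_contra hc
      have : 2 ∣ 1 := hf ▸ Dvd.dvd.mul_right (dvd_pow_self 2 (by omega)) r
      omega
    · have h := Nat.emultiplicity_two_factorial_lt (n := j) (by omega)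
      have h2 : (v : ℕ∞) ≤ emultiplicity 2 j.factorial :=
        le_emultiplicity_of_pow_dvd (hf ▸ Dvd.intro _ rfl)
      have := lt_of_le_of_lt h2 h
      exact_mod_cast this.le
  have hcop : IsCoprime (4 : ℤ) (r : ℤ) := by
    have : Nat.Coprime 4 r := by
      have h2 : Nat.Coprime 2 r := (Nat.coprime_two_left).mpr hr
      exact Nat.Coprime.pow_left 2 h2
    exact_mod_cast Nat.isCoprime_iff_coprime.mpr this
  obtain ⟨s, s', hs⟩ := hcop
  have hrd : (r : ℤ) ∣ ∏ i ∈ Finset.range j, (a - 4 * i) := by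
    have h1 : (∏ i ∈ Finset.range j, (a - 4 * i)) ≡ ∏ i ∈ Finset.range j, (4 * (s * a - i))
        [ZMOD r] := by
      apply Int.ModEq.prod
      intro i _
      rw [Int.modEq_iff_dvd]
      exact ⟨- s' * a, by linear_combination a * hs⟩
    rw [Int.ModEq.dvd_iff h1]
    rw [Finset.prod_mul_distrib, ← factorial_mul_choose (s * a) j, hf]
    push_cast
    exact ⟨(∏ _x ∈ Finset.range j, 4) * 2 ^ v * Ring.choose (s * a) j, by ring⟩
  rw [hf]
  push_cast
  exact mul_dvd_mul (pow_dvd_pow 2 hv) hrd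

lemma hq_integral (n j : ℕ) : ∃ z : ℤ, (8 : ℝ) ^ j * hq n j = z := by
  obtain ⟨z, hz⟩ := factorial_dvd_two_pow_mul_prod (4 * n - 1) j
  refine ⟨z * ((2 * n - j).choose (n - j) : ℕ), ?_⟩
  have h1 := factorial_mul_choose ((n : ℝ) - 1 / 4) j
  have h2 : (8 : ℝ) ^ j * ∏ i ∈ Finset.range j, ((n : ℝ) - 1 / 4 - i) = j.factorial * z := by
    have h3 : ((2 ^ j * ∏ i ∈ Finset.range j, ((4 * n - 1 : ℤ) - 4 * i) : ℤ) : ℝ)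
      = ((j.factorial * z : ℤ) : ℝ) := by rw [hz]
    push_cast at h3
    rw [← h3, show (8 : ℝ) = 2 * 4 by norm_num, mul_pow, mul_assoc,
      ← Finset.card_range j, ← Finset.prod_const (4 : ℝ), Finset.card_range,
      ← Finset.prod_mul_distrib]
    congr 1
    exact Finset.prod_congr rfl fun i _ => by ring
  have h0 : (j.factorial : ℝ) ≠ 0 := by positivity
  unfold hq
  push_cast
  have h4 : (8 : ℝ) ^ j * Ring.choose ((n : ℝ) - 1 / 4) j = z := by
    apply mul_left_cancel₀ h0
    rw [← h2, ← h1]; ring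
  rw [← h4]; ring

/-! ### The three-term recurrence -/

/-- The polynomial `∑ₖ hc n k xᵏ` in the variable `x - 1`. -/
noncomputable def hpoly (n : ℕ) : Polynomial ℝ :=
  ∑ j ∈ Finset.range (n + 1), Polynomial.monomial j (hq n j)

lemma hpoly_coeff (n j : ℕ) : (hpoly n).coeff j = if j ≤ n then hq n j else 0 := by
  unfold hpoly
  rw [Polynomial.finsetSum_coeff]
  simp only [Polynomial.coeff_monomial, Finset.sum_ite_eq', Finset.mem_range, Nat.lt_succ_iff]

lemma choose_rel (a b : ℕ) :
    ((a + b + 1).choose b : ℝ) * (a + 1) = (a + b + 1) * ((a + b).choose b : ℝ) := by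
  have h := Nat.add_one_mul_choose_eq (a + b) a
  have e1 : (a + b + 1).choose (a + 1) = (a + b + 1).choose b := by
    rw [← Nat.choose_symm_of_eq_add (n := a + b + 1) (a := a + 1) (b := b) (by omega)]
  have e2 : (a + b).choose a = (a + b).choose b := Nat.choose_symm_of_eq_add rfl
  rw [e1, e2] at h
  have h' : ((a + b + 1 : ℕ) : ℝ) * ((a + b).choose b : ℕ) = ((a + b + 1).choose b : ℕ) * ((a + 1 : ℕ) : ℝ) := by
    exact_mod_cast h
  push_cast at h'
  linarith

lemma choose_rel' (a b : ℕ) :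
    ((a + b + 1).choose b : ℝ) * (a + 1) = (b + 1) * ((a + b + 1).choose (b + 1) : ℝ) := by
  have h := Nat.choose_succ_right_eq (a + b + 1) b
  have h' : (((a + b + 1).choose (b + 1) : ℕ) : ℝ) * ((b + 1 : ℕ) : ℝ)
      = ((a + b + 1).choose b : ℕ) * ((a + b + 1 - b : ℕ) : ℝ) := by exact_mod_cast h
  rw [show a + b + 1 - b = a + 1 by omega] at h'
  push_cast at h'
  linarith

lemma hq_zero (n : ℕ) : hq n 0 = ((2 * n).choose n : ℕ) := by
  simp [hq]

lemma hpoly_rec (n : ℕ) :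
    Polynomial.C (((n : ℝ) + 1) * (n + 2)) * hpoly (n + 2)
      = Polynomial.C (((n : ℝ) + 1) * (2 * n + 3)) * (2 + Polynomial.X) * hpoly (n + 1)
        - Polynomial.C (((n : ℝ) + 1) ^ 2 - 1 / 16) * (Polynomial.X * (Polynomial.X * hpoly n)) := by
  have e : Polynomial.C (((n : ℝ) + 1) * (2 * n + 3)) * (2 + Polynomial.X) * hpoly (n + 1)
      = Polynomial.C (2 * (((n : ℝ) + 1) * (2 * n + 3))) * hpoly (n + 1)
        + Polynomial.C (((n : ℝ) + 1) * (2 * n + 3)) * (Polynomial.X * hpoly (n + 1)) := by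
    rw [Polynomial.C_mul (a := 2), Polynomial.C_ofNat]; ring
  rw [e]
  ext j
  simp only [Polynomial.coeff_sub, Polynomial.coeff_add, Polynomial.coeff_C_mul]
  rcases j with _ | _ | i
  · simp only [Polynomial.coeff_X_mul_zero, hpoly_coeff, Nat.zero_le, if_true, hq_zero]
    have h1 := choose_rel (n + 2) (n + 1)
    have h2 := choose_rel' (n + 2) (n + 1)
    have h3 := choose_rel (n + 1) (n + 1)
    rw [show n + 2 + (n + 1) + 1 = 2 * (n + 2) by ring] at h1 h2
    rw [show n + 2 + (n + 1) = n + 1 + (n + 1) + 1 by ring] at h1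
    rw [show n + 1 + (n + 1) = 2 * (n + 1) by ring] at h1 h3
    rw [show n + 1 + 1 = n + 2 by ring] at h2
    push_cast at h1 h2 h3
    linear_combination (-((n : ℝ) + 1)) * h2 + ((n : ℝ) + 1) * h1 + 2 * ((n : ℝ) + 1) * h3
  · simp only [Polynomial.coeff_X_mul, Polynomial.coeff_X_mul_zero, hpoly_coeff]
    rw [if_pos (by omega), if_pos (by omega), if_pos (by omega), hq_zero]
    unfold hq
    rw [zero_add, Ring.choose_one_right, Ring.choose_one_right]
    have h1 := choose_rel (n + 1) (n + 1)
    have h2 := choose_rel' n n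
    have h3 := choose_rel n (n + 1)
    rw [show 2 * (n + 2) - 1 = n + 1 + (n + 1) + 1 by omega, show n + 2 - 1 = n + 1 by omega,
      show 2 * (n + 1) - 1 = n + n + 1 by omega, show n + 1 - 1 = n by omega,
      show 2 * (n + 1) = n + (n + 1) + 1 by ring]
    rw [show n + 1 + (n + 1) = n + (n + 1) + 1 by ring] at h1 ⊢
    rw [show n + (n + 1) = n + n + 1 by ring] at h1 h3 ⊢
    push_cast at h1 h2 h3 ⊢
    have hn : (n : ℝ) + 1 ≠ 0 := by positivity
    have h4 : ((n + n + 1).choose n : ℝ) = ((n + n + 1).choose (n + 1) : ℝ) := by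
      apply mul_left_cancel₀ hn; linear_combination h2
    have h5 : ((n + n + 1 + 1).choose (n + 1) : ℝ) = 2 * ((n + n + 1).choose (n + 1) : ℝ) := by
      apply mul_left_cancel₀ hn; linear_combination h3
    rw [h4]
    rw [h5] at h1 ⊢
    linear_combination ((n : ℝ) + 1) * (n + 7 / 4) * h1
  · simp only [Polynomial.coeff_X_mul, hpoly_coeff]
    by_cases hi : i ≤ n
    swap
    · rw [if_neg (by omega), if_neg (by omega), if_neg (by omega), if_neg (by omega)]; ring
    obtain ⟨b, rfl⟩ := Nat.exists_eq_add_of_le hi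
    have a1 := succ_mul_choose_succ' (((i + b : ℕ) : ℝ) - 1 / 4) i
    have a2 := succ_mul_choose_succ (((i + b + 1 : ℕ) : ℝ) - 1 / 4) (i + 1)
    have a3 := succ_mul_choose_succ' (((i + b + 1 : ℕ) : ℝ) - 1 / 4) (i + 1)
    rw [show ((i + b : ℕ) : ℝ) - 1 / 4 + 1 = ((i + b + 1 : ℕ) : ℝ) - 1 / 4 by push_cast; ring] at a1
    rw [show ((i + b + 1 : ℕ) : ℝ) - 1 / 4 + 1 = ((i + b + 2 : ℕ) : ℝ) - 1 / 4 by
      push_cast; ring] at a3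
    have b1 := choose_rel (i + b) b
    have b2 := choose_rel (i + b + 1) b
    rw [if_pos (show i + 1 + 1 ≤ i + b + 2 by omega), if_pos (show i + 1 ≤ i + b + 1 by omega),
      if_pos (show i ≤ i + b by omega)]
    have hx : (if i + 1 + 1 ≤ i + b + 1 then hq (i + b + 1) (i + 1 + 1) else 0) * (i + b + 1)
        = Ring.choose (((i + b + 1 : ℕ) : ℝ) - 1 / 4) (i + 2) * (b * ((i + b + b).choose b : ℕ)) := by
      rcases b with _ | b
      · rw [if_neg (by omega)]; simp
      · rw [if_pos (by omega)]
        have b3 := choose_rel' (i + b + 1) b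
        unfold hq
        rw [show 2 * (i + (b + 1) + 1) - (i + 1 + 1) = i + b + 1 + b + 1 by omega,
          show i + (b + 1) + 1 - (i + 1 + 1) = b by omega,
          show i + (b + 1) + (b + 1) = i + b + 1 + b + 1 by ring]
        push_cast at b3 ⊢
        linear_combination (Ring.choose ((i : ℝ) + (b + 1) + 1 - 1 / 4) (i + 2)) * b3
    have hn : (i : ℝ) + b + 1 ≠ 0 := by positivity
    have hn2 : (i : ℝ) + b + 2 ≠ 0 := by positivity
    have hi1 : (i : ℝ) + 1 ≠ 0 := by positivity
    have hi2 : (i : ℝ) + 2 ≠ 0 := by positivity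
    rw [← eq_div_iff (by exact_mod_cast hn)] at hx
    rw [hx]
    unfold hq
    rw [show 2 * (i + b + 2) - (i + 1 + 1) = i + b + 1 + b + 1 by omega,
      show i + b + 2 - (i + 1 + 1) = b by omega,
      show 2 * (i + b + 1) - (i + 1) = i + b + b + 1 by omega,
      show i + b + 1 - (i + 1) = b by omega,
      show 2 * (i + b) - i = i + b + b by omega, show i + b - i = b by omega,
      show i + 1 + 1 = i + 2 by ring]
    rw [show i + b + 1 + b = i + b + b + 1 by ring] at b2 ⊢
    rw [show i + 1 + 1 = i + 2 by ring] at a2 a3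
    push_cast at a1 a2 a3 b1 b2 ⊢
    have b1' := (eq_div_iff (by exact_mod_cast hn)).mpr b1
    have b2' := (eq_div_iff (by positivity)).mpr b2
    have a1' := (eq_div_iff hi1).mpr ((mul_comm _ _).trans a1)
    have a2' := (eq_div_iff (by positivity)).mpr ((mul_comm _ _).trans a2)
    have a3' := (eq_div_iff (by positivity)).mpr ((mul_comm _ _).trans a3)
    rw [b2', b1', a3', a2', a1']
    have hi2' : (i : ℝ) + 1 + 1 ≠ 0 := by positivity
    have hn2' : (i : ℝ) + b + 1 + 1 ≠ 0 := by positivity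
    field_simp
    ring

/-- The homogeneous hypergeometric polynomial in the variables `w + d` and `w`. -/
noncomputable def hP (w d : ℂ) (n : ℕ) : ℂ :=
  ∑ j ∈ Finset.range (n + 1), (hq n j : ℂ) * (d ^ j * w ^ (n - j))

lemma hP_eq_aeval {w : ℂ} (hw : w ≠ 0) (d : ℂ) (n : ℕ) :
    hP w d n = w ^ n * Polynomial.aeval (d / w) (hpoly n) := by
  unfold hP hpoly
  rw [map_sum, Finset.mul_sum]
  refine Finset.sum_congr rfl fun j hj => ?_
  have hj' : j ≤ n := by simpa [Nat.lt_succ_iff] using hj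
  rw [Polynomial.aeval_monomial, show n = (n - j) + j by omega, pow_add, Nat.add_sub_cancel,
    div_pow]
  simp only [Complex.coe_algebraMap]
  field_simp

lemma hP_rec {w : ℂ} (hw : w ≠ 0) (d : ℂ) (n : ℕ) :
    ((n : ℂ) + 1) * (n + 2) * hP w d (n + 2)
      = (n + 1) * (2 * n + 3) * (2 * w + d) * hP w d (n + 1)
        - ((n + 1) ^ 2 - 1 / 16) * d ^ 2 * hP w d n := by
  have h := congrArg (Polynomial.aeval (d / w)) (hpoly_rec n)
  simp only [map_mul, map_sub, map_add, Polynomial.aeval_C, Polynomial.aeval_X,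
    Complex.coe_algebraMap, map_ofNat] at h
  push_cast at h
  rw [hP_eq_aeval hw, hP_eq_aeval hw, hP_eq_aeval hw]
  have e : ((n : ℂ) + 1) * (n + 2) * (w ^ (n + 2) * Polynomial.aeval (d / w) (hpoly (n + 2)))
      = w ^ (n + 2) * (((n : ℂ) + 1) * (n + 2) * Polynomial.aeval (d / w) (hpoly (n + 2))) := by
    ring
  rw [e, h]
  field_simp
  ring

lemma hP_zero (w d : ℂ) : hP w d 0 = 1 := by simp [hP, hq]

lemma hP_one (w d : ℂ) : hP w d 1 = 2 * w + 3 / 4 * d := by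
  unfold hP
  rw [Finset.sum_range_succ, Finset.sum_range_one]
  simp only [hq, Ring.choose_zero_right, Ring.choose_one_right]
  norm_num

/-- The value of the `n`-th polynomial at `u = t + 4 i` and its conjugate. -/
noncomputable def hV (t : ℝ) (n : ℕ) : ℂ := hP ⟨t, -4⟩ ⟨0, 8⟩ n

/-- Consecutive values are linearly independent over `ℝ`, as the three-term recurrence turns the
determinant into a nonzero multiple of the preceding one. -/
lemma hV_det (t : ℝ) (n : ℕ) :
    (hV t n).re * (hV t (n + 1)).im - (hV t n).im * (hV t (n + 1)).re ≠ 0 := by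
  have hw : (⟨t, -4⟩ : ℂ) ≠ 0 := by
    intro h
    have := congrArg Complex.im h
    simp at this
  induction n with
  | zero =>
    unfold hV
    rw [zero_add, hP_zero, hP_one]
    simp
    norm_num
  | succ n ih =>
    have h := hP_rec hw ⟨0, 8⟩ n
    have e1 : (2 * (⟨t, -4⟩ : ℂ) + ⟨0, 8⟩) = ((2 * t : ℝ) : ℂ) := by
      apply Complex.ext <;> simp
      norm_num
    have e2 : (⟨0, 8⟩ : ℂ) ^ 2 = ((-64 : ℝ) : ℂ) := by
      rw [pow_two]
      apply Complex.ext <;> simp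
      norm_num
    rw [e1, e2] at h
    change ((n : ℂ) + 1) * (n + 2) * hV t (n + 2) = (n + 1) * (2 * n + 3) * ((2 * t : ℝ) : ℂ)
      * hV t (n + 1) - ((n + 1) ^ 2 - 1 / 16) * ((-64 : ℝ) : ℂ) * hV t n at h
    have h' : ((((n : ℝ) + 1) * (n + 2) : ℝ) : ℂ) * hV t (n + 2)
        = ((((n : ℝ) + 1) * (2 * n + 3) * (2 * t) : ℝ) : ℂ) * hV t (n + 1)
          - ((((n + 1) ^ 2 - 1 / 16) * (-64) : ℝ) : ℂ) * hV t n := by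
      push_cast at h ⊢
      linear_combination h
    have hre := congrArg Complex.re h'
    have him := congrArg Complex.im h'
    simp only [Complex.sub_re, Complex.sub_im, Complex.re_ofReal_mul, Complex.im_ofReal_mul] at hre him
    intro h0
    rw [show n + 1 + 1 = n + 2 by ring] at h0
    have hk : (((n : ℝ) + 1) ^ 2 - 1 / 16) * 64 *
        ((hV t n).re * (hV t (n + 1)).im - (hV t n).im * (hV t (n + 1)).re) = 0 := by
      linear_combination (-((n : ℝ) + 1) * (n + 2)) * h0 + (hV t (n + 1)).re * him
        - (hV t (n + 1)).im * hre
    have hpos : 0 < (((n : ℝ) + 1) ^ 2 - 1 / 16) * 64 := by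
      have : (0 : ℝ) ≤ n := by positivity
      nlinarith
    rcases mul_eq_zero.mp hk with h1 | h1
    · exact hpos.ne' h1
    · exact ih h1

/-- The imaginary part of `hV t n * (X + i Y)`. For a solution it is of absolute value less
than `1` for a suitable `n`, while it is an integer. -/
noncomputable def hD (t : ℝ) (X Y : ℤ) (n : ℕ) : ℝ := (hV t n).re * Y + (hV t n).im * X

lemma hD_ne_zero (t : ℝ) {X Y : ℤ} (hX : X ≠ 0) (n : ℕ) :
    hD t X Y n ≠ 0 ∨ hD t X Y (n + 1) ≠ 0 := by
  by_contra hcon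
  push Not at hcon
  obtain ⟨h1, h2⟩ := hcon
  unfold hD at h1 h2
  have hXr : (X : ℝ) ≠ 0 := by exact_mod_cast hX
  have : ((hV t n).re * (hV t (n + 1)).im - (hV t n).im * (hV t (n + 1)).re) * X = 0 := by
    linear_combination (hV t n).re * h2 - (hV t (n + 1)).re * h1
  rcases mul_eq_zero.mp this with h | h
  · exact hV_det t n h
  · exact hXr h

/-- The factor `8` in the difference `8i` of the two arguments clears the denominators of `hq`. -/
lemma hV_mem (t : ℤ) (n : ℕ) : ∃ z : GaussianInt, hV t n = GaussianInt.toComplex z := by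
  have : hV t n ∈ GaussianInt.toComplex.range := by
    unfold hV hP
    refine Subring.sum_mem _ fun j _ => ?_
    obtain ⟨z, hz⟩ := hq_integral n j
    have e : (hq n j : ℂ) * ((⟨0, 8⟩ : ℂ) ^ j * (⟨(t : ℝ), -4⟩ : ℂ) ^ (n - j))
        = (z : ℂ) * ((Complex.I) ^ j * (⟨(t : ℝ), -4⟩ : ℂ) ^ (n - j)) := by
      have h8 : (⟨0, 8⟩ : ℂ) = 8 * Complex.I := by
        apply Complex.ext <;> simp
      have hz' : (8 : ℂ) ^ j * (hq n j : ℂ) = z := by exact_mod_cast congrArg (fun x : ℝ => (x : ℂ)) hz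
      rw [h8, mul_pow, ← hz']; ring
    rw [e]
    refine Subring.mul_mem _ (intCast_mem _ z) (Subring.mul_mem _ (Subring.pow_mem _ ?_ _)
      (Subring.pow_mem _ ?_ _))
    · exact ⟨⟨0, 1⟩, by simp [GaussianInt.toComplex_def]⟩
    · refine ⟨⟨t, -4⟩, ?_⟩
      rw [GaussianInt.toComplex_def]
      apply Complex.ext <;> simp
  obtain ⟨z, hz⟩ := this
  exact ⟨z, hz.symm⟩

lemma one_le_abs_hD (t : ℤ) {X Y : ℤ} {n : ℕ} (h : hD t X Y n ≠ 0) : 1 ≤ |hD t X Y n| := by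
  obtain ⟨z, hz⟩ := hV_mem t n
  have e : hD t X Y n = ((z.re * Y + z.im * X : ℤ) : ℝ) := by
    unfold hD
    rw [hz, ← GaussianInt.intCast_re, ← GaussianInt.intCast_im]
    push_cast; rfl
  rw [e] at h ⊢
  have hz : z.re * Y + z.im * X ≠ 0 := by exact_mod_cast h
  exact_mod_cast Int.one_le_abs hz

/-! ### The coefficients as divided-difference weights -/

/-- The frequencies occurring in the value of the `n`-th polynomial on the unit circle. -/
noncomputable def nu (n k : ℕ) : ℝ := 1 / 8 + k - n / 2

/-- The common factor of all coefficients relative to the divided-difference weights. -/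
noncomputable def hLam (n : ℕ) : ℝ :=
  1 / 2 * (∏ i ∈ Finset.range (n + 1), (1 / 4 + i : ℝ)) * ∏ i ∈ Finset.range n, (i + 1 - 1 / 4 : ℝ)

lemma hLam_pos (n : ℕ) : 0 < hLam n := by
  unfold hLam
  have h1 : 0 < ∏ i ∈ Finset.range (n + 1), (1 / 4 + i : ℝ) :=
    Finset.prod_pos fun i _ => by positivity
  have h2 : 0 < ∏ i ∈ Finset.range n, (i + 1 - 1 / 4 : ℝ) :=
    Finset.prod_pos fun i _ => by have : (0 : ℝ) ≤ i := by positivity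
                                  linarith
  positivity

lemma hLam_le (n : ℕ) : hLam n ≤ (n.factorial : ℝ) ^ 2 / 8 := by
  induction n with
  | zero => unfold hLam; norm_num
  | succ n ih =>
    have e : hLam (n + 1) = hLam n * ((1 / 4 + (n + 1 : ℕ)) * (n + 1 - 1 / 4)) := by
      unfold hLam
      rw [Finset.prod_range_succ _ (n + 1),
        Finset.prod_range_succ (fun i : ℕ => ((i : ℝ) + 1 - 1 / 4)) n]
      ring
    rw [e, Nat.factorial_succ]
    push_cast
    have h1 : (1 / 4 + ((n : ℝ) + 1)) * (n + 1 - 1 / 4) ≤ (n + 1) ^ 2 := by nlinarith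
    have h2 := (hLam_pos n).le
    calc hLam n * ((1 / 4 + ((n : ℝ) + 1)) * (n + 1 - 1 / 4)) ≤ hLam n * (n + 1) ^ 2 := by gcongr
      _ ≤ ((n.factorial : ℝ) ^ 2 / 8) * (n + 1) ^ 2 := by gcongr
      _ = _ := by ring

lemma prod_erase_sub (k l : ℕ) :
    ∏ j ∈ (Finset.range (k + l + 1)).erase k, ((k : ℝ) - j)
      = (-1) ^ l * (k.factorial * l.factorial) := by
  have h1 : ∏ j ∈ (Finset.range (k + l + 1)).erase k, ((k : ℝ) - j)
      = ∏ j ∈ Finset.range (k + l + 1), (if j = k then 1 else (k : ℝ) - j) := by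
    rw [← Finset.prod_erase (Finset.range (k + l + 1)) (a := k) (by simp)]
    refine Finset.prod_congr rfl fun j hj => ?_
    rw [if_neg (Finset.ne_of_mem_erase hj)]
  have h2 : ∏ j ∈ Finset.range k, (if j = k then 1 else (k : ℝ) - j) = k.factorial := by
    rw [← Finset.prod_range_reflect, ← Finset.prod_range_add_one_eq_factorial]
    push_cast
    refine Finset.prod_congr rfl fun j hj => ?_
    have hj' := Finset.mem_range.mp hj
    rw [if_neg (by omega), Nat.cast_sub (by omega), Nat.cast_sub (by omega)]
    push_cast; ring
  have h3 : ∏ i ∈ Finset.range (l + 1), (if k + i = k then 1 else (k : ℝ) - (k + i : ℕ))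
      = (-1) ^ l * l.factorial := by
    rw [Finset.prod_range_succ', ← Finset.prod_range_add_one_eq_factorial]
    push_cast
    rw [← Finset.card_range l, ← Finset.prod_const, Finset.card_range,
      ← Finset.prod_mul_distrib]
    simp only [add_zero, if_true, mul_one]
    simp
  rw [h1, add_assoc, Finset.prod_range_add, h2, h3]; ring

/-- Each coefficient is, up to the factor `hLam` and the frequency, the weight of a divided
difference at the squared frequencies. -/
lemma hc_mul_nodes (k l : ℕ) :
    hc (k + l) k * (nu (k + l) k * ∏ j ∈ (Finset.range (k + l + 1)).erase k,
      (nu (k + l) k ^ 2 - nu (k + l) j ^ 2)) = hLam (k + l) := by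
  have e1 : ∏ j ∈ (Finset.range (k + l + 1)).erase k, (nu (k + l) k ^ 2 - nu (k + l) j ^ 2)
      = (∏ j ∈ (Finset.range (k + l + 1)).erase k, ((k : ℝ) - j))
        * ∏ j ∈ (Finset.range (k + l + 1)).erase k, ((1 / 4 : ℝ) + j - l) := by
    rw [← Finset.prod_mul_distrib]
    refine Finset.prod_congr rfl fun j _ => ?_
    unfold nu; push_cast; ring
  have e2 : 2 * nu (k + l) k * ∏ j ∈ (Finset.range (k + l + 1)).erase k, ((1 / 4 : ℝ) + j - l)
      = ∏ j ∈ Finset.range (k + l + 1), ((1 / 4 : ℝ) + j - l) := by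
    rw [← Finset.mul_prod_erase (Finset.range (k + l + 1)) (fun j : ℕ => (1 / 4 : ℝ) + j - l)
      (a := k) (by simp)]
    congr 1
    unfold nu; push_cast; ring
  have e3 : ∏ j ∈ Finset.range (k + l + 1), ((1 / 4 : ℝ) + j - l)
      = ((-1) ^ l * ∏ i ∈ Finset.range l, ((i : ℝ) + 1 - 1 / 4))
        * ∏ i ∈ Finset.range (k + 1), ((1 / 4 : ℝ) + i) := by
    rw [show k + l + 1 = l + (k + 1) by ring, Finset.prod_range_add]
    congr 1
    · rw [← Finset.prod_range_reflect, ← Finset.card_range l, ← Finset.prod_const,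
        Finset.card_range, ← Finset.prod_mul_distrib]
      refine Finset.prod_congr rfl fun j hj => ?_
      have hj' := Finset.mem_range.mp hj
      rw [Nat.cast_sub (by omega), Nat.cast_sub (by omega)]
      push_cast; ring
    · refine Finset.prod_congr rfl fun j hj => ?_
      push_cast; ring
  have e4 : (l.factorial : ℝ) * Ring.choose (((k + l : ℕ) : ℝ) + 1 / 4) l
      = ∏ i ∈ Finset.range l, ((1 / 4 : ℝ) + (k + 1 + i : ℕ)) := by
    rw [factorial_mul_choose, ← Finset.prod_range_reflect]
    refine Finset.prod_congr rfl fun j hj => ?_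
    have hj' := Finset.mem_range.mp hj
    rw [Nat.cast_sub (by omega), Nat.cast_sub (by omega)]
    push_cast; ring
  have e5 : (k.factorial : ℝ) * Ring.choose (((k + l : ℕ) : ℝ) - 1 / 4) k
      = ∏ i ∈ Finset.range k, (((l + i : ℕ) : ℝ) + 1 - 1 / 4) := by
    rw [factorial_mul_choose, ← Finset.prod_range_reflect]
    refine Finset.prod_congr rfl fun j hj => ?_
    have hj' := Finset.mem_range.mp hj
    rw [Nat.cast_sub (by omega), Nat.cast_sub (by omega)]
    push_cast; ring
  have e6 : ∏ i ∈ Finset.range (k + l + 1), ((1 / 4 : ℝ) + i)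
      = (∏ i ∈ Finset.range (k + 1), ((1 / 4 : ℝ) + i))
        * ∏ i ∈ Finset.range l, ((1 / 4 : ℝ) + (k + 1 + i : ℕ)) := by
    rw [show k + l + 1 = k + 1 + l by ring, Finset.prod_range_add]
  have e7 : ∏ i ∈ Finset.range (k + l), ((i : ℝ) + 1 - 1 / 4)
      = (∏ i ∈ Finset.range l, ((i : ℝ) + 1 - 1 / 4))
        * ∏ i ∈ Finset.range k, (((l + i : ℕ) : ℝ) + 1 - 1 / 4) := by
    rw [show k + l = l + k by ring, Finset.prod_range_add]
  have hs : ((-1 : ℝ) ^ l) * (-1) ^ l = 1 := by rw [← mul_pow]; norm_num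
  unfold hLam
  rw [e6, e7, ← e4, ← e5, e1, prod_erase_sub]
  unfold hc
  rw [Nat.add_sub_cancel_left]
  rw [e3] at e2
  linear_combination (1 / 2 * Ring.choose (((k + l : ℕ) : ℝ) + 1 / 4) l
    * Ring.choose (((k + l : ℕ) : ℝ) - 1 / 4) k * (-1) ^ l * k.factorial * l.factorial) * e2
    + (1 / 2 * Ring.choose (((k + l : ℕ) : ℝ) + 1 / 4) l
    * Ring.choose (((k + l : ℕ) : ℝ) - 1 / 4) k * k.factorial * l.factorial
    * (∏ i ∈ Finset.range l, ((i : ℝ) + 1 - 1 / 4))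
        * ∏ i ∈ Finset.range (k + 1), ((1 / 4 : ℝ) + i)) * hs

lemma hc_mul_nu {n k : ℕ} (hk : k ≤ n) :
    hc n k * nu n k = hLam n * ddw (fun j => nu n j ^ 2) n k := by
  obtain ⟨l, rfl⟩ := Nat.exists_eq_add_of_le hk
  have h := hc_mul_nodes k l
  have hL := (hLam_pos (k + l)).ne'
  unfold ddw
  rw [← h]
  have h0 : ∏ j ∈ (Finset.range (k + l + 1)).erase k,
      (nu (k + l) k ^ 2 - nu (k + l) j ^ 2) ≠ 0 := by
    intro h0; rw [h0] at h; simp only [mul_zero] at h; exact hL h.symm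
  field_simp

lemma hc_nonneg {n k : ℕ} (hk : k ≤ n) : 0 ≤ hc n k := by
  have key : ∀ (r : ℝ) (j : ℕ), (∀ i < j, 0 ≤ r - i) → 0 ≤ Ring.choose r j := by
    intro r j h
    have h1 := factorial_mul_choose r j
    have h2 : 0 ≤ ∏ i ∈ Finset.range j, (r - i) :=
      Finset.prod_nonneg fun i hi => h i (Finset.mem_range.mp hi)
    rw [← h1] at h2
    exact nonneg_of_mul_nonneg_right h2 (by positivity)
  refine mul_nonneg (key _ _ fun i hi => ?_) (key _ _ fun i hi => ?_)
  · have : ((i : ℝ)) + 1 ≤ n := by exact_mod_cast (by omega : i + 1 ≤ n)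
    linarith
  · have : ((i : ℝ)) + 1 ≤ n := by exact_mod_cast (by omega : i + 1 ≤ n)
    linarith

lemma sum_hc (n : ℕ) : ∑ k ∈ Finset.range (n + 1), hc n k = ((2 * n).choose n : ℕ) := by
  have h := sum_hc_mul_choose (Nat.zero_le n)
  simpa [hq_zero] using h

lemma sum_hc_le (n : ℕ) : ∑ k ∈ Finset.range (n + 1), hc n k ≤ 4 ^ n := by
  rw [sum_hc]
  have h : (2 * n).choose n ≤ 4 ^ n := by
    have := Nat.choose_le_two_pow (2 * n) n
    rwa [pow_mul] at this
  exact_mod_cast h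

lemma nu_ne_zero (n k : ℕ) : nu n k ≠ 0 := by
  unfold nu
  intro h
  have h1 : (1 : ℝ) + 8 * k = 4 * n := by linarith
  have h2 : 1 + 8 * k = 4 * n := by exact_mod_cast h1
  omega

lemma nu_sq_inj {n i j : ℕ} (h : nu n i ^ 2 = nu n j ^ 2) : i = j := by
  rcases sq_eq_sq_iff_eq_or_eq_neg.mp h with h | h
  · unfold nu at h
    have : (i : ℝ) = j := by linarith
    exact_mod_cast this
  · unfold nu at h
    have h1 : (1 : ℝ) + 4 * i + 4 * j = 4 * n := by linarith
    have h2 : 1 + 4 * i + 4 * j = 4 * n := by exact_mod_cast h1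
    omega

lemma nu_sq_le {n k : ℕ} (hk : k ≤ n) : |nu n k ^ 2| ≤ (((n : ℝ) + 1) / 2) ^ 2 := by
  rw [abs_of_nonneg (sq_nonneg _)]
  have hk' : (k : ℝ) ≤ n := by exact_mod_cast hk
  have hk0 : (0 : ℝ) ≤ k := by positivity
  apply sq_le_sq'
  · unfold nu; linarith
  · unfold nu; linarith

/-! ### Size estimates for the hypergeometric polynomials -/

lemma abs_dd_pow_le_choose {w : ℕ → ℝ} {W : ℝ} (n : ℕ) : ∀ j : ℕ,
    (∀ i ≤ j, ∀ m ≤ j, w i = w m → i = m) → (∀ i ≤ j, |w i| ≤ W) →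
    |dd w j (fun i => w i ^ n)| * W ^ j ≤ (n.choose j : ℕ) * W ^ n := by
  induction n with
  | zero =>
    intro j hw hW
    cases j with
    | zero => simp [dd_zero]
    | succ j =>
      simp only [pow_zero]
      rw [dd_one hw]; simp
  | succ n ih =>
    intro j hw hW
    have hW0 : 0 ≤ W := (abs_nonneg _).trans (hW 0 (Nat.zero_le _))
    cases j with
    | zero =>
      rw [dd_zero, abs_pow, pow_zero, mul_one, Nat.choose_zero_right, Nat.cast_one, one_mul]
      exact pow_le_pow_left₀ (abs_nonneg _) (hW 0 le_rfl) _
    | succ j =>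
      have h1 := ih (j + 1) hw hW
      have h2 := ih j (fun i hi m hm => hw i (by omega) m (by omega))
        (fun i hi => hW i (by omega))
      have h3 : dd w (j + 1) (fun i => w i ^ (n + 1))
          = w (j + 1) * dd w (j + 1) (fun i => w i ^ n) + dd w j (fun i => w i ^ n) := by
        rw [← dd_succ_mul (fun i hi h => by have := hw i (by omega) (j + 1) le_rfl h; omega)]
        congr 1; funext i; rw [pow_succ']
      rw [h3, Nat.choose_succ_succ]
      push_cast
      calc |w (j + 1) * dd w (j + 1) (fun i => w i ^ n) + dd w j (fun i => w i ^ n)| * W ^ (j + 1)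
          ≤ (|w (j + 1)| * |dd w (j + 1) (fun i => w i ^ n)| + |dd w j (fun i => w i ^ n)|)
            * W ^ (j + 1) := by
            gcongr
            rw [← abs_mul]; exact abs_add_le _ _
        _ ≤ (W * |dd w (j + 1) (fun i => w i ^ n)| + |dd w j (fun i => w i ^ n)|)
            * W ^ (j + 1) := by
            gcongr
            exact hW _ le_rfl
        _ = W * (|dd w (j + 1) (fun i => w i ^ n)| * W ^ (j + 1))
            + (|dd w j (fun i => w i ^ n)| * W ^ j) * W := by ring
        _ ≤ W * ((n.choose (j + 1) : ℕ) * W ^ n) + ((n.choose j : ℕ) * W ^ n) * W := by gcongr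
        _ = _ := by ring

lemma choose_mul_factorial_le (n k : ℕ) :
    (n + k).choose n * (2 * n + 1).factorial * k.factorial * (2 * (2 * n + 3)) ^ k
      ≤ (2 * (n + k) + 1).factorial := by
  induction k with
  | zero => simp
  | succ k ih =>
    have h := Nat.add_one_mul_choose_eq (n + k) k
    have e1 : (n + k + 1).choose (k + 1) = (n + (k + 1)).choose n :=
      (Nat.choose_symm_of_eq_add (by ring)).trans rfl
    have e2 : (n + k).choose k = (n + k).choose n := (Nat.choose_symm_of_eq_add (by ring))
    rw [e1, e2] at h
    rw [show 2 * (n + (k + 1)) + 1 = 2 * (n + k) + 1 + 1 + 1 by ring, Nat.factorial_succ (_ + 1),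
      Nat.factorial_succ (2 * (n + k) + 1), Nat.factorial_succ k, pow_succ]
    calc (n + (k + 1)).choose n * (2 * n + 1).factorial * ((k + 1) * k.factorial)
          * ((2 * (2 * n + 3)) ^ k * (2 * (2 * n + 3)))
        = ((n + (k + 1)).choose n * (k + 1)) * ((2 * n + 1).factorial * k.factorial
          * (2 * (2 * n + 3)) ^ k * (2 * (2 * n + 3))) := by ring
      _ = (2 * n + 3) * ((2 * (n + k) + 2) * ((n + k).choose n * (2 * n + 1).factorial
          * k.factorial * (2 * (2 * n + 3)) ^ k)) := by rw [← h]; ring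
      _ ≤ (2 * (n + k) + 1 + 1 + 1) * ((2 * (n + k) + 2) * (2 * (n + k) + 1).factorial) := by
          exact Nat.mul_le_mul (by omega) (Nat.mul_le_mul_left _ ih)
      _ = _ := by ring

/-- The divided differences at squares of the entire function `sin (φ √x) / √x`. -/
lemma abs_dd_sin_le {v : ℕ → ℝ} {W φ : ℝ} {n : ℕ} (hφ : 0 ≤ φ) (hW0 : 0 < W)
    (hv : ∀ i, v i ≠ 0) (hw : ∀ i ≤ n, ∀ m ≤ n, v i ^ 2 = v m ^ 2 → i = m)
    (hW : ∀ i ≤ n, |v i ^ 2| ≤ W) :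
    |dd (fun i => v i ^ 2) n (fun i => Real.sin (φ * v i) / v i)|
      ≤ φ ^ (2 * n + 1) / (2 * n + 1).factorial * Real.exp (φ ^ 2 * W / (2 * (2 * n + 3))) := by
  set w : ℕ → ℝ := fun i => v i ^ 2 with hwdef
  have hf : ∀ i, HasSum (fun m : ℕ => (-1) ^ m * φ ^ (2 * m + 1) / (2 * m + 1).factorial * w i ^ m)
      (Real.sin (φ * v i) / v i) := by
    intro i
    have h := (Real.hasSum_sin (φ * v i)).div_const (v i)
    have e : (fun m : ℕ => (-1) ^ m * φ ^ (2 * m + 1) / (2 * m + 1).factorial * w i ^ m)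
        = fun m : ℕ => (-1) ^ m * (φ * v i) ^ (2 * m + 1) / (2 * m + 1).factorial / v i := by
      funext m
      have := hv i
      simp only [hwdef]
      rw [mul_pow, ← pow_mul, pow_succ (v i)]
      field_simp
    rw [e]
    exact h
  set a : ℕ → ℝ := fun m => (-1) ^ m * φ ^ (2 * m + 1) / (2 * m + 1).factorial with ha
  have h1 : HasSum (fun m => a m * dd w n (fun i => w i ^ m))
      (dd w n (fun i => Real.sin (φ * v i) / v i)) := by
    have : HasSum (fun m => ∑ i ∈ Finset.range (n + 1), ddw w n i * (a m * w i ^ m))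
        (dd w n (fun i => Real.sin (φ * v i) / v i)) :=
      hasSum_sum fun i _ => (hf i).mul_left _
    convert this using 1
    funext m
    unfold dd
    rw [Finset.mul_sum]
    exact Finset.sum_congr rfl fun i _ => by ring
  have hT : ∀ m, |dd w n (fun i => w i ^ m)| * W ^ n ≤ (m.choose n : ℕ) * W ^ m :=
    fun m => abs_dd_pow_le_choose m n hw hW
  have h0 : ∑ m ∈ Finset.range n, a m * dd w n (fun i => w i ^ m) = 0 := by
    refine Finset.sum_eq_zero fun m hm => ?_
    have h := hT m
    rw [Nat.choose_eq_zero_of_lt (Finset.mem_range.mp hm)] at h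
    have hWn : 0 < W ^ n := by positivity
    have h3 : |dd w n (fun i => w i ^ m)| ≤ 0 := by
      simp only [Nat.cast_zero, zero_mul] at h
      exact nonpos_of_mul_nonpos_left h hWn
    rw [abs_nonpos_iff.mp h3, mul_zero]
  have h2 := (hasSum_nat_add_iff' n).mpr h1
  rw [h0, sub_zero] at h2
  have hexp := (NormedSpace.expSeries_div_hasSum_exp
    (φ ^ 2 * W / (2 * (2 * (n : ℝ) + 3)))).mul_left (φ ^ (2 * n + 1) / (2 * n + 1).factorial : ℝ)
  rw [← Real.exp_eq_exp_ℝ] at hexp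
  rw [← h2.tsum_eq, ← Real.norm_eq_abs]
  refine tsum_of_norm_bounded hexp fun k => ?_
  rw [Real.norm_eq_abs, abs_mul]
  have hb := hT (k + n)
  have ha' : |a (k + n)| = φ ^ (2 * (k + n) + 1) / (2 * (k + n) + 1).factorial := by
    simp only [ha]
    rw [abs_div, abs_mul, abs_pow, abs_neg, abs_one, one_pow, one_mul, abs_of_nonneg (by positivity),
      abs_of_nonneg (by positivity)]
  have hb' : |dd w n (fun i => w i ^ (k + n))| ≤ ((k + n).choose n : ℕ) * W ^ k := by
    have hWn : 0 < W ^ n := by positivity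
    rw [pow_add, ← mul_assoc] at hb
    exact le_of_mul_le_mul_right hb hWn
  rw [ha']
  have hc : (((n + k).choose n * (2 * n + 1).factorial * k.factorial * (2 * (2 * n + 3)) ^ k : ℕ) : ℝ)
      ≤ ((2 * (n + k) + 1).factorial : ℕ) := by exact_mod_cast choose_mul_factorial_le n k
  push_cast at hc
  rw [show k + n = n + k by ring] at hb' ⊢
  refine (mul_le_mul_of_nonneg_left hb' (by positivity)).trans ?_
  have hpos : (0 : ℝ) < ((2 * (n + k) + 1).factorial : ℕ) := by positivity
  have e : (φ ^ (2 * n + 1) / (2 * n + 1).factorial : ℝ)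
      * ((φ ^ 2 * W / (2 * (2 * (n : ℝ) + 3))) ^ k / k.factorial)
      = φ ^ (2 * (n + k) + 1) * W ^ k
        / ((2 * n + 1).factorial * k.factorial * (2 * (2 * n + 3)) ^ k) := by
    rw [div_pow, mul_pow, ← pow_mul, show 2 * (n + k) + 1 = 2 * n + 1 + 2 * k by ring, pow_add φ (2 * n + 1) (2 * k)]
    field_simp
  rw [e, div_mul_eq_mul_div, div_le_div_iff₀ hpos (by positivity)]
  calc φ ^ (2 * (n + k) + 1) * (((n + k).choose n : ℕ) * W ^ k)
        * ((2 * n + 1).factorial * k.factorial * (2 * (2 * n + 3)) ^ k)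
      = φ ^ (2 * (n + k) + 1) * W ^ k * (((n + k).choose n : ℕ) * (2 * n + 1).factorial
        * k.factorial * (2 * (2 * n + 3)) ^ k) := by ring
    _ ≤ _ := by gcongr

lemma sum_hc_sin (n : ℕ) (φ : ℝ) :
    ∑ k ∈ Finset.range (n + 1), hc n k * Real.sin (φ * nu n k)
      = hLam n * dd (fun j => nu n j ^ 2) n (fun j => Real.sin (φ * nu n j) / nu n j) := by
  unfold dd
  rw [Finset.mul_sum]
  refine Finset.sum_congr rfl fun k hk => ?_
  have h := hc_mul_nu (n := n) (k := k) (by simpa [Nat.lt_succ_iff] using hk)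
  have h0 := nu_ne_zero n k
  rw [← mul_assoc, ← h]
  field_simp

lemma four_pow_mul_factorial_le (n : ℕ) :
    4 ^ n * n.factorial ^ 2 ≤ (2 * n + 1).factorial := by
  induction n with
  | zero => simp
  | succ n ih =>
    rw [show 2 * (n + 1) + 1 = 2 * n + 1 + 1 + 1 by ring, Nat.factorial_succ (_ + 1),
      Nat.factorial_succ (2 * n + 1), Nat.factorial_succ n, pow_succ]
    calc 4 ^ n * 4 * ((n + 1) * n.factorial) ^ 2
        = (2 * n + 2) * ((2 * n + 2) * (4 ^ n * n.factorial ^ 2)) := by ring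
      _ ≤ (2 * n + 1 + 1 + 1) * ((2 * n + 1 + 1) * (2 * n + 1).factorial) := by
        exact Nat.mul_le_mul (by omega) (Nat.mul_le_mul (by omega) ih)

lemma abs_sum_hc_sin_le (n : ℕ) {φ : ℝ} (hφ : 0 ≤ φ) :
    |∑ k ∈ Finset.range (n + 1), hc n k * Real.sin (φ * nu n k)|
      ≤ φ / 8 * (φ ^ 2 / 4) ^ n * Real.exp (φ ^ 2 * ((n + 1) / 16)) := by
  have h := abs_dd_sin_le (v := nu n) (n := n) hφ (W := (((n : ℝ) + 1) / 2) ^ 2) (by positivity)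
    (nu_ne_zero n) (fun i _ m _ h => nu_sq_inj h) (fun i hi => nu_sq_le hi)
  rw [sum_hc_sin, abs_mul, abs_of_pos (hLam_pos n)]
  have h1 : φ ^ 2 * (((n : ℝ) + 1) / 2) ^ 2 / (2 * (2 * n + 3)) ≤ φ ^ 2 * ((n + 1) / 16) := by
    rw [mul_div_assoc]
    apply mul_le_mul_of_nonneg_left _ (sq_nonneg _)
    rw [div_le_iff₀ (by positivity)]
    have : (0 : ℝ) ≤ n := by positivity
    nlinarith
  have hF : (4 : ℝ) ^ n * (n.factorial : ℝ) ^ 2 ≤ ((2 * n + 1).factorial : ℝ) := by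
    exact_mod_cast four_pow_mul_factorial_le n
  have hfp : (0 : ℝ) < ((2 * n + 1).factorial : ℝ) := by positivity
  calc hLam n * |dd (fun j => nu n j ^ 2) n (fun j => Real.sin (φ * nu n j) / nu n j)|
      ≤ (n.factorial : ℝ) ^ 2 / 8 * (φ ^ (2 * n + 1) / (2 * n + 1).factorial
        * Real.exp (φ ^ 2 * ((n + 1) / 16))) := by
        refine mul_le_mul (hLam_le n) (h.trans ?_) (abs_nonneg _) (by positivity)
        gcongr
    _ = ((n.factorial : ℝ) ^ 2 / (2 * n + 1).factorial) * (φ ^ (2 * n + 1) / 8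
        * Real.exp (φ ^ 2 * ((n + 1) / 16))) := by ring
    _ ≤ (1 / 4 ^ n) * (φ ^ (2 * n + 1) / 8 * Real.exp (φ ^ 2 * ((n + 1) / 16))) := by
        refine mul_le_mul_of_nonneg_right ?_ (by positivity)
        rw [div_le_div_iff₀ hfp (by positivity)]
        linarith
    _ = _ := by
        rw [div_pow, ← pow_mul, pow_succ]
        field_simp

/-- Rotated by `exp (i ψ)`, the value is a combination of `exp (8 i ψ ν)`, where `4 ψ` is the
argument of `t + 4 i`. -/
lemma hV_rot {t R ψ : ℝ} (h1 : t = R * Real.cos (4 * ψ)) (h2 : 4 = R * Real.sin (4 * ψ)) (n : ℕ) :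
    Complex.exp (ψ * Complex.I) * hV t n = (R : ℂ) ^ n * ∑ k ∈ Finset.range (n + 1),
      (hc n k : ℂ) * Complex.exp ((8 * ψ * nu n k : ℝ) * Complex.I) := by
  have hw : (⟨t, -4⟩ : ℂ) = R * Complex.exp (-(4 * ψ : ℝ) * Complex.I) := by
    rw [← Complex.ofReal_neg]
    apply Complex.ext
    · rw [Complex.re_ofReal_mul, Complex.exp_ofReal_mul_I_re, Real.cos_neg, ← h1]
    · rw [Complex.im_ofReal_mul, Complex.exp_ofReal_mul_I_im, Real.sin_neg, mul_neg, ← h2]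
  have hu : (⟨t, -4⟩ : ℂ) + ⟨0, 8⟩ = R * Complex.exp ((4 * ψ : ℝ) * Complex.I) := by
    apply Complex.ext
    · rw [Complex.re_ofReal_mul, Complex.exp_ofReal_mul_I_re, ← h1]
      simp
    · rw [Complex.im_ofReal_mul, Complex.exp_ofReal_mul_I_im, ← h2]
      norm_num
  unfold hV hP
  rw [← sum_hc_eq_sum_hq, hu, hw, Finset.mul_sum, Finset.mul_sum]
  refine Finset.sum_congr rfl fun k hk => ?_
  have hk' : k ≤ n := by simpa [Nat.lt_succ_iff] using hk
  obtain ⟨l, rfl⟩ := Nat.exists_eq_add_of_le hk'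
  rw [Nat.add_sub_cancel_left, mul_pow, mul_pow, ← Complex.exp_nat_mul, ← Complex.exp_nat_mul,
    pow_add]
  have e : Complex.exp ((8 * ψ * nu (k + l) k : ℝ) * Complex.I)
      = Complex.exp (ψ * Complex.I) * Complex.exp (k * ((4 * ψ : ℝ) * Complex.I))
        * Complex.exp (l * (-(4 * ψ : ℝ) * Complex.I)) := by
    rw [← Complex.exp_add, ← Complex.exp_add]
    congr 1
    unfold nu
    push_cast; ring
  rw [e]; ring

lemma norm_hV_le {t R ψ : ℝ} (hR : 0 ≤ R) (h1 : t = R * Real.cos (4 * ψ))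
    (h2 : 4 = R * Real.sin (4 * ψ)) (n : ℕ) : ‖hV t n‖ ≤ (4 * R) ^ n := by
  have h := congrArg norm (hV_rot h1 h2 n)
  rw [norm_mul, Complex.norm_exp_ofReal_mul_I, one_mul, norm_mul, norm_pow, Complex.norm_real,
    Real.norm_of_nonneg hR] at h
  rw [h, mul_comm 4 R, mul_pow]
  gcongr
  refine (norm_sum_le _ _).trans (le_trans (le_of_eq ?_) (sum_hc_le n))
  refine Finset.sum_congr rfl fun k hk => ?_
  rw [norm_mul, Complex.norm_exp_ofReal_mul_I, mul_one, Complex.norm_real,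
    Real.norm_of_nonneg (hc_nonneg (by simpa [Nat.lt_succ_iff] using hk))]

lemma abs_im_rot_le {t R ψ : ℝ} (hR : 0 ≤ R) (hψ : 0 ≤ ψ) (h1 : t = R * Real.cos (4 * ψ))
    (h2 : 4 = R * Real.sin (4 * ψ)) (n : ℕ) :
    |(Complex.exp (ψ * Complex.I) * hV t n).im|
      ≤ ψ * (16 * ψ ^ 2 * R) ^ n * Real.exp (4 * ψ ^ 2 * (n + 1)) := by
  have e : (Complex.exp (ψ * Complex.I) * hV t n).im
      = R ^ n * ∑ k ∈ Finset.range (n + 1), hc n k * Real.sin (8 * ψ * nu n k) := by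
    rw [hV_rot h1 h2, ← Complex.ofReal_pow, Complex.im_ofReal_mul, Complex.im_sum]
    congr 1
    refine Finset.sum_congr rfl fun k _ => ?_
    rw [Complex.im_ofReal_mul, Complex.exp_ofReal_mul_I_im]
  rw [e, abs_mul, abs_of_nonneg (by positivity)]
  have h := abs_sum_hc_sin_le n (φ := 8 * ψ) (by positivity)
  calc R ^ n * |∑ k ∈ Finset.range (n + 1), hc n k * Real.sin (8 * ψ * nu n k)|
      ≤ R ^ n * (8 * ψ / 8 * ((8 * ψ) ^ 2 / 4) ^ n * Real.exp ((8 * ψ) ^ 2 * ((n + 1) / 16))) := by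
        gcongr
    _ = _ := by
        rw [show (8 * ψ) ^ 2 * (((n : ℝ) + 1) / 16) = 4 * ψ ^ 2 * (n + 1) by ring,
          show 16 * ψ ^ 2 * R = R * ((8 * ψ) ^ 2 / 4) by ring, mul_pow R]
        ring

/-! ### Large parameters -/

/-- Polar coordinates of `t + 4 i`, with argument `4 ψ`. -/
lemma polar {t : ℝ} (ht : 200 ≤ t) : ∃ R ψ : ℝ, t ≤ R ∧ R ≤ 1.0002 * t ∧ 0 ≤ ψ ∧ ψ ≤ 1 / t ∧
    t = R * Real.cos (4 * ψ) ∧ 4 = R * Real.sin (4 * ψ) := by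
  have ht0 : 0 < t := by linarith
  have h1 : 1 ≤ √(1 + (4 / t) ^ 2) := Real.one_le_sqrt.mpr (by nlinarith [sq_nonneg (4 / t)])
  have h0 : √(1 + (4 / t) ^ 2) ≠ 0 := by positivity
  refine ⟨t * √(1 + (4 / t) ^ 2), Real.arctan (4 / t) / 4, ?_, ?_, ?_, ?_, ?_, ?_⟩
  · nlinarith
  · have h4 : 4 / t ≤ 4 / 200 := by gcongr
    have h4' : 0 ≤ 4 / t := by positivity
    have : √(1 + (4 / t) ^ 2) ≤ 1.0002 := by
      apply Real.sqrt_le_iff.mpr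
      constructor
      · norm_num
      · nlinarith
    nlinarith
  · have : 0 ≤ Real.arctan (4 / t) := Real.arctan_nonneg.mpr (by positivity)
    linarith
  · have : Real.arctan (4 / t) ≤ 4 / t := by
      have h5 : 0 < 4 / t := by positivity
      have h6 := Real.lt_tan (Real.arctan_pos.mpr h5) (Real.arctan_lt_pi_div_two _)
      rw [Real.tan_arctan] at h6
      exact h6.le
    have e : 4 / t = 4 * (1 / t) := by ring
    linarith
  · rw [show 4 * (Real.arctan (4 / t) / 4) = Real.arctan (4 / t) by ring, Real.cos_arctan]
    field_simp
  · rw [show 4 * (Real.arctan (4 / t) / 4) = Real.arctan (4 / t) by ring, Real.sin_arctan]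
    field_simp

/-- After rotation by the angle `ψ` the form is a multiple of `p q (p - q) (p + q)`. -/
lemma form_rot {t R ψ X Y : ℝ} (h1 : t = R * Real.cos (4 * ψ)) (h2 : 4 = R * Real.sin (4 * ψ)) :
    X ^ 4 - t * X ^ 3 * Y - 6 * X ^ 2 * Y ^ 2 + t * X * Y ^ 3 + Y ^ 4
      = -(R * (X * Real.cos ψ + Y * Real.sin ψ) * (Y * Real.cos ψ - X * Real.sin ψ)
        * ((X * Real.cos ψ + Y * Real.sin ψ) - (Y * Real.cos ψ - X * Real.sin ψ))
        * ((X * Real.cos ψ + Y * Real.sin ψ) + (Y * Real.cos ψ - X * Real.sin ψ))) := by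
  have hcs := Real.sin_sq_add_cos_sq ψ
  have e1 : Real.cos (4 * ψ) = Real.cos ψ ^ 4 - 6 * Real.cos ψ ^ 2 * Real.sin ψ ^ 2
      + Real.sin ψ ^ 4 := by
    rw [show 4 * ψ = 2 * (2 * ψ) by ring, Real.cos_two_mul, Real.cos_two_mul]
    have : Real.sin ψ ^ 2 = 1 - Real.cos ψ ^ 2 := by linarith
    rw [show Real.sin ψ ^ 4 = (Real.sin ψ ^ 2) ^ 2 by ring, this]; ring
  have e2 : Real.sin (4 * ψ) = 4 * Real.cos ψ ^ 3 * Real.sin ψ - 4 * Real.cos ψ * Real.sin ψ ^ 3 := by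
    rw [show 4 * ψ = 2 * (2 * ψ) by ring, Real.sin_two_mul, Real.sin_two_mul, Real.cos_two_mul]
    linear_combination (4 * Real.sin ψ * Real.cos ψ) * hcs
  rw [e1] at h1
  rw [e2] at h2
  linear_combination (-(X ^ 3 * Y) + X * Y ^ 3) * h1 + (X ^ 4 - 6 * X ^ 2 * Y ^ 2 + Y ^ 4) / 4 * h2

/-- The upper bound for the linear form: a small error term times `p`, plus a term which is
proportional to the small quantity `q`. -/
lemma abs_hD_le {t R ψ : ℝ} (hR : 0 ≤ R) (hψ : 0 ≤ ψ) (h1 : t = R * Real.cos (4 * ψ))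
    (h2 : 4 = R * Real.sin (4 * ψ)) (X Y : ℤ) (n : ℕ) :
    |hD t X Y n| ≤ |X * Real.cos ψ + Y * Real.sin ψ|
        * (ψ * (16 * ψ ^ 2 * R) ^ n * Real.exp (4 * ψ ^ 2 * (n + 1)))
      + |Y * Real.cos ψ - X * Real.sin ψ| * (4 * R) ^ n := by
  set z : ℂ := Complex.exp (ψ * Complex.I) * hV t n with hz
  have hcs := Real.sin_sq_add_cos_sq ψ
  have hre : z.re = Real.cos ψ * (hV t n).re - Real.sin ψ * (hV t n).im := by
    rw [hz, Complex.mul_re, Complex.exp_ofReal_mul_I_re, Complex.exp_ofReal_mul_I_im]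
  have him : z.im = Real.cos ψ * (hV t n).im + Real.sin ψ * (hV t n).re := by
    rw [hz, Complex.mul_im, Complex.exp_ofReal_mul_I_re, Complex.exp_ofReal_mul_I_im]
  have e : hD t X Y n = (X * Real.cos ψ + Y * Real.sin ψ) * z.im
      + (Y * Real.cos ψ - X * Real.sin ψ) * z.re := by
    rw [hre, him]
    unfold hD
    linear_combination (-((hV t n).re * Y + (hV t n).im * X)) * hcs
  have hz1 : |z.re| ≤ (4 * R) ^ n := by
    refine (Complex.abs_re_le_norm z).trans ?_
    rw [hz, norm_mul, Complex.norm_exp_ofReal_mul_I, one_mul]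
    exact norm_hV_le hR h1 h2 n
  have hz2 := abs_im_rot_le hR hψ h1 h2 n
  rw [e]
  refine (abs_add_le _ _).trans ?_
  rw [abs_mul, abs_mul]
  gcongr

/-- The choice of the index: the smallest `n` for which the error term is small. Its
minimality shows that `U ^ (n + 1)` is still small compared with `p ^ 3`, as
`U Q ^ 3 ≤ 1` for the ratio `Q = 16.1 / t`. -/
lemma exists_index {t p U : ℝ} (ht : 200 ≤ t) (hp : 0.97 * t ≤ p) (hU0 : 0 ≤ U) (hU : U ≤ 4.001 * t) :
    ∃ n : ℕ, p * (16.1 / t) ^ n ≤ 0.4 * t ∧ 8.02 * U ^ (n + 1) ≤ t * p ^ 3 := by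
  have ht0 : 0 < t := by linarith
  have hp0 : 0 < p := by linarith
  set Q : ℝ := 16.1 / t with hQ
  have hQ0 : 0 < Q := by positivity
  have hQ1 : Q < 1 := by rw [hQ, div_lt_one ht0]; linarith
  have hex : ∃ n : ℕ, p * Q ^ n ≤ 0.4 * t := by
    obtain ⟨n, hn⟩ := exists_pow_lt_of_lt_one (show 0 < 0.4 * t / p by positivity) hQ1
    refine ⟨n, ?_⟩
    rw [lt_div_iff₀ hp0] at hn
    linarith
  classical
  refine ⟨Nat.find hex, Nat.find_spec hex, ?_⟩
  rcases hn : Nat.find hex with _ | n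
  · rw [zero_add, pow_one]
    have h1 : 190 ≤ p := by linarith
    have h2 : (190 : ℝ) ^ 3 ≤ p ^ 3 := by gcongr
    nlinarith
  · have hmin := Nat.find_min hex (m := n) (by omega)
    push Not at hmin
    have hUQ : U * Q ^ 3 ≤ 1 := by
      have h3 : t * Q = 16.1 := by rw [hQ]; field_simp
      have h4 : Q ≤ 16.1 / 200 := by rw [hQ]; gcongr
      calc U * Q ^ 3 ≤ (4.001 * t) * Q ^ 3 := by gcongr
        _ = 4.001 * 16.1 * Q ^ 2 := by rw [← h3]; ring
        _ ≤ 4.001 * 16.1 * (16.1 / 200) ^ 2 := by gcongr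
        _ ≤ 1 := by norm_num
    have h5 : (0.4 * t) ^ 3 ≤ (p * Q ^ n) ^ 3 := by gcongr
    have h6 : U ^ (n + 1 + 1) * (Q ^ n) ^ 3 ≤ (4.001 * t) ^ 2 := by
      calc U ^ (n + 1 + 1) * (Q ^ n) ^ 3 = U ^ 2 * (U * Q ^ 3) ^ n := by ring_nf
        _ ≤ U ^ 2 * 1 := by
            gcongr
            exact pow_le_one₀ (by positivity) hUQ
        _ ≤ (4.001 * t) ^ 2 := by rw [mul_one]; gcongr
    have hq : 0 < (Q ^ n) ^ 3 := by positivity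
    apply le_of_mul_le_mul_right _ hq
    have h7 : 8.02 * (4.001 * t) ^ 2 ≤ t * (0.4 * t) ^ 3 := by
      have h8 : (200 : ℝ) ^ 2 ≤ t ^ 2 := by gcongr
      have h9 : 0 ≤ t ^ 2 := by positivity
      nlinarith
    calc 8.02 * U ^ (n + 1 + 1) * (Q ^ n) ^ 3 = 8.02 * (U ^ (n + 1 + 1) * (Q ^ n) ^ 3) := by ring
      _ ≤ 8.02 * (4.001 * t) ^ 2 := by gcongr
      _ ≤ t * (0.4 * t) ^ 3 := h7
      _ ≤ t * (p * Q ^ n) ^ 3 := by gcongr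
      _ = _ := by ring

set_option maxHeartbeats 1000000 in
/-- For large `t` there is no point with `X > Y > 0` at which the form is at most `4` in absolute
value. -/
lemma large_aux {t X Y : ℤ} (ht : 200 ≤ t) (hY : 1 ≤ Y) (hX : Y < X)
    (hF : |(X : ℝ) ^ 4 - t * X ^ 3 * Y - 6 * X ^ 2 * Y ^ 2 + t * X * Y ^ 3 + Y ^ 4| ≤ 4) :
    False := by
  have ht' : (200 : ℝ) ≤ t := by exact_mod_cast ht
  have hY' : (1 : ℝ) ≤ Y := by exact_mod_cast hY
  have hX' : (Y : ℝ) + 1 ≤ X := by exact_mod_cast hX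
  obtain ⟨R, ψ, hR1, hR2, hψ0, hψ1, h1, h2⟩ := polar ht'
  have ht0 : (0 : ℝ) < t := by linarith
  have hR0 : 0 ≤ R := by linarith
  have hψ2 : ψ ≤ 1 / 200 := hψ1.trans (by gcongr)
  have hs0 : 0 ≤ Real.sin ψ := Real.sin_nonneg_of_nonneg_of_le_pi hψ0 (by linarith [Real.pi_gt_three])
  have hs1 : Real.sin ψ ≤ ψ := Real.sin_le hψ0
  have hc0 : 0.9999 ≤ Real.cos ψ := by
    have := Real.one_sub_sq_div_two_le_cos (x := ψ)
    nlinarith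
  have hc1 : Real.cos ψ ≤ 1 := Real.cos_le_one ψ
  rw [form_rot h1 h2, abs_neg] at hF
  have hD := abs_hD_le hR0 hψ0 h1 h2 X Y
  set p : ℝ := X * Real.cos ψ + Y * Real.sin ψ with hp
  set q : ℝ := Y * Real.cos ψ - X * Real.sin ψ with hq
  have hp1 : 1.99 ≤ p := by nlinarith
  have hpm : 0.99 ≤ p - q := by nlinarith
  have hpp : 2.9 ≤ p + q := by nlinarith
  have hF' : |q| * (R * p * (p - q) * (p + q)) ≤ 4 := by
    have e : R * p * q * (p - q) * (p + q) = q * (R * p * (p - q) * (p + q)) := by ring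
    rw [e, abs_mul, abs_of_nonneg (a := R * p * (p - q) * (p + q)) (by positivity)] at hF
    exact hF
  have hq1 : |q| ≤ 0.01 := by
    by_contra hcon
    push Not at hcon
    have h3 : (200 : ℝ) * 1.99 * 0.99 * 2.9 ≤ R * p * (p - q) * (p + q) := by
      gcongr
      linarith
    nlinarith [abs_nonneg q]
  have hqq := abs_le.mp hq1
  have hq2 : |q| * (t * p ^ 3) ≤ 4.01 := by
    have h3 : 0.9999 * (t * p ^ 3) ≤ R * p * (p - q) * (p + q) := by
      have h4 : 0.9999 * p ^ 2 ≤ (p - q) * (p + q) := by nlinarith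
      calc 0.9999 * (t * p ^ 3) = t * p * (0.9999 * p ^ 2) := by ring
        _ ≤ R * p * ((p - q) * (p + q)) := by gcongr
        _ = _ := by ring
    nlinarith [abs_nonneg q, mul_le_mul_of_nonneg_left h3 (abs_nonneg q)]
  have hXt : 0.98 * (t : ℝ) ≤ X := by
    have hX0 : (0 : ℝ) < X := by linarith
    have h3 : 0.98 ≤ X * Real.sin ψ := by nlinarith
    have h4 : X * Real.sin ψ ≤ X * (1 / t) := by
      have := hs1.trans hψ1
      gcongr
    have h5 : 0.98 ≤ (X : ℝ) / t := by
      have e : (X : ℝ) * (1 / t) = X / t := by ring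
      linarith
    rwa [le_div_iff₀ ht0] at h5
  have hpt : 0.97 * t ≤ p := by nlinarith
  have hp0 : 0 < p := by linarith
  obtain ⟨n, hn1, hn2⟩ := exists_index ht' hpt (U := 4 * R) (by positivity) (by linarith)
  have hexp : Real.exp (4 * ψ ^ 2) ≤ 1.001 := by
    have h3 : 4 * ψ ^ 2 ≤ 0.0001 := by nlinarith
    have h4 := Real.exp_bound_div_one_sub_of_interval (x := 4 * ψ ^ 2) (by positivity) (by linarith)
    refine h4.trans ?_
    rw [div_le_iff₀ (by linarith)]
    linarith
  have hQ : 16 * ψ ^ 2 * R * Real.exp (4 * ψ ^ 2) ≤ 16.1 / (t : ℝ) := by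
    calc 16 * ψ ^ 2 * R * Real.exp (4 * ψ ^ 2) ≤ 16 * (1 / (t : ℝ)) ^ 2 * (1.0002 * (t : ℝ)) * 1.001 := by gcongr
      _ = 16 * 1.0002 * 1.001 / (t : ℝ) := by field_simp
      _ ≤ 16.1 / (t : ℝ) := by gcongr; norm_num
  have hU1 : 1 ≤ 4 * R := by linarith
  have key : ∀ k, n ≤ k → k ≤ n + 1 → |SQ.hD t X Y k| < 1 := by
    intro k hk1 hk2
    refine lt_of_le_of_lt (hD k) ?_
    rw [abs_of_pos hp0]
    have hA : ψ * (16 * ψ ^ 2 * R) ^ k * Real.exp (4 * ψ ^ 2 * (k + 1))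
        ≤ 1 / (t : ℝ) * 1.001 * (16.1 / (t : ℝ)) ^ n := by
      have e : ψ * (16 * ψ ^ 2 * R) ^ k * Real.exp (4 * ψ ^ 2 * (k + 1))
          = ψ * Real.exp (4 * ψ ^ 2) * (16 * ψ ^ 2 * R * Real.exp (4 * ψ ^ 2)) ^ k := by
        rw [mul_add, Real.exp_add, mul_one, mul_pow _ (Real.exp _), ← Real.exp_nat_mul,
          mul_comm (k : ℝ)]
        ring
      rw [e]
      have h3 : (16 * ψ ^ 2 * R * Real.exp (4 * ψ ^ 2)) ^ k ≤ (16.1 / (t : ℝ)) ^ n := by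
        calc (16 * ψ ^ 2 * R * Real.exp (4 * ψ ^ 2)) ^ k ≤ (16.1 / (t : ℝ)) ^ k := by gcongr
          _ ≤ (16.1 / (t : ℝ)) ^ n := by
            apply pow_le_pow_of_le_one (by positivity) _ hk1
            rw [div_le_one ht0]; linarith
      gcongr
    have hA' : p * (ψ * (16 * ψ ^ 2 * R) ^ k * Real.exp (4 * ψ ^ 2 * (k + 1))) < 1 / 2 := by
      calc p * (ψ * (16 * ψ ^ 2 * R) ^ k * Real.exp (4 * ψ ^ 2 * (k + 1)))
          ≤ p * (1 / (t : ℝ) * 1.001 * (16.1 / (t : ℝ)) ^ n) := by gcongr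
        _ = 1.001 / (t : ℝ) * (p * (16.1 / (t : ℝ)) ^ n) := by ring
        _ ≤ 1.001 / (t : ℝ) * (0.4 * (t : ℝ)) := by gcongr
        _ = 1.001 * 0.4 := by field_simp
        _ < 1 / 2 := by norm_num
    have hB : |q| * (4 * R) ^ k ≤ 1 / 2 := by
      have h3 : (4 * R) ^ k ≤ (4 * R) ^ (n + 1) := pow_le_pow_right₀ hU1 hk2
      have h5 := mul_le_mul_of_nonneg_left h3 (abs_nonneg q)
      have h6 := mul_le_mul_of_nonneg_left hn2 (abs_nonneg q)
      linarith
    linarith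
  rcases hD_ne_zero (t : ℝ) (Y := Y) (show X ≠ 0 by omega) n with h | h
  · have := one_le_abs_hD t h
    linarith [key n le_rfl (by omega)]
  · have := one_le_abs_hD t h
    linarith [key (n + 1) (by omega) le_rfl]

/-- The identity `F (x + y, y - x) = -4 F (x, y)` reduces the case `x < y` to `large_aux`. -/
lemma large_case {t x y : ℤ} (ht : 200 ≤ t) (hx : 0 < x) (hy : 0 < y)
    (hF : |(x : ℝ) ^ 4 - t * x ^ 3 * y - 6 * x ^ 2 * y ^ 2 + t * x * y ^ 3 + y ^ 4| = 1) :
    False := by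
  rcases lt_trichotomy x y with h | h | h
  · refine large_aux (X := x + y) (Y := y - x) ht (by omega) (by omega) ?_
    push_cast
    have e : ((x : ℝ) + y) ^ 4 - t * (x + y) ^ 3 * (y - x) - 6 * (x + y) ^ 2 * (y - x) ^ 2
        + t * (x + y) * (y - x) ^ 3 + (y - x) ^ 4
        = (-4) * ((x : ℝ) ^ 4 - t * x ^ 3 * y - 6 * x ^ 2 * y ^ 2 + t * x * y ^ 3 + y ^ 4) := by
      ring
    rw [e, abs_mul, hF]; norm_num
  · subst h
    have e : (x : ℝ) ^ 4 - t * x ^ 3 * x - 6 * x ^ 2 * x ^ 2 + t * x * x ^ 3 + x ^ 4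
        = -4 * x ^ 4 := by ring
    have hx1 : (1 : ℝ) ≤ x := by exact_mod_cast hx
    rw [e, abs_mul, abs_of_nonneg (a := (x : ℝ) ^ 4) (by positivity)] at hF
    have := one_le_pow₀ (n := 4) hx1
    norm_num at hF
    linarith
  · exact large_aux ht (by omega) h (by rw [hF]; norm_num)

/-! ### All integer solutions -/

lemma pos_case {t x y : ℤ} (ht1 : 1 ≤ t) (ht3 : t ≠ 3) (hx : 0 < x) (hy : 0 < y)
    (hF : F4 t x y = 1 ∨ F4 t x y = -1) :
    (t = 1 ∧ x = 1 ∧ y = 2) ∨ (t = 4 ∧ x = 2 ∧ y = 3) := by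
  have habs : |F4 t x y| = 1 := by
    rcases hF with h | h <;> rw [h] <;> norm_num
  have hR : |(x : ℝ) ^ 4 - t * x ^ 3 * y - 6 * x ^ 2 * y ^ 2 + t * x * y ^ 3 + y ^ 4| = 1 := by
    have h : ((|F4 t x y| : ℤ) : ℝ) = 1 := by rw [habs]; norm_num
    rw [Int.cast_abs] at h
    rw [← h]
    simp only [F4]
    push_cast
    rfl
  rcases le_or_gt 200 t with ht | ht
  · exact (large_case ht hx hy hR).elim
  · lift t to ℕ using by omega
    lift x to ℕ using hx.le
    lift y to ℕ using hy.le
    have := small_case (t := t) (x := x) (y := y) (by omega) (by omega) (by omega) (by omega)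
      (by omega) (by exact_mod_cast hR)
    omega

lemma eq_one_or_neg_one_of_pow_four {a : ℤ} (h : a ^ 4 = 1 ∨ a ^ 4 = -1) : a = 1 ∨ a = -1 := by
  rcases h with h | h
  · exact (pow_eq_one_iff_cases.mp h).elim (by norm_num) (fun h => h.imp id (·.1))
  · nlinarith [sq_nonneg (a ^ 2)]

end SQ

/-- All integer solutions of the simplest quartic Thue equation `F_t^{(4)}(x,y) = ±1`
for `t ≥ 1`, `t ≠ 3` (Chen–Voutier). -/
theorem simplest_quartic_thue_integers (t : ℤ) (ht1 : 1 ≤ t) (ht3 : t ≠ 3) (x y : ℤ) :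
    (F4 t x y = 1 ∨ F4 t x y = -1) ↔
      ((x, y) = (1, 0) ∨ (x, y) = (-1, 0) ∨ (x, y) = (0, 1) ∨ (x, y) = (0, -1) ∨
        (t = 1 ∧ ((x, y) = (1, 2) ∨ (x, y) = (-1, -2) ∨ (x, y) = (2, -1) ∨ (x, y) = (-2, 1))) ∨
        (t = 4 ∧ ((x, y) = (2, 3) ∨ (x, y) = (-2, -3) ∨ (x, y) = (3, -2) ∨ (x, y) = (-3, 2)))) := by

  constructor
  · intro hF
    simp only [Prod.mk.injEq]
    rcases lt_trichotomy x 0 with hx | hx | hx <;> rcases lt_trichotomy y 0 with hy | hy | hy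
    · have := SQ.pos_case (x := -x) (y := -y) ht1 ht3 (by omega) (by omega)
        (by convert hF using 2 <;> simp only [F4] <;> ring)
      rcases this with ⟨rfl, h1, h2⟩ | ⟨rfl, h1, h2⟩ <;> simp <;> omega
    · subst hy
      have := SQ.eq_one_or_neg_one_of_pow_four (a := x)
        (by convert hF using 2 <;> simp only [F4] <;> ring)
      rcases this with rfl | rfl <;> simp
    · have := SQ.pos_case (x := y) (y := -x) ht1 ht3 (by omega) (by omega)
        (by convert hF using 2 <;> simp only [F4] <;> ring)
      rcases this with ⟨rfl, h1, h2⟩ | ⟨rfl, h1, h2⟩ <;> simp <;> omega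
    · subst hx
      have := SQ.eq_one_or_neg_one_of_pow_four (a := y)
        (by convert hF using 2 <;> simp only [F4] <;> ring)
      rcases this with rfl | rfl <;> simp
    · subst hx hy
      simp [F4] at hF
    · subst hx
      have := SQ.eq_one_or_neg_one_of_pow_four (a := y)
        (by convert hF using 2 <;> simp only [F4] <;> ring)
      rcases this with rfl | rfl <;> simp
    · have := SQ.pos_case (x := -y) (y := x) ht1 ht3 (by omega) (by omega)
        (by convert hF using 2 <;> simp only [F4] <;> ring)
      rcases this with ⟨rfl, h1, h2⟩ | ⟨rfl, h1, h2⟩ <;> simp <;> omega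
    · subst hy
      have := SQ.eq_one_or_neg_one_of_pow_four (a := x)
        (by convert hF using 2 <;> simp only [F4] <;> ring)
      rcases this with rfl | rfl <;> simp
    · have := SQ.pos_case ht1 ht3 hx hy hF
      rcases this with ⟨rfl, h1, h2⟩ | ⟨rfl, h1, h2⟩ <;> simp <;> omega
  · simp only [Prod.mk.injEq]
    rintro (⟨rfl, rfl⟩ | ⟨rfl, rfl⟩ | ⟨rfl, rfl⟩ | ⟨rfl, rfl⟩ |
      ⟨rfl, ⟨rfl, rfl⟩ | ⟨rfl, rfl⟩ | ⟨rfl, rfl⟩ | ⟨rfl, rfl⟩⟩ |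
      ⟨rfl, ⟨rfl, rfl⟩ | ⟨rfl, rfl⟩ | ⟨rfl, rfl⟩ | ⟨rfl, rfl⟩⟩) <;> norm_num [F4]
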